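/- arXiv:1712.09199 — 2 statements merged into one kernel-verified Lean document; each statement's English description precedes it below -/
import Mathlib

section
/- Let n ≥ 2 and let A ⊂ ℝⁿ be a Borel set with dim A > 1. Then dim {e ∈ S^{n-1} : L^1(P_e(A)) = 0} ≤ n - dim A. -/
/-!
Suppose that the set of exceptional directions of `A` has dimension larger than `n - dim A`. Choose
`t < dim A` and `s` below the dimension of this set with `t + s > n`. Frostman's lemma (`frostman`)
gives a probability measure `μ` on a compact set `K ⊆ A` with `μ(B(x, r)) ≲ rᵗ`. The exceptional
directions of `K` form a Borel set containing those of `A`, hence carry a probability measure `ν`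
with `ν(B(e, r)) ≲ rˢ`.

The heart of the matter is the averaged energy estimate `ae_lintegral_charFun_ne_top`:
`∫∫ |μ̂(r e)|² dr dν(e) < ∞`. By the uncertainty principle `|μ̂(r e)|²` may be replaced with its
average against a Gaussian centred at `r e`; to make this precise `μ` is multiplied by a Gaussian
density (`damp`). By Fubini's theorem the double integral is then at most a multiple of
`∫ |μ̂(η)|² ν{e : η is at bounded distance from ℝe} dη ≲ ∫ |μ̂(η)|² (1 + |η|)⁻ˢ dη`. Since `|μ̂|²` has
integral at most of order `2^(j (n - t))` over the ball of radius `2ʲ`, this is finite. All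
frequency cut-offs are Gaussians, so that every Fourier transform occurring is explicit.

Hence there is an exceptional direction `e` of `K` such that the projection of the damped measure to
`ℝe` has a square integrable characteristic function. Such a measure does not charge null sets
(`measure_eq_zero_of_lintegral_charFun`), so `μ K = 0`, a contradiction.

Frostman's lemma for Borel sets is proved with the dyadic content. It is continuous along increasing
sequences of arbitrary sets (`content_iUnion_le_iSup`), so that Choquet's capacitability
argument (`exists_isCompact_content`) yields a compact subset of positive content. A measure on the
compact set is obtained by distributing its content over the dyadic cubes, each cube sharing its
mass among its children in proportion to their contents (`exists_measure`).
-/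

open MeasureTheory Metric
open scoped ENNReal RealInnerProductSpace

/-! ### Contents of nested partitions -/

namespace Falconer

open Set Filter Topology

/-- A sequence of nested partitions of `X`, encoded by labels: `lab k x` is the name of the cell of
generation `k` containing `x`, and `par` sends the name of a cell to the name of its parent. -/
structure NestedPartition (X I : Type*) where
  par : I → I
  lab : ℕ → X → I
  par_lab : ∀ k x, par (lab (k + 1) x) = lab k x

namespace NestedPartition

variable {X I : Type*} (P : NestedPartition X I) (w : ℕ → ℝ≥0∞)

/-- The cell of generation `k` with label `a`. -/
def cell (k : ℕ) (a : I) : Set X := {x | P.lab k x = a}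

/-- `T` is a family of cells, given by their generations and labels, that covers `S`. -/
def Covers (T : Set (ℕ × I)) (S : Set X) : Prop := ∀ x ∈ S, ∃ k, (k, P.lab k x) ∈ T

/-- The content of `S`: the infimum of the total weight of a family of cells covering `S`, a cell of
generation `k` having weight `w k`. -/
noncomputable def content (S : Set X) : ℝ≥0∞ :=
  ⨅ (T : Set (ℕ × I)) (_ : P.Covers T S), ∑' p : T, w p.1.1

variable {P w}

lemma content_le {T : Set (ℕ × I)} {S : Set X} (h : P.Covers T S) :
    P.content w S ≤ ∑' p : T, w p.1.1 := iInf₂_le T h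

lemma exists_cover {S : Set X} {c : ℝ≥0∞} (h : P.content w S < c) :
    ∃ T, P.Covers T S ∧ ∑' p : T, w p.1.1 < c := by
  simpa [content, iInf_lt_iff] using h

lemma content_mono {S S' : Set X} (h : S ⊆ S') : P.content w S ≤ P.content w S' :=
  le_iInf₂ fun _ hT => content_le fun x hx => hT x (h hx)

lemma content_empty : P.content w ∅ = 0 := by
  have : P.content w (∅ : Set X) ≤ ∑' p : (∅ : Set (ℕ × I)), w p.1.1 :=
    content_le fun x hx => hx.elim
  simpa using this

lemma content_cell_le (k : ℕ) (a : I) : P.content w (P.cell k a) ≤ w k := by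
  have : P.content w (P.cell k a) ≤ ∑' p : ({(k, a)} : Set (ℕ × I)), w p.1.1 :=
    content_le fun x hx => ⟨k, by simpa [cell] using hx⟩
  simpa using this

lemma content_iUnion_le {ι : Type*} [Countable ι] (S : ι → Set X) :
    P.content w (⋃ i, S i) ≤ ∑' i, P.content w (S i) := by
  refine ENNReal.le_of_forall_pos_le_add fun ε hε hfin => ?_
  obtain ⟨δ, hδ, hδε⟩ := ENNReal.exists_pos_sum_of_countable (ENNReal.coe_pos.2 hε).ne' ι
  have h1 : ∀ i, P.content w (S i) < P.content w (S i) + δ i := fun i =>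
    ENNReal.lt_add_right (ENNReal.ne_top_of_tsum_ne_top hfin.ne i) (by simpa using (hδ i).ne')
  choose T hT hTc using fun i => exists_cover (h1 i)
  have hc : P.Covers (⋃ i, T i) (⋃ i, S i) := by
    intro x hx
    obtain ⟨i, hi⟩ := mem_iUnion.1 hx
    obtain ⟨k, hk⟩ := hT i x hi
    exact ⟨k, mem_iUnion.2 ⟨i, hk⟩⟩
  calc P.content w (⋃ i, S i) ≤ ∑' p : (⋃ i, T i : Set (ℕ × I)), w p.1.1 := content_le hc
    _ ≤ ∑' i, ∑' p : T i, w p.1.1 :=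
        ENNReal.tsum_iUnion_le_tsum (fun p : ℕ × I => w p.1) T
    _ ≤ ∑' i, (P.content w (S i) + δ i) := ENNReal.tsum_le_tsum fun i => (hTc i).le
    _ ≤ ∑' i, P.content w (S i) + ε := by
        rw [ENNReal.tsum_add]; gcongr

lemma content_union_le (S S' : Set X) :
    P.content w (S ∪ S') ≤ P.content w S + P.content w S' := by
  rw [union_eq_iUnion]
  refine (content_iUnion_le _).trans ?_
  rw [tsum_bool]; simp [add_comm]

lemma content_cover_le [Countable I] {T : Set (ℕ × I)} {S : Set X} (h : P.Covers T S) :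
    P.content w S ≤ ∑' p : T, P.content w (S ∩ P.cell p.1.1 p.1.2) := by
  refine le_trans (content_mono ?_) (content_iUnion_le _)
  intro x hx
  obtain ⟨k, hk⟩ := h x hx
  exact mem_iUnion.2 ⟨⟨_, hk⟩, hx, rfl⟩

lemma par_iterate_lab (j m : ℕ) (x : X) : P.par^[m] (P.lab (j + m) x) = P.lab j x := by
  induction m with
  | zero => rfl
  | succ m ih => rw [Function.iterate_succ_apply, ← add_assoc, P.par_lab, ih]

lemma cell_subset_par (k : ℕ) (b : I) : P.cell (k + 1) b ⊆ P.cell k (P.par b) := by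
  rintro x rfl; exact (P.par_lab k x).symm

/-- A cover by cells of generation at least `j` splits into covers of the pieces of `S` in the
individual cells of generation `j`. -/
lemma tsum_content_le_of_cover {T : Set (ℕ × I)} {S : Set X} (h : P.Covers T S) (j : ℕ)
    (hj : ∀ p ∈ T, j ≤ p.1) :
    ∑' b, P.content w (S ∩ P.cell j b) ≤ ∑' p : T, w p.1.1 := by
  classical
  let U : I → Set (ℕ × I) := fun b => {p | p ∈ T ∧ b = P.par^[p.1 - j] p.2}
  have hU : ∀ b, P.Covers (U b) (S ∩ P.cell j b) := by
    rintro b x ⟨hx, rfl⟩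
    obtain ⟨k, hk⟩ := h x hx
    refine ⟨k, hk, ?_⟩
    have := par_iterate_lab (P := P) j (k - j) x
    rw [Nat.add_sub_of_le (hj _ hk)] at this
    exact this.symm
  calc ∑' b, P.content w (S ∩ P.cell j b) ≤ ∑' b, ∑' p : U b, w p.1.1 :=
        ENNReal.tsum_le_tsum fun b => content_le (hU b)
    _ = ∑' b, ∑' p, (U b).indicator (fun p => w p.1) p := by
        congr with b; rw [tsum_subtype (U b) (fun p => w p.1)]
    _ = ∑' p, ∑' b, (U b).indicator (fun p => w p.1) p := ENNReal.tsum_comm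
    _ = ∑' p, T.indicator (fun p => w p.1) p := by
        congr with p
        by_cases hp : p ∈ T
        · rw [tsum_eq_single (P.par^[p.1 - j] p.2)]
          · simp [U, hp, indicator]
          · intro b hb; simp [U, hb, indicator]
        · simp [U, hp, indicator]
    _ = ∑' p : T, w p.1.1 := (tsum_subtype T (fun p => w p.1)).symm

lemma tsum_content_le_content (S : Set X) :
    ∑' b, P.content w (S ∩ P.cell 0 b) ≤ P.content w S :=
  le_iInf₂ fun _ hT => tsum_content_le_of_cover hT 0 fun _ _ => Nat.zero_le _

/-- On a cell where the content of `S` is smaller than the weight of the cell, near-optimal covers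
use strictly smaller cells, so that the content is superadditive over the children. -/
lemma tsum_content_children_le (hw : Antitone w) {S : Set X} {k : ℕ} {a : I}
    (h : P.content w (S ∩ P.cell k a) < w k) :
    ∑' b, P.content w (S ∩ P.cell k a ∩ P.cell (k + 1) b) ≤ P.content w (S ∩ P.cell k a) := by
  by_contra! hlt
  obtain ⟨T, hT, hTc⟩ := exists_cover (lt_min hlt h)
  refine (tsum_content_le_of_cover hT (k + 1) fun p hp => ?_).not_gt
    (hTc.trans_le (min_le_left _ _))
  by_contra! hk
  have h1 : w p.1 ≤ ∑' p : T, w p.1.1 := ENNReal.le_tsum (⟨p, hp⟩ : T)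
  exact ((hw (Nat.lt_succ_iff.1 hk)).trans h1).not_gt (hTc.trans_le (min_le_right _ _))

/-- `P.Free 𝒮 k a`: no strict ancestor of the cell `(k, a)` belongs to `𝒮`. -/
def Free (P : NestedPartition X I) (𝒮 : Set (ℕ × I)) : ℕ → I → Prop
  | 0, _ => True
  | k + 1, b => Free P 𝒮 k (P.par b) ∧ (k, P.par b) ∉ 𝒮

/-- The maximal cells of the family `𝒮`. -/
def maxCells (P : NestedPartition X I) (𝒮 : Set (ℕ × I)) : Set (ℕ × I) :=
  {p | P.Free 𝒮 p.1 p.2 ∧ p ∈ 𝒮}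

lemma exists_mem_maxCells {𝒮 : Set (ℕ × I)} {x : X} {k : ℕ} (h : (k, P.lab k x) ∈ 𝒮) :
    ∃ j, (j, P.lab j x) ∈ P.maxCells 𝒮 := by
  classical
  let j := Nat.find (⟨k, h⟩ : ∃ k, (k, P.lab k x) ∈ 𝒮)
  have hfree : ∀ i ≤ j, P.Free 𝒮 i (P.lab i x) := by
    intro i
    induction i with
    | zero => intro _; trivial
    | succ i ih =>
      intro hi
      refine ⟨?_, ?_⟩
      · rw [P.par_lab]; exact ih (by omega)
      · rw [P.par_lab]
        exact Nat.find_min (⟨k, h⟩ : ∃ k, (k, P.lab k x) ∈ 𝒮) hi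
  exact ⟨j, hfree j le_rfl, Nat.find_spec (⟨k, h⟩ : ∃ k, (k, P.lab k x) ∈ 𝒮)⟩

/-- If the content of `S` is smaller than the weight on every cell outside `𝒮`, then the content of
`S` is superadditive over the maximal cells of `𝒮`. -/
lemma tsum_maxCells_le (hw : Antitone w) {S : Set X} {𝒮 : Set (ℕ × I)}
    (h : ∀ k a, (k, a) ∉ 𝒮 → P.content w (S ∩ P.cell k a) < w k) :
    ∑' p : P.maxCells 𝒮, P.content w (S ∩ P.cell p.1.1 p.1.2) ≤ P.content w S := by
  classical
  set c : ℕ → I → ℝ≥0∞ := fun k a => P.content w (S ∩ P.cell k a) with hc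
  have key : ∀ N, ∑ k ∈ Finset.range N, ∑' a, (if P.Free 𝒮 k a ∧ (k, a) ∈ 𝒮 then c k a else 0)
      + ∑' a, (if P.Free 𝒮 N a then c N a else 0) ≤ P.content w S := by
    intro N
    induction N with
    | zero =>
      simpa [Free, hc] using tsum_content_le_content (w := w) (P := P) S
    | succ N ih =>
      refine le_trans ?_ ih
      rw [Finset.sum_range_succ, add_assoc]
      gcongr
      have hsplit : ∑' a, (if P.Free 𝒮 N a then c N a else 0)
          = ∑' a, (if P.Free 𝒮 N a ∧ (N, a) ∈ 𝒮 then c N a else 0)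
            + ∑' a, (if P.Free 𝒮 N a ∧ (N, a) ∉ 𝒮 then c N a else 0) := by
        rw [← ENNReal.tsum_add]
        congr with a
        by_cases h1 : P.Free 𝒮 N a <;> by_cases h2 : (N, a) ∈ 𝒮 <;> simp [h1, h2]
      rw [hsplit]
      refine add_le_add le_rfl ?_
      calc ∑' b, (if P.Free 𝒮 (N + 1) b then c (N + 1) b else 0)
          ≤ ∑' b, ∑' a, (if P.Free 𝒮 N a ∧ (N, a) ∉ 𝒮 then
              P.content w (S ∩ P.cell N a ∩ P.cell (N + 1) b) else 0) := by
            refine ENNReal.tsum_le_tsum fun b => ?_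
            refine le_trans ?_ (ENNReal.le_tsum (P.par b))
            by_cases hb : P.Free 𝒮 (N + 1) b
            · rw [if_pos hb, if_pos (by simpa [Free] using hb)]
              refine content_mono ?_
              rintro x ⟨hx, hxb⟩
              exact ⟨⟨hx, cell_subset_par N b hxb⟩, hxb⟩
            · rw [if_neg hb]; exact zero_le
        _ = ∑' a, ∑' b, (if P.Free 𝒮 N a ∧ (N, a) ∉ 𝒮 then
              P.content w (S ∩ P.cell N a ∩ P.cell (N + 1) b) else 0) := ENNReal.tsum_comm
        _ ≤ _ := by
            refine ENNReal.tsum_le_tsum fun a => ?_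
            by_cases ha : P.Free 𝒮 N a ∧ (N, a) ∉ 𝒮
            · simp only [if_pos ha]
              exact tsum_content_children_le hw (h N a ha.2)
            · simp [if_neg ha]
  calc ∑' p : P.maxCells 𝒮, P.content w (S ∩ P.cell p.1.1 p.1.2)
      = ∑' p : ℕ × I, (if P.Free 𝒮 p.1 p.2 ∧ p ∈ 𝒮 then c p.1 p.2 else 0) := by
        rw [tsum_subtype (P.maxCells 𝒮) (fun p => c p.1 p.2)]
        congr with p
        simp only [indicator, maxCells, mem_ofPred_eq]
        congr
    _ = ∑' k, ∑' a, (if P.Free 𝒮 k a ∧ (k, a) ∈ 𝒮 then c k a else 0) :=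
        ENNReal.tsum_prod (f := fun k a => if P.Free 𝒮 k a ∧ (k, a) ∈ 𝒮 then c k a else 0)
    _ ≤ _ := ENNReal.tsum_le_of_sum_range_le fun N => le_self_add.trans (key N)

/-- Applied to the cells of near-optimal covers, the ratio bound shows that the content of `R` is at
most `θ` times itself. -/
lemma content_eq_zero_of_ratio [Countable I] {R : Set X} {θ : ℝ≥0∞} (hθ0 : θ ≠ 0) (hθ : θ < 1)
    (hfin : P.content w R ≠ ∞)
    (h : ∀ k a, P.content w (R ∩ P.cell k a) ≤ θ * w k) : P.content w R = 0 := by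
  have h1 : P.content w R ≤ θ * P.content w R := by
    conv_rhs => rw [content]
    rw [ENNReal.mul_iInf_of_ne hθ0 hθ.ne_top]
    refine le_iInf fun T => ?_
    rw [ENNReal.mul_iInf_of_ne hθ0 hθ.ne_top]
    refine le_iInf fun hT => ?_
    rw [← ENNReal.tsum_mul_left]
    exact (content_cover_le hT).trans (ENNReal.tsum_le_tsum fun p => h _ _)
  by_contra h0
  have := ENNReal.mul_lt_mul_right h0 hfin hθ
  rw [mul_one, mul_comm] at this
  exact h1.not_gt this

/-- The increasing sets lemma: the content is continuous along arbitrary increasing sequences. For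
`θ < 1`, the maximal cells on which the contents of the `S i` have supremum at least `θ` times the
weight cover all of `⋃ i, S i` up to a set of zero content, and by superadditivity any finite
number of them has total weight at most `θ⁻¹ * ⨆ i, P.content w (S i)`. -/
lemma content_iUnion_le_iSup [Countable I] (hw : Antitone w) (hw0 : ∀ k, w k ≠ 0)
    (hwtop : ∀ k, w k ≠ ∞) {S : ℕ → Set X}
    (hS : Monotone S) (hfin : ∀ i, P.content w (S i) ≠ ∞) :
    P.content w (⋃ i, S i) ≤ ⨆ i, P.content w (S i) := by
  refine ENNReal.le_of_forall_lt_one_mul_le fun θ hθ => ?_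
  rcases eq_or_ne θ 0 with rfl | hθ0
  · simp
  -- the cells on which the `S i` have almost full content
  let 𝒮 : Set (ℕ × I) := {p | θ * w p.1 ≤ ⨆ i, P.content w (S i ∩ P.cell p.1 p.2)}
  have hS' : ∀ k a i, (k, a) ∉ 𝒮 → P.content w (S i ∩ P.cell k a) < θ * w k := by
    intro k a i h
    refine lt_of_le_of_lt ?_ (not_le.1 h)
    exact le_iSup (fun i => P.content w (S i ∩ P.cell k a)) i
  have hlt : ∀ k, θ * w k < w k := fun k => by
    have := ENNReal.mul_lt_mul_right (hw0 k) (hwtop k) hθ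
    rwa [mul_one, mul_comm] at this
  let U : Set X := ⋃ p : P.maxCells 𝒮, P.cell p.1.1 p.1.2
  -- outside `U` the content is at most `θ` times the weight on every cell
  have hnull : ∀ i, P.content w (S i \ U) = 0 := by
    intro i
    refine content_eq_zero_of_ratio hθ0 hθ
      (ne_top_of_le_ne_top (hfin i) (content_mono sdiff_subset)) fun k a => ?_
    by_cases h : (k, a) ∈ 𝒮
    · have : (S i \ U) ∩ P.cell k a = ∅ := by
        rw [eq_empty_iff_forall_notMem]
        rintro x ⟨⟨-, hxU⟩, rfl⟩
        obtain ⟨j, hj⟩ := exists_mem_maxCells h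
        exact hxU (mem_iUnion.2 ⟨⟨_, hj⟩, rfl⟩)
      rw [this, content_empty]; exact zero_le
    · exact (content_mono (inter_subset_inter_left _ sdiff_subset)).trans (hS' k a i h).le
  have hsub : (⋃ i, S i) ⊆ U ∪ ⋃ i, S i \ U := by
    intro x hx
    obtain ⟨i, hi⟩ := mem_iUnion.1 hx
    by_cases hxU : x ∈ U
    · exact Or.inl hxU
    · exact Or.inr (mem_iUnion.2 ⟨i, hi, hxU⟩)
  have hU : P.content w (⋃ i, S i) ≤ ∑' p : P.maxCells 𝒮, w p.1.1 := by
    calc P.content w (⋃ i, S i) ≤ P.content w U + P.content w (⋃ i, S i \ U) :=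
          (content_mono hsub).trans (content_union_le _ _)
      _ ≤ P.content w U + ∑' i, P.content w (S i \ U) := by gcongr; exact content_iUnion_le _
      _ = P.content w U := by simp [hnull]
      _ ≤ _ := content_le fun x hx => by
          obtain ⟨p, hp⟩ := mem_iUnion.1 hx
          refine ⟨p.1.1, ?_⟩
          have : P.lab p.1.1 x = p.1.2 := hp
          rw [this]; exact p.2
  calc θ * P.content w (⋃ i, S i) ≤ ∑' p : P.maxCells 𝒮, θ * w p.1.1 := by
        rw [ENNReal.tsum_mul_left]; gcongr
    _ ≤ ∑' p : P.maxCells 𝒮, ⨆ i, P.content w (S i ∩ P.cell p.1.1 p.1.2) :=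
        ENNReal.tsum_le_tsum fun p => p.2.2
    _ ≤ ⨆ i, P.content w (S i) := by
        rw [ENNReal.tsum_eq_iSup_sum]
        refine iSup_le fun F => ?_
        rw [ENNReal.finsetSum_iSup_of_monotone
          (f := fun (p : P.maxCells 𝒮) i => P.content w (S i ∩ P.cell p.1.1 p.1.2)) fun p i j hij =>
          content_mono (inter_subset_inter_left _ (hS hij))]
        refine iSup_mono fun i => ?_
        refine (ENNReal.sum_le_tsum F).trans (tsum_maxCells_le hw fun k a h => ?_)
        exact (hS' k a i h).trans (hlt k)

/-- Choquet's capacitability argument: an analytic set contains a compact set of comparable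
content. The constant `D` enters because cells need not be open, so that a cover of a compact set by
cells has to be enlarged to an open cover. -/
lemma exists_isCompact_content [TopologicalSpace X] [Countable I] (hw : Antitone w)
    (hw0 : ∀ k, w k ≠ 0) (hwtop : ∀ k, w k ≠ ∞) {D : ℝ≥0∞} (hD0 : D ≠ 0) (hD : D ≠ ∞)
    (hopen : ∀ k a, ∃ U, IsOpen U ∧ P.cell k a ⊆ U ∧ P.content w U ≤ D * w k)
    {A : Set X} (hA : AnalyticSet A) (hfin : P.content w A ≠ ∞) {c : ℝ≥0∞}
    (hc : c < P.content w A) : ∃ K ⊆ A, IsCompact K ∧ c ≤ D * P.content w K := by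
  rw [AnalyticSet] at hA
  rcases hA with rfl | ⟨f, hf, rfl⟩
  · simp [content_empty] at hc
  -- by the increasing sets lemma, one coordinate of the parameter space `ℕ → ℕ` can be bounded
  have hstep : ∀ (m : ℕ) (V : Set (ℕ → ℕ)), ∃ j, c < P.content w (f '' V) →
      c < P.content w (f '' (V ∩ {x | x m ≤ j})) := by
    intro m V
    by_cases hV : c < P.content w (f '' V)
    swap
    · exact ⟨0, fun h => (hV h).elim⟩
    have hVsub : V ⊆ ⋃ j, V ∩ {x | x m ≤ j} := fun x hx => mem_iUnion.2 ⟨x m, hx, le_refl (x m)⟩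
    have hmono : Monotone fun j => f '' (V ∩ {x | x m ≤ j}) := by
      intro j j' hj
      refine image_mono ?_
      rintro x ⟨hx, hxj⟩
      exact ⟨hx, le_trans hxj hj⟩
    have := hV.trans_le ((content_mono (w := w) (P := P)
      ((image_mono hVsub).trans (image_iUnion).subset)).trans
      (content_iUnion_le_iSup hw hw0 hwtop hmono fun j =>
        ne_top_of_le_ne_top hfin (content_mono (image_subset_range _ _))))
    obtain ⟨j, hj⟩ := lt_iSup_iff.1 this
    exact ⟨j, fun _ => hj⟩
  choose J hJ using hstep
  let W : ℕ → Set (ℕ → ℕ) := fun m => Nat.rec univ (fun m V => V ∩ {x | x m ≤ J m V}) m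
  have hWc : ∀ m, c < P.content w (f '' W m) := by
    intro m
    induction m with
    | zero => simpa [W] using hc
    | succ m ih => exact hJ m (W m) ih
  set b : ℕ → ℕ := fun m => J m (W m) with hb
  have hWb : ∀ m, W m = {x | ∀ i < m, x i ≤ b i} := by
    intro m
    induction m with
    | zero => simp [W]
    | succ m ih =>
      have : W (m + 1) = W m ∩ {x | x m ≤ b m} := rfl
      rw [this, ih]
      ext x
      simp only [mem_inter_iff, mem_ofPred_eq, Nat.lt_succ_iff_lt_or_eq]
      constructor
      · rintro ⟨h1, h2⟩ i (hi | rfl)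
        exacts [h1 i hi, h2]
      · exact fun h => ⟨fun i hi => h i (Or.inl hi), h m (Or.inr rfl)⟩
  let C : Set (ℕ → ℕ) := univ.pi fun i => Iic (b i)
  have hC : IsCompact C := isCompact_univ_pi fun i => (finite_Iic (b i)).isCompact
  refine ⟨f '' C, image_subset_range _ _, hC.image hf, ?_⟩
  -- an open neighbourhood of the compact set contains one of the sets `f '' W m`
  have hnhds : ∀ U : Set X, IsOpen U → f '' C ⊆ U → ∃ m, f '' W m ⊆ U := by
    intro U hU hCU
    by_contra! hcon
    have : ∀ m, ∃ x ∈ W m, f x ∉ U := by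
      intro m
      obtain ⟨-, ⟨x, hx, rfl⟩, hxU⟩ := not_subset.1 (hcon m)
      exact ⟨x, hx, hxU⟩
    choose x hxW hxU using this
    let y : ℕ → ℕ → ℕ := fun m i => min (x m i) (b i)
    have hy : ∀ m, y m ∈ C := fun m i _ => min_le_right (x m i) (b i)
    obtain ⟨z, hz, φ, hφ, hlim⟩ := hC.tendsto_subseq hy
    have hlim' : Tendsto (fun m => x (φ m)) atTop (𝓝 z) := by
      rw [tendsto_pi_nhds] at hlim ⊢
      intro i
      refine (hlim i).congr' ?_
      filter_upwards [eventually_gt_atTop i] with m hm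
      have h1 := hxW (φ m)
      rw [hWb] at h1
      exact min_eq_left (h1 i (hm.trans_le (hφ.id_le m)))
    have hzU : z ∈ f ⁻¹' U := hCU ⟨z, hz, rfl⟩
    obtain ⟨m, hm⟩ := (hlim'.eventually ((hU.preimage hf).mem_nhds hzU)).exists
    exact hxU _ hm
  conv_rhs => rw [content]
  rw [ENNReal.mul_iInf_of_ne hD0 hD]
  refine le_iInf fun T => ?_
  rw [ENNReal.mul_iInf_of_ne hD0 hD]
  refine le_iInf fun hT => ?_
  choose U hUo hcU hUc using hopen
  obtain ⟨m, hm⟩ := hnhds (⋃ p : T, U p.1.1 p.1.2) (isOpen_iUnion fun p => hUo _ _) fun x hx => by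
    obtain ⟨k, hk⟩ := hT x hx
    exact mem_iUnion.2 ⟨⟨_, hk⟩, hcU _ _ rfl⟩
  calc c ≤ P.content w (f '' W m) := (hWc m).le
    _ ≤ ∑' p : T, P.content w (U p.1.1 p.1.2) := (content_mono hm).trans (content_iUnion_le _)
    _ ≤ ∑' p : T, D * w p.1.1 := ENNReal.tsum_le_tsum fun p => hUc _ _
    _ = D * ∑' p : T, w p.1.1 := ENNReal.tsum_mul_left

section Mass

variable (w) in
/-- The total content of the children of a cell. -/
noncomputable def childSum (P : NestedPartition X I) (K : Set X) (k : ℕ) (a : I) : ℝ≥0∞ :=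
  open Classical in ∑' b, if P.par b = a then P.content w (K ∩ P.cell (k + 1) b) else 0

variable (w) in
/-- A mass distribution on the cells: the content of `K` is put on the cell `(0, a₀)`, and the mass
of each cell is distributed among its children proportionally to their contents. -/
noncomputable def mass (P : NestedPartition X I) (K : Set X) (a₀ : I) : ℕ → I → ℝ≥0∞
  | 0, a => open Classical in if a = a₀ then P.content w K else 0
  | k + 1, b => mass P K a₀ k (P.par b) * P.content w (K ∩ P.cell (k + 1) b)
      / P.childSum w K k (P.par b)

lemma content_le_childSum [Countable I] (K : Set X) (k : ℕ) (a : I) :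
    P.content w (K ∩ P.cell k a) ≤ P.childSum w K k a := by
  classical
  calc P.content w (K ∩ P.cell k a)
      ≤ P.content w (⋃ b, if P.par b = a then K ∩ P.cell (k + 1) b else ∅) := by
        refine content_mono ?_
        rintro x ⟨hx, rfl⟩
        refine mem_iUnion.2 ⟨P.lab (k + 1) x, ?_⟩
        rw [if_pos (P.par_lab k x)]
        exact ⟨hx, rfl⟩
    _ ≤ ∑' b, P.content w (if P.par b = a then K ∩ P.cell (k + 1) b else ∅) :=
        content_iUnion_le _
    _ = P.childSum w K k a := by
        unfold childSum
        congr with b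
        split_ifs
        · rfl
        · exact content_empty

lemma childSum_ne_top (hfib : ∀ a, (P.par ⁻¹' {a}).Finite) (hwtop : ∀ k, w k ≠ ∞)
    (K : Set X) (k : ℕ) (a : I) : P.childSum w K k a ≠ ∞ := by
  classical
  unfold childSum
  rw [tsum_eq_sum (s := (hfib a).toFinset)]
  · refine (ENNReal.sum_lt_top.2 fun b _ => ?_).ne
    split_ifs
    · exact ((content_mono inter_subset_right).trans (content_cell_le _ _)).trans_lt
        (hwtop _).lt_top
    · simp
  · intro b hb
    rw [if_neg]
    simpa using hb

variable [Countable I] {K : Set X} {a₀ : I}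

/-- In particular no mass is put on a cell which does not meet `K`. -/
lemma mass_le (hK : K ⊆ P.cell 0 a₀) (k : ℕ) (a : I) :
    P.mass w K a₀ k a ≤ P.content w (K ∩ P.cell k a) := by
  induction k generalizing a with
  | zero =>
    simp only [mass]
    split_ifs with h
    · subst h; rw [inter_eq_left.2 hK]
    · exact zero_le
  | succ k ih =>
    simp only [mass]
    refine ENNReal.div_le_of_le_mul ?_
    rw [mul_comm]
    gcongr
    exact (ih _).trans (content_le_childSum _ _ _)

open Classical in
lemma tsum_mass_children (hfib : ∀ a, (P.par ⁻¹' {a}).Finite) (hwtop : ∀ k, w k ≠ ∞)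
    (hK : K ⊆ P.cell 0 a₀) (k : ℕ) (a : I) :
    ∑' b, (if P.par b = a then P.mass w K a₀ (k + 1) b else 0) = P.mass w K a₀ k a := by
  have h1 : ∀ b, (if P.par b = a then P.mass w K a₀ (k + 1) b else 0)
      = P.mass w K a₀ k a * (P.childSum w K k a)⁻¹ *
        (if P.par b = a then P.content w (K ∩ P.cell (k + 1) b) else 0) := by
    intro b
    split_ifs with h
    · subst h
      simp only [mass, ENNReal.div_eq_inv_mul]
      ring
    · simp
  simp_rw [h1]
  rw [ENNReal.tsum_mul_left]
  change _ * P.childSum w K k a = _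
  rw [mul_assoc]
  rcases eq_or_ne (P.childSum w K k a) 0 with h0 | h0
  · have : P.mass w K a₀ k a = 0 := by
      have := (mass_le hK k a).trans (content_le_childSum (w := w) K k a)
      simpa [h0] using this
    simp [this]
  · rw [ENNReal.inv_mul_cancel h0 (childSum_ne_top hfib hwtop _ _ _), mul_one]

open Classical in
lemma tsum_mass_descendants (hfib : ∀ a, (P.par ⁻¹' {a}).Finite) (hwtop : ∀ k, w k ≠ ∞)
    (hK : K ⊆ P.cell 0 a₀) (j m : ℕ) (a : I) :
    ∑' b, (if P.par^[m] b = a then P.mass w K a₀ (j + m) b else 0) = P.mass w K a₀ j a := by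
  induction m with
  | zero => simp
  | succ m ih =>
    rw [← ih]
    calc ∑' b, (if P.par^[m + 1] b = a then P.mass w K a₀ (j + (m + 1)) b else 0)
        = ∑' b, ∑' c, (if P.par b = c then
            (if P.par^[m] c = a then P.mass w K a₀ (j + (m + 1)) b else 0) else 0) := by
          congr with b
          rw [tsum_ite_eq']
          simp only [Function.iterate_succ_apply]
          congr
      _ = ∑' c, ∑' b, (if P.par b = c then
            (if P.par^[m] c = a then P.mass w K a₀ (j + (m + 1)) b else 0) else 0) :=
          ENNReal.tsum_comm
      _ = _ := by
          congr with c
          by_cases hc : P.par^[m] c = a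
          · simp only [hc, if_true]
            exact tsum_mass_children hfib hwtop hK (j + m) c
          · simp [hc]

lemma tsum_mass (hfib : ∀ a, (P.par ⁻¹' {a}).Finite) (hwtop : ∀ k, w k ≠ ∞)
    (hK : K ⊆ P.cell 0 a₀) (k : ℕ) : ∑' a, P.mass w K a₀ k a = P.content w K := by
  classical
  calc ∑' b, P.mass w K a₀ k b
      = ∑' b, ∑' a, (if P.par^[k] b = a then P.mass w K a₀ (0 + k) b else 0) := by
        congr with b
        rw [tsum_ite_eq']; simp
    _ = ∑' a, ∑' b, (if P.par^[k] b = a then P.mass w K a₀ (0 + k) b else 0) :=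
        ENNReal.tsum_comm
    _ = ∑' a, P.mass w K a₀ 0 a := by
        congr with a; exact tsum_mass_descendants hfib hwtop hK 0 k a
    _ = P.content w K := by simp [mass]

/-- The mass distribution principle: a compact set of positive content carries a probability measure
whose value on an open set is controlled by the weights of any finite family of cells of the same
generation covering the open set. The measure is a limit, as `k → ∞`, of discrete measures
putting the mass of each cell of generation `k` at a point of this cell. -/
lemma exists_measure [MetricSpace X] [MeasurableSpace X] [BorelSpace X]
    (hfib : ∀ a, (P.par ⁻¹' {a}).Finite) (hwtop : ∀ k, w k ≠ ∞)
    (hK : K ⊆ P.cell 0 a₀) (hKc : IsCompact K)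
    (h0 : P.content w K ≠ 0) :
    ∃ μ : Measure X, IsProbabilityMeasure μ ∧ μ Kᶜ = 0 ∧
      ∀ V, IsOpen V → ∀ (j : ℕ) (N : Finset I), (∀ x ∈ V, P.lab j x ∈ N) →
        μ V ≤ (P.content w K)⁻¹ * (N.card * w j) := by
  classical
  have htop : P.content w K ≠ ∞ :=
    ne_top_of_le_ne_top (hwtop 0) ((content_mono hK).trans (content_cell_le _ _))
  have hne : K.Nonempty := by
    by_contra h
    rw [not_nonempty_iff_eq_empty] at h
    exact h0 (h ▸ content_empty)
  have hpt : ∀ (k : ℕ) (a : I), ∃ x : K, P.mass w K a₀ k a ≠ 0 → P.lab k x = a := by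
    intro k a
    by_cases h : (K ∩ P.cell k a).Nonempty
    · obtain ⟨x, hx, hxa⟩ := h
      exact ⟨⟨x, hx⟩, fun _ => hxa⟩
    · refine ⟨⟨_, hne.some_mem⟩, fun h' => (h' ?_).elim⟩
      have := mass_le (w := w) hK k a
      rw [not_nonempty_iff_eq_empty.1 h, content_empty] at this
      simpa using this
  choose x hx using hpt
  -- `ν k` concentrates the mass of each cell of generation `k` at a point of `K` in this cell
  have : CompactSpace K := isCompact_iff_compactSpace.1 hKc
  let ν : ℕ → Measure K := fun k =>
    (P.content w K)⁻¹ • Measure.sum fun a => P.mass w K a₀ k a • Measure.dirac (x k a)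
  have hν : ∀ k, IsProbabilityMeasure (ν k) := fun k => ⟨by
    simp only [ν, Measure.smul_apply, smul_eq_mul, Measure.sum_apply _ MeasurableSet.univ]
    simp only [measure_univ, mul_one, tsum_mass hfib hwtop hK]
    exact ENNReal.inv_mul_cancel h0 htop⟩
  have hνV : ∀ (j : ℕ) (N : Finset I) (V : Set K), MeasurableSet V → (∀ y ∈ V, P.lab j y ∈ N) →
      ∀ k ≥ j, ν k V ≤ (P.content w K)⁻¹ * (N.card * w j) := by
    intro j N V hVm hV k hk
    obtain ⟨m, rfl⟩ := Nat.exists_eq_add_of_le hk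
    simp only [ν, Measure.smul_apply, smul_eq_mul, Measure.sum_apply _ hVm]
    gcongr
    calc ∑' a, P.mass w K a₀ (j + m) a * Measure.dirac (x (j + m) a) V
        ≤ ∑' a, ∑ b ∈ N, (if P.par^[m] a = b then P.mass w K a₀ (j + m) a else 0) := by
          refine ENNReal.tsum_le_tsum fun a => ?_
          rw [Measure.dirac_apply' _ hVm]
          rcases eq_or_ne (P.mass w K a₀ (j + m) a) 0 with hm0 | hm0
          · simp [hm0]
          by_cases hxV : x (j + m) a ∈ V
          · have h1 := hV _ hxV
            rw [← par_iterate_lab j m, hx _ _ hm0] at h1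
            simp [hxV, h1]
          · simp [hxV]
      _ = ∑ b ∈ N, ∑' a, (if P.par^[m] a = b then P.mass w K a₀ (j + m) a else 0) :=
          Summable.tsum_finsetSum fun _ _ => ENNReal.summable
      _ = ∑ b ∈ N, P.mass w K a₀ j b := by
          refine Finset.sum_congr rfl fun b _ => tsum_mass_descendants hfib hwtop hK j m b
      _ ≤ ∑ b ∈ N, w j := Finset.sum_le_sum fun b _ => (mass_le hK j b).trans
          ((content_mono inter_subset_right).trans (content_cell_le _ _))
      _ = N.card * w j := by simp
  let ν' : ℕ → ProbabilityMeasure K := fun k => ⟨ν k, hν k⟩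
  let F : Ultrafilter ℕ := hyperfilter ℕ
  obtain ⟨μ, -, hμ⟩ := (isCompact_univ (X := ProbabilityMeasure K)).ultrafilter_le_nhds
    (F.map ν') (by simp)
  have hlim : Tendsto ν' F (𝓝 μ) := hμ
  refine ⟨(μ : Measure K).map Subtype.val, ?_, ?_, ?_⟩
  · exact Measure.isProbabilityMeasure_map measurable_subtype_coe.aemeasurable
  · rw [Measure.map_apply measurable_subtype_coe hKc.measurableSet.compl]
    simp
  · intro V hV j N hVN
    rw [Measure.map_apply measurable_subtype_coe hV.measurableSet]
    have hVo : IsOpen ((↑) ⁻¹' V : Set K) := hV.preimage continuous_subtype_val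
    refine (ProbabilityMeasure.le_liminf_measure_open_of_tendsto hlim hVo).trans ?_
    refine liminf_le_of_frequently_le' (Eventually.frequently ?_)
    have : ∀ᶠ k in (F : Filter ℕ), j ≤ k :=
      Nat.hyperfilter_le_atTop (eventually_ge_atTop j)
    filter_upwards [this] with k hk
    exact hνV j N _ hVo.measurableSet (fun y hy => hVN _ hy) k hk

end Mass

end NestedPartition
end Falconer

/-! ### Frostman's lemma -/

namespace Falconer

open Set Filter Topology NestedPartition

section Frostman

variable {n : ℕ}

/-- The dyadic cubes of `ℝⁿ`; those of generation `k` have side length `2⁻ᵏ`. -/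
noncomputable def dyadic (n : ℕ) : NestedPartition (EuclideanSpace ℝ (Fin n)) (Fin n → ℤ) where
  par a i := a i / 2
  lab k x i := ⌊(2 : ℝ) ^ k * x i⌋
  par_lab k x := by
    ext i
    have := Int.floor_div_natCast ((2 : ℝ) ^ (k + 1) * x i) 2
    simp only [Nat.cast_ofNat] at this
    rw [← this]
    congr 1
    ring

/-- The weight `2⁻ᵏˢ` of a dyadic cube of generation `k`. -/
noncomputable def weight (s : ℝ) (k : ℕ) : ℝ≥0∞ := ((2⁻¹ : ℝ≥0∞) ^ k) ^ s

lemma weight_ne_zero (s : ℝ) (k : ℕ) : weight s k ≠ 0 := by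
  simp [weight, ENNReal.rpow_eq_zero_iff]

lemma weight_ne_top {s : ℝ} (hs : 0 < s) (k : ℕ) : weight s k ≠ ∞ := by
  refine ENNReal.rpow_ne_top_of_nonneg hs.le (ENNReal.pow_ne_top (by simp))

lemma weight_antitone {s : ℝ} (hs : 0 < s) : Antitone (weight s) := fun _ _ h =>
  ENNReal.rpow_le_rpow (pow_le_pow_right_of_le_one' (by simp) h) hs.le

lemma tendsto_two_inv_pow : Tendsto (fun k : ℕ => (2⁻¹ : ℝ≥0∞) ^ k) atTop (𝓝 0) :=
  ENNReal.tendsto_pow_atTop_nhds_zero_of_lt_one (by simp)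

lemma tendsto_weight {s : ℝ} (hs : 0 < s) : Tendsto (weight s) atTop (𝓝 0) := by
  have := (ENNReal.continuous_rpow_const (y := s)).continuousAt.tendsto.comp tendsto_two_inv_pow
  rw [ENNReal.zero_rpow_of_pos hs] at this
  exact this

lemma fibre_finite (a : Fin n → ℤ) : ((dyadic n).par ⁻¹' {a}).Finite := by
  refine (Fintype.piFinset fun i => Finset.Icc (2 * a i) (2 * a i + 1)).finite_toSet.subset ?_
  intro b hb
  simp only [mem_preimage, mem_singleton_iff] at hb
  simp only [Finset.mem_coe, Fintype.mem_piFinset, Finset.mem_Icc]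
  intro i
  have : b i / 2 = a i := congrFun hb i
  omega

/-- The labels of the cube labelled `a` and of all cubes of the same generation touching it. -/
noncomputable def nbhd (a : Fin n → ℤ) : Finset (Fin n → ℤ) :=
  Fintype.piFinset fun i => Finset.Icc (a i - 1) (a i + 1)

lemma card_nbhd (a : Fin n → ℤ) : (nbhd a).card = 3 ^ n := by
  simp only [nbhd, Fintype.card_piFinset, Int.card_Icc]
  rw [Finset.prod_congr rfl (g := fun _ => 3)]
  · simp
  · intro i _; omega

lemma lab_mem_nbhd {k : ℕ} {x y : EuclideanSpace ℝ (Fin n)} (h : dist x y < (2 : ℝ)⁻¹ ^ k) :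
    (dyadic n).lab k y ∈ nbhd ((dyadic n).lab k x) := by
  simp only [nbhd, Fintype.mem_piFinset, Finset.mem_Icc]
  intro i
  change ⌊(2 : ℝ) ^ k * x i⌋ - 1 ≤ ⌊(2 : ℝ) ^ k * y i⌋ ∧
    ⌊(2 : ℝ) ^ k * y i⌋ ≤ ⌊(2 : ℝ) ^ k * x i⌋ + 1
  have h1 : |x i - y i| ≤ dist x y := by
    have := PiLp.norm_apply_le (p := 2) (x - y) i
    simpa [dist_eq_norm] using this
  have h2 : |(2 : ℝ) ^ k * x i - (2 : ℝ) ^ k * y i| < 1 := by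
    rw [← mul_sub, abs_mul, abs_of_pos (by positivity)]
    calc (2 : ℝ) ^ k * |x i - y i| < 2 ^ k * 2⁻¹ ^ k :=
          mul_lt_mul_of_pos_left (h1.trans_lt h) (by positivity)
      _ = 1 := by rw [← mul_pow]; norm_num
  rw [abs_lt] at h2
  have a1 := Int.floor_le ((2 : ℝ) ^ k * x i)
  have a2 := Int.lt_floor_add_one ((2 : ℝ) ^ k * x i)
  have a3 := Int.floor_le ((2 : ℝ) ^ k * y i)
  have a4 := Int.lt_floor_add_one ((2 : ℝ) ^ k * y i)
  constructor
  · have : ((⌊(2 : ℝ) ^ k * x i⌋ : ℤ) : ℝ) < ((⌊(2 : ℝ) ^ k * y i⌋ + 2 : ℤ) : ℝ) := by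
      push_cast; linarith
    have := Int.cast_lt.1 this
    omega
  · have : ((⌊(2 : ℝ) ^ k * y i⌋ : ℤ) : ℝ) < ((⌊(2 : ℝ) ^ k * x i⌋ + 2 : ℤ) : ℝ) := by
      push_cast; linarith
    have := Int.cast_lt.1 this
    omega

lemma dist_le_of_lab_eq {k : ℕ} {x y : EuclideanSpace ℝ (Fin n)} (h : (dyadic n).lab k x = (dyadic n).lab k y) :
    dist x y ≤ (n + 1) * (2 : ℝ)⁻¹ ^ k := by
  have h1 : ∀ i, dist (x i) (y i) ≤ (2 : ℝ)⁻¹ ^ k := by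
    intro i
    have hi : ⌊(2 : ℝ) ^ k * x i⌋ = ⌊(2 : ℝ) ^ k * y i⌋ := congrFun h i
    have := Int.abs_sub_lt_one_of_floor_eq_floor hi
    rw [← mul_sub, abs_mul, abs_of_pos (by positivity)] at this
    rw [Real.dist_eq, inv_pow, ← one_div, le_div_iff₀ (by positivity), mul_comm]
    exact this.le
  rw [EuclideanSpace.dist_eq]
  refine Real.sqrt_le_iff.2 ⟨by positivity, ?_⟩
  calc ∑ i, dist (x i) (y i) ^ 2 ≤ ∑ _i : Fin n, ((2 : ℝ)⁻¹ ^ k) ^ 2 :=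
        Finset.sum_le_sum fun i _ => pow_le_pow_left₀ dist_nonneg (h1 i) 2
    _ = n * ((2 : ℝ)⁻¹ ^ k) ^ 2 := by simp
    _ ≤ ((n + 1) * (2 : ℝ)⁻¹ ^ k) ^ 2 := by
        rw [mul_pow]
        refine mul_le_mul_of_nonneg_right ?_ (by positivity)
        nlinarith [(Nat.cast_nonneg n : (0 : ℝ) ≤ n)]

lemma ediam_cell_le (k : ℕ) (a : Fin n → ℤ) :
    ediam ((dyadic n).cell k a) ≤ (n + 1) * (2⁻¹ : ℝ≥0∞) ^ k := by
  refine ediam_le fun x hx y hy => ?_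
  rw [edist_dist]
  refine (ENNReal.ofReal_le_ofReal (dist_le_of_lab_eq (k := k)
    (show _ = _ from hx.trans hy.symm))).trans_eq ?_
  rw [ENNReal.ofReal_mul (by positivity), ENNReal.ofReal_pow (by positivity),
    ENNReal.ofReal_inv_of_pos (by norm_num), ENNReal.ofReal_add (by positivity) (by norm_num)]
  simp

/-- The weight of a dyadic cube is comparable to the `s`-th power of its diameter; as the content
vanishes, covers by small total weight consist of small cubes only. -/
lemma hausdorffMeasure_eq_zero {s : ℝ} (hs : 0 < s) {S : Set (EuclideanSpace ℝ (Fin n))}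
    (h : (dyadic n).content (weight s) S = 0) : μH[s] S = 0 := by
  have h1 : ∀ m, ∃ T, (dyadic n).Covers T S ∧ ∑' p : T, weight s p.1.1 < weight s m := fun m =>
    exists_cover (by rw [h]; exact (weight_ne_zero s m).bot_lt)
  choose T hT hTc using h1
  have hlev : ∀ m (p : T m), m ≤ p.1.1 := by
    intro m p
    by_contra hlt
    have h2 := (ENNReal.le_tsum p).trans_lt (hTc m)
    exact (weight_antitone hs (not_le.1 hlt).le).not_gt h2
  have hn : ((n : ℝ≥0∞) + 1) ≠ ∞ := by simp
  have hr : Tendsto (fun m : ℕ => ((n : ℝ≥0∞) + 1) * (2⁻¹ : ℝ≥0∞) ^ m) atTop (𝓝 0) := by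
    simpa using ENNReal.Tendsto.const_mul tendsto_two_inv_pow (Or.inr hn)
  have key := Measure.hausdorffMeasure_le_liminf_tsum s S
    (fun m : ℕ => ((n : ℝ≥0∞) + 1) * (2⁻¹ : ℝ≥0∞) ^ m) hr
    (fun m (p : T m) => (dyadic n).cell p.1.1 p.1.2)
    (Eventually.of_forall fun m p => (ediam_cell_le _ _).trans
      (mul_le_mul' le_rfl
        (pow_le_pow_right_of_le_one' (ENNReal.inv_le_one.2 one_le_two) (hlev m p))))
    (Eventually.of_forall fun m x hx => by
      obtain ⟨k, hk⟩ := hT m x hx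
      exact mem_iUnion.2 ⟨⟨_, hk⟩, rfl⟩)
  have hle : ∀ m, ∑' p : T m, ediam ((dyadic n).cell p.1.1 p.1.2) ^ s ≤
      ((n : ℝ≥0∞) + 1) ^ s * weight s m := by
    intro m
    calc _ ≤ ∑' p : T m, ((n : ℝ≥0∞) + 1) ^ s * weight s p.1.1 := by
          refine ENNReal.tsum_le_tsum fun p => ?_
          rw [weight, ← ENNReal.mul_rpow_of_nonneg _ _ hs.le]
          exact ENNReal.rpow_le_rpow (ediam_cell_le _ _) hs.le
      _ = ((n : ℝ≥0∞) + 1) ^ s * ∑' p : T m, weight s p.1.1 := ENNReal.tsum_mul_left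
      _ ≤ _ := by gcongr; exact (hTc m).le
  have hlim : Tendsto (fun m => ((n : ℝ≥0∞) + 1) ^ s * weight s m) atTop (𝓝 0) := by
    simpa using ENNReal.Tendsto.const_mul (tendsto_weight hs)
      (Or.inr (ENNReal.rpow_ne_top_of_nonneg hs.le hn))
  have := key.trans (liminf_le_liminf (Eventually.of_forall hle))
  rw [hlim.liminf_eq] at this
  exact le_antisymm this zero_le

/-- Frostman's lemma: a Borel set of dimension larger than `s` carries, on a compact subset, a
probability measure with `μ(B(x, r)) ≲ rˢ`. -/
theorem frostman {A : Set (EuclideanSpace ℝ (Fin n))} (hA : MeasurableSet A) {s : NNReal} (hs : 0 < s)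
    (hsA : (s : ℝ≥0∞) < dimH A) :
    ∃ K ⊆ A, IsCompact K ∧ ∃ μ : Measure (EuclideanSpace ℝ (Fin n)), IsProbabilityMeasure μ ∧ μ Kᶜ = 0 ∧
      ∃ C : ℝ≥0∞, C ≠ ∞ ∧ ∀ x r, 0 < r →
        μ (closedBall x r) ≤ C * ENNReal.ofReal r ^ (s : ℝ) := by
  have hs' : (0 : ℝ) < s := hs
  obtain ⟨D, hD⟩ : ∃ D : ℝ≥0∞, D = 3 ^ n := ⟨_, rfl⟩
  -- passing to one unit cube makes the content finite
  obtain ⟨a₀, ha₀⟩ : ∃ a₀, (dyadic n).content (weight s) (A ∩ (dyadic n).cell 0 a₀) ≠ 0 := by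
    by_contra! hcon
    have h1 : (dyadic n).content (weight s) A = 0 := by
      have h2 : A = ⋃ a, A ∩ (dyadic n).cell 0 a := by
        ext x
        simp [cell]
      have := content_iUnion_le (P := dyadic n) (w := weight s) fun a => A ∩ (dyadic n).cell 0 a
      rw [← h2] at this
      simpa [hcon] using this
    have h3 := hausdorffMeasure_of_lt_dimH hsA
    rw [hausdorffMeasure_eq_zero hs' h1] at h3
    exact ENNReal.zero_ne_top h3
  have hcell : MeasurableSet ((dyadic n).cell 0 a₀) := by
    have : (dyadic n).cell 0 a₀ = ⋂ i, {x : EuclideanSpace ℝ (Fin n) | ⌊(2 : ℝ) ^ 0 * x i⌋ = a₀ i} := by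
      ext x
      simp only [cell, mem_ofPred_eq, mem_iInter]
      exact funext_iff
    rw [this]
    refine MeasurableSet.iInter fun i => ?_
    have hm : Measurable fun x : EuclideanSpace ℝ (Fin n) => ⌊(2 : ℝ) ^ 0 * x i⌋ := by
      refine Int.measurable_floor.comp ?_
      fun_prop
    exact hm (measurableSet_singleton _)
  -- the open `2⁻ᵏ`-neighbourhood of a cube of generation `k` is covered by `3ⁿ` such cubes
  have hopen : ∀ k a, ∃ U, IsOpen U ∧ (dyadic n).cell k a ⊆ U ∧
      (dyadic n).content (weight s) U ≤ D * weight s k := by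
    intro k a
    refine ⟨⋃ x ∈ (dyadic n).cell k a, ball x ((2 : ℝ)⁻¹ ^ k),
      isOpen_biUnion fun _ _ => isOpen_ball, fun x hx => mem_biUnion hx
        (mem_ball_self (by positivity)), ?_⟩
    have hsub : (⋃ x ∈ (dyadic n).cell k a, ball x ((2 : ℝ)⁻¹ ^ k)) ⊆
        ⋃ b : nbhd a, (dyadic n).cell k b := by
      intro y hy
      obtain ⟨x, hx, hxy⟩ := mem_iUnion₂.1 hy
      have hx' : (dyadic n).lab k x = a := hx
      have := lab_mem_nbhd (k := k) (x := x) (y := y) (by rw [dist_comm]; exact hxy)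
      rw [hx'] at this
      exact mem_iUnion.2 ⟨⟨_, this⟩, rfl⟩
    calc _ ≤ (dyadic n).content (weight s) (⋃ b : nbhd a, (dyadic n).cell k b) :=
          content_mono hsub
      _ ≤ ∑' b : nbhd a, (dyadic n).content (weight s) ((dyadic n).cell k b) :=
          content_iUnion_le _
      _ ≤ ∑' _b : nbhd a, weight s k := ENNReal.tsum_le_tsum fun b => content_cell_le k b.1
      _ = D * weight s k := by
          rw [tsum_fintype, Finset.sum_const, Finset.card_univ, Fintype.card_coe, card_nbhd, hD]
          simp
  have hfin : (dyadic n).content (weight s) (A ∩ (dyadic n).cell 0 a₀) ≠ ∞ :=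
    ne_top_of_le_ne_top (weight_ne_top hs' 0) ((content_mono inter_subset_right).trans
      (content_cell_le 0 a₀))
  obtain ⟨c, hc0, hc⟩ := exists_between (bot_lt_iff_ne_bot.2 ha₀)
  obtain ⟨K, hKA, hK, hcK⟩ := exists_isCompact_content (P := dyadic n) (weight_antitone hs')
    (weight_ne_zero s) (weight_ne_top hs') (D := D) (by simp [hD]) (by rw [hD]; finiteness) hopen
    (hA.inter hcell).analyticSet hfin hc
  have hK0 : (dyadic n).content (weight s) K ≠ 0 := by
    intro h
    rw [h, mul_zero] at hcK
    exact hc0.not_ge hcK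
  obtain ⟨μ, hμ, hμK, hμV⟩ := exists_measure (P := dyadic n) fibre_finite (weight_ne_top hs')
    (hKA.trans inter_subset_right) hK hK0
  refine ⟨K, hKA.trans inter_subset_left, hK, μ, hμ, hμK, ?_⟩
  set B := ((dyadic n).content (weight s) K)⁻¹ * 3 ^ n with hB
  have hBtop : B ≠ ∞ := ENNReal.mul_ne_top (ENNReal.inv_ne_top.2 hK0) (by finiteness)
  have h2s : (2 : ℝ≥0∞) ^ (s : ℝ) ≠ ∞ := ENNReal.rpow_ne_top_of_nonneg hs'.le (by simp)
  have h4s : (4 : ℝ≥0∞) ^ (s : ℝ) ≠ ∞ := ENNReal.rpow_ne_top_of_nonneg hs'.le (by simp)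
  refine ⟨2 ^ (s : ℝ) + B * 4 ^ (s : ℝ), by finiteness, fun x r hr => ?_⟩
  rcases le_or_gt 1 (2 * r) with h1r | hr1
  · calc μ (closedBall x r) ≤ 1 := prob_le_one
      _ = 1 ^ (s : ℝ) := by simp
      _ ≤ (2 * ENNReal.ofReal r) ^ (s : ℝ) := by
          gcongr
          simpa [ENNReal.ofReal_mul] using ENNReal.ofReal_le_ofReal h1r
      _ = 2 ^ (s : ℝ) * ENNReal.ofReal r ^ (s : ℝ) := ENNReal.mul_rpow_of_nonneg _ _ hs'.le
      _ ≤ _ := by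
          gcongr
          exact le_self_add
  · obtain ⟨k, hk1, hk2⟩ := exists_nat_pow_near_of_lt_one (mul_pos two_pos hr) hr1.le
      (show (0 : ℝ) < 2⁻¹ by norm_num) (by norm_num)
    have hV : μ (ball x ((2 : ℝ)⁻¹ ^ k)) ≤ B * weight s k := by
      have := hμV (ball x ((2 : ℝ)⁻¹ ^ k)) isOpen_ball k (nbhd ((dyadic n).lab k x))
        (fun y hy => lab_mem_nbhd (by rw [dist_comm]; exact hy))
      rw [card_nbhd] at this
      simpa [hB, mul_assoc] using this
    have hwk : weight s k ≤ 4 ^ (s : ℝ) * ENNReal.ofReal r ^ (s : ℝ) := by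
      rw [weight, ← ENNReal.mul_rpow_of_nonneg _ _ hs'.le]
      refine ENNReal.rpow_le_rpow ?_ hs'.le
      have h1 : (2 : ℝ)⁻¹ ^ k ≤ 4 * r := by
        rw [pow_succ] at hk1
        linarith
      have h2 := ENNReal.ofReal_le_ofReal h1
      rw [ENNReal.ofReal_mul (by norm_num), ENNReal.ofReal_pow (by positivity),
        ENNReal.ofReal_inv_of_pos (by norm_num)] at h2
      simpa using h2
    calc μ (closedBall x r) ≤ μ (ball x ((2 : ℝ)⁻¹ ^ k)) :=
          measure_mono (closedBall_subset_ball (by linarith))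
      _ ≤ B * (4 ^ (s : ℝ) * ENNReal.ofReal r ^ (s : ℝ)) := hV.trans (by gcongr)
      _ ≤ _ := by
          rw [← mul_assoc]
          gcongr
          exact le_add_self

end Frostman

end Falconer

/-! ### Gaussian averages of characteristic functions -/

namespace Falconer

open Set Filter Topology

section Gaussian

variable {V : Type*} [NormedAddCommGroup V] [InnerProductSpace ℝ V] [FiniteDimensional ℝ V]
  [MeasurableSpace V] [BorelSpace V]

/-- The function `e⁻ᵘ`, with values in `[0, ∞]`. -/
noncomputable def gauss (u : ℝ) : ℝ≥0∞ := ENNReal.ofReal (Real.exp (-u))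

@[fun_prop]
lemma continuous_gauss : Continuous gauss := by
  exact ENNReal.continuous_ofReal.comp (by fun_prop)

@[fun_prop]
lemma measurable_gauss : Measurable gauss := continuous_gauss.measurable

lemma gauss_anti : Antitone gauss := fun _ _ h =>
  ENNReal.ofReal_le_ofReal (Real.exp_le_exp.2 (neg_le_neg h))

lemma gauss_ne_zero (u : ℝ) : gauss u ≠ 0 := by simp [gauss, Real.exp_pos]

lemma gauss_ne_top (u : ℝ) : gauss u ≠ ∞ := ENNReal.ofReal_ne_top

lemma gauss_le_one {u : ℝ} (hu : 0 ≤ u) : gauss u ≤ 1 := by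
  simpa [gauss] using hu

lemma gauss_add (u v : ℝ) : gauss (u + v) = gauss u * gauss v := by
  rw [gauss, neg_add, Real.exp_add, ENNReal.ofReal_mul (Real.exp_pos _).le, gauss, gauss]

lemma integrable_exp_neg_mul_sq {b : ℝ} (hb : 0 < b) :
    Integrable (fun η : V => Real.exp (-b * ‖η‖ ^ 2)) := by
  have := (GaussianFourier.integrable_cexp_neg_mul_sq_norm_add (V := V) (b := b) (by simpa) 0
    0).norm
  refine this.congr (Eventually.of_forall fun η => ?_)
  simp only [Complex.norm_exp]
  simp [← Complex.ofReal_pow]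

/-- Pairing a characteristic function, translated by `ζ`, with a Gaussian. -/
lemma integral_charFun_mul_gaussian (μ : Measure V) [IsFiniteMeasure μ] {b : ℝ} (hb : 0 < b)
    (ζ : V) :
    ∫ η, charFun μ (η + ζ) * (Real.exp (-b * ‖η‖ ^ 2) : ℝ) =
      ((Real.pi / b) ^ (Module.finrank ℝ V / 2 : ℝ) : ℝ) *
        ∫ x, Complex.exp (⟪x, ζ⟫ * Complex.I) * (Real.exp (-(‖x‖ ^ 2 / (4 * b))) : ℝ) ∂μ := by
  have hg := integrable_exp_neg_mul_sq (V := V) hb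
  have hF_int : Integrable (Function.uncurry fun (η x : V) =>
      Complex.exp (⟪x, η + ζ⟫ * Complex.I) * (Real.exp (-b * ‖η‖ ^ 2) : ℝ)) (volume.prod μ) := by
    refine (hg.comp_fst μ).mono' (by fun_prop) (Eventually.of_forall fun p => ?_)
    simp only [Function.uncurry, norm_mul, Complex.norm_exp_ofReal_mul_I, one_mul,
      Complex.norm_real, Real.norm_of_nonneg (Real.exp_pos _).le]
    exact le_rfl
  simp only [charFun_apply]
  simp_rw [← integral_mul_const]
  rw [integral_integral_swap hF_int, ← integral_const_mul]
  refine integral_congr_ae (Eventually.of_forall fun x => ?_)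
  have h1 := GaussianFourier.integral_cexp_neg_mul_sq_norm_add (V := V) (b := b) (by simpa)
    Complex.I x
  have h2 : ∀ η : V, Complex.exp (⟪x, η + ζ⟫ * Complex.I) * (Real.exp (-b * ‖η‖ ^ 2) : ℝ) =
      Complex.exp (⟪x, ζ⟫ * Complex.I) *
        Complex.exp (-b * ‖η‖ ^ 2 + Complex.I * ⟪x, η⟫) := by
    intro η
    push_cast
    rw [← Complex.exp_add, ← Complex.exp_add, inner_add_right]
    congr 1
    push_cast
    ring
  simp only [h2, integral_const_mul, h1]
  rw [Complex.I_sq]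
  push_cast
  rw [Complex.ofReal_cpow (by positivity)]
  push_cast
  have h3 : (-1 * (‖x‖ : ℂ) ^ 2 / (4 * b)) = -((‖x‖ : ℂ) ^ 2 / (4 * b)) := by ring
  rw [h3]
  ring

/-- The mean of `|μ̂|²` against a Gaussian is a Gaussian energy of `μ`. -/
lemma lintegral_charFun_sq_mul_gauss (μ : Measure V) [IsFiniteMeasure μ] {b : ℝ} (hb : 0 < b) :
    ∫⁻ ξ, ‖charFun μ ξ‖ₑ ^ 2 * gauss (b * ‖ξ‖ ^ 2) =
      ENNReal.ofReal ((Real.pi / b) ^ (Module.finrank ℝ V / 2 : ℝ)) *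
        ∫⁻ x, ∫⁻ y, gauss (‖x - y‖ ^ 2 / (4 * b)) ∂μ ∂μ := by
  -- `ρ`, the law of the difference of two points, has characteristic function `|μ̂|²`
  set ρ := μ.conv (μ.map fun x => -x) with hρ
  have hmap : ∀ t, charFun (μ.map fun x => -x) t = (starRingEnd ℂ) (charFun μ t) := by
    intro t
    have := charFun_map_smul (μ := μ) (-1) t
    simpa [charFun_neg] using this
  have hcf : ∀ t, charFun ρ t = ((‖charFun μ t‖ ^ 2 : ℝ) : ℂ) := by
    intro t
    rw [hρ, charFun_conv, hmap, Complex.mul_conj, Complex.normSq_eq_norm_sq]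
  have key := integral_charFun_mul_gaussian ρ hb 0
  simp only [add_zero, hcf, inner_zero_right, Complex.ofReal_zero, zero_mul, Complex.exp_zero,
    one_mul, ← Complex.ofReal_mul] at key
  rw [integral_complex_ofReal, integral_complex_ofReal, ← Complex.ofReal_mul,
    Complex.ofReal_inj] at key
  have hg := integrable_exp_neg_mul_sq (V := V) hb
  have hi : Integrable fun η : V => ‖charFun μ η‖ ^ 2 * Real.exp (-b * ‖η‖ ^ 2) := by
    refine hg.bdd_mul (c := (μ.real univ) ^ 2) ?_ (Eventually.of_forall fun η => ?_)
    · exact ((measurable_charFun.norm).pow_const 2).aestronglyMeasurable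
    · rw [Real.norm_of_nonneg (by positivity)]
      exact pow_le_pow_left₀ (norm_nonneg _) (norm_charFun_le η) 2
  have hj : Integrable (fun x : V => Real.exp (-(‖x‖ ^ 2 / (4 * b)))) ρ := by
    refine Integrable.of_bound (by fun_prop) 1 (Eventually.of_forall fun x => ?_)
    rw [Real.norm_of_nonneg (Real.exp_pos _).le]
    simp only [Real.exp_le_one_iff, Left.neg_nonpos_iff]
    positivity
  have h1 := congrArg ENNReal.ofReal key
  rw [ENNReal.ofReal_mul (by positivity), ofReal_integral_eq_lintegral_ofReal hi
    (Eventually.of_forall fun η => by positivity), ofReal_integral_eq_lintegral_ofReal hj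
    (Eventually.of_forall fun η => by positivity)] at h1
  have h2 : ∀ ξ : V, ‖charFun μ ξ‖ₑ ^ 2 * gauss (b * ‖ξ‖ ^ 2) =
      ENNReal.ofReal (‖charFun μ ξ‖ ^ 2 * Real.exp (-b * ‖ξ‖ ^ 2)) := by
    intro ξ
    rw [ENNReal.ofReal_mul (by positivity), ENNReal.ofReal_pow (norm_nonneg _), ofReal_norm,
      gauss, neg_mul]
  simp only [h2]
  rw [h1, hρ]
  congr 1
  rw [Measure.lintegral_conv (by fun_prop)]
  refine lintegral_congr fun x => ?_
  rw [lintegral_map (by fun_prop) (by fun_prop)]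
  simp [gauss, sub_eq_add_neg]

/-- The Cauchy-Schwarz inequality. -/
lemma sq_lintegral_mul_le {α : Type*} [MeasurableSpace α] (μ : Measure α) {f g : α → ℝ≥0∞}
    (hf : AEMeasurable f μ) (hg : AEMeasurable g μ) :
    (∫⁻ a, f a * g a ∂μ) ^ 2 ≤ (∫⁻ a, f a ^ 2 ∂μ) * ∫⁻ a, g a ^ 2 ∂μ := by
  have h := ENNReal.lintegral_mul_le_Lp_mul_Lq μ Real.HolderConjugate.two_two hf hg
  have h2 := pow_le_pow_left' h 2
  rw [mul_pow, ← ENNReal.rpow_natCast, ← ENNReal.rpow_natCast, ← ENNReal.rpow_mul,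
    ← ENNReal.rpow_natCast, ← ENNReal.rpow_mul] at h2
  simpa using h2

lemma exists_gauss_sum (s : ℝ) :
    ∑' k : ℕ, gauss ((k : ℝ) ^ 2) * ENNReal.ofReal (k + 1) ^ s ≠ ∞ := by
  obtain ⟨m, hm⟩ := exists_nat_ge s
  have h1 : Summable fun k : ℕ => ((k : ℝ) + 1) ^ m * Real.exp (-k) := by
    have h0 := (summable_nat_add_iff 1).2
      (Real.summable_pow_mul_exp_neg_nat_mul m (r := 1) one_pos)
    refine (h0.mul_left (Real.exp 1)).congr fun k => ?_
    push_cast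
    rw [mul_left_comm, ← Real.exp_add]
    ring_nf
  refine ne_top_of_le_ne_top h1.tsum_ofReal_ne_top (ENNReal.tsum_le_tsum fun k => ?_)
  rw [mul_comm, ENNReal.ofReal_mul (by positivity), ENNReal.ofReal_rpow_of_pos (by positivity)]
  gcongr
  · rw [← Real.rpow_natCast]
    exact Real.rpow_le_rpow_of_exponent_le (by simp) hm
  · refine ENNReal.ofReal_le_ofReal (Real.exp_le_exp.2 (neg_le_neg ?_))
    exact_mod_cast Nat.le_self_pow two_ne_zero k

/-- Gaussian potentials of a measure satisfying a ball condition, bounded by splitting the space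
into the annuli `k * r ≤ dist x y ≤ (k + 1) * r`. -/
lemma exists_lintegral_gauss_le {X : Type*} [PseudoMetricSpace X] [MeasurableSpace X]
    [OpensMeasurableSpace X] {ν : Measure X} {s : ℝ} (hs : 0 < s) {C : ℝ≥0∞} (hC : C ≠ ∞)
    (hν : ∀ x r, 0 < r → ν (closedBall x r) ≤ C * ENNReal.ofReal r ^ s) :
    ∃ C' : ℝ≥0∞, C' ≠ ∞ ∧ ∀ x r, 0 < r →
      ∫⁻ y, gauss ((dist x y / r) ^ 2) ∂ν ≤ C' * ENNReal.ofReal r ^ s := by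
  refine ⟨C * ∑' k : ℕ, gauss ((k : ℝ) ^ 2) * ENNReal.ofReal (k + 1) ^ s,
    ENNReal.mul_ne_top hC (exists_gauss_sum s), fun x r hr => ?_⟩
  have hpt : ∀ y, gauss ((dist x y / r) ^ 2) ≤
      ∑' k : ℕ, (closedBall x ((k + 1) * r)).indicator (fun _ => gauss ((k : ℝ) ^ 2)) y := by
    intro y
    have hu : 0 ≤ dist x y / r := by positivity
    refine le_trans ?_ (ENNReal.le_tsum ⌊dist x y / r⌋₊)
    rw [indicator_of_mem]
    · exact gauss_anti (pow_le_pow_left₀ (by positivity) (Nat.floor_le hu) 2)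
    · rw [mem_closedBall, dist_comm, ← div_le_iff₀ hr]
      exact (Nat.lt_floor_add_one _).le
  calc ∫⁻ y, gauss ((dist x y / r) ^ 2) ∂ν
      ≤ ∫⁻ y, ∑' k : ℕ, (closedBall x ((k + 1) * r)).indicator
          (fun _ => gauss ((k : ℝ) ^ 2)) y ∂ν := lintegral_mono hpt
    _ = ∑' k : ℕ, gauss ((k : ℝ) ^ 2) * ν (closedBall x ((k + 1) * r)) := by
        rw [lintegral_tsum]
        · simp_rw [lintegral_indicator_const measurableSet_closedBall]
        · exact fun k => (measurable_const.indicator measurableSet_closedBall).aemeasurable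
    _ ≤ ∑' k : ℕ, C * (gauss ((k : ℝ) ^ 2) * ENNReal.ofReal (k + 1) ^ s) *
          ENNReal.ofReal r ^ s := by
        refine ENNReal.tsum_le_tsum fun k => ?_
        refine (mul_le_mul' le_rfl (hν x ((k + 1) * r) (by positivity))).trans_eq ?_
        rw [ENNReal.ofReal_mul (by positivity), ENNReal.mul_rpow_of_nonneg _ _ hs.le]
        ring
    _ = _ := by rw [ENNReal.tsum_mul_right, ENNReal.tsum_mul_left]

lemma measurable_measure_ball (m : Measure ℝ) [IsFiniteMeasure m] (δ : ℝ) :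
    Measurable fun x => m (ball x δ) := by
  have hS : MeasurableSet {p : ℝ × ℝ | dist p.2 p.1 < δ} :=
    (isOpen_lt (by fun_prop) (by fun_prop)).measurableSet
  exact measurable_measure_prodMk_left hS

lemma lintegral_setLIntegral_ball (m : Measure ℝ) [IsFiniteMeasure m] (U : Set ℝ) (δ : ℝ)
    {g : ℝ → ℝ≥0∞} (hg : Measurable g) :
    ∫⁻ u in U, ∫⁻ x in ball u δ, g x ∂m = ∫⁻ x, g x * volume.restrict U (ball x δ) ∂m := by
  have hS : MeasurableSet {p : ℝ × ℝ | dist p.2 p.1 < δ} :=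
    (isOpen_lt (by fun_prop) (by fun_prop)).measurableSet
  calc ∫⁻ u in U, ∫⁻ x in ball u δ, g x ∂m
      = ∫⁻ u in U, ∫⁻ x, {p : ℝ × ℝ | dist p.2 p.1 < δ}.indicator (fun p => g p.2) (u, x) ∂m := by
        refine lintegral_congr fun u => ?_
        rw [← lintegral_indicator measurableSet_ball]
        rfl
    _ = ∫⁻ x, (∫⁻ u in U, {p : ℝ × ℝ | dist p.2 p.1 < δ}.indicator (fun p => g p.2) (u, x)) ∂m :=
        lintegral_lintegral_swap (f := fun u x =>
          {p : ℝ × ℝ | dist p.2 p.1 < δ}.indicator (fun p => g p.2) (u, x))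
          ((hg.comp measurable_snd).indicator hS).aemeasurable
    _ = ∫⁻ x, (∫⁻ u in U, (ball x δ).indicator (fun _ => g x) u) ∂m := by
        refine lintegral_congr fun x => lintegral_congr fun u => ?_
        simp only [indicator, mem_ofPred_eq, mem_ball, dist_comm]
    _ = _ := by
        refine lintegral_congr fun x => ?_
        rw [lintegral_indicator_const measurableSet_ball]

/-- A measure on the line whose characteristic function is square integrable does not charge
compact Lebesgue null sets: the function `u ↦ m (ball u δ)` has squared `L²` norm `O(δ²)`, and its
integral over the `δ`-neighbourhood of `N` is at least `2δ * m N`, so `(m N)²` is bounded by a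
multiple of the length of this neighbourhood. -/
lemma measure_eq_zero_of_lintegral_charFun {m : Measure ℝ} [IsFiniteMeasure m]
    (hm : ∫⁻ r, ‖charFun m r‖ₑ ^ 2 ≠ ∞) {N : Set ℝ} (hN : IsCompact N) (hN0 : volume N = 0) :
    m N = 0 := by
  set H := ∫⁻ r, ‖charFun m r‖ₑ ^ 2 with hH
  -- energy bound for pairs of points at distance less than `2δ`
  have h1 : ∀ δ : ℝ, 0 < δ → ∫⁻ x, m (ball x (2 * δ)) ∂m ≤
      (gauss 1)⁻¹ * (ENNReal.ofReal δ * H) := by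
    intro δ hδ
    have hF := lintegral_charFun_sq_mul_gauss m (b := δ ^ 2) (by positivity)
    have hc : (Real.pi / δ ^ 2) ^ (Module.finrank ℝ ℝ / 2 : ℝ) = √Real.pi / δ := by
      rw [Module.finrank_self, Nat.cast_one, ← Real.sqrt_eq_rpow,
        Real.sqrt_div Real.pi_pos.le, Real.sqrt_sq hδ.le]
    rw [hc] at hF
    have hle : ∫⁻ ξ, ‖charFun m ξ‖ₑ ^ 2 * gauss (δ ^ 2 * ‖ξ‖ ^ 2) ≤ H :=
      lintegral_mono fun ξ => mul_le_of_le_one_right' (gauss_le_one (by positivity))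
    rw [hF] at hle
    have h2 : ∫⁻ x, m (ball x (2 * δ)) ∂m ≤
        (gauss 1)⁻¹ * ∫⁻ x, ∫⁻ y, gauss (‖x - y‖ ^ 2 / (4 * δ ^ 2)) ∂m ∂m := by
      rw [← lintegral_const_mul' _ _ (ENNReal.inv_ne_top.2 (gauss_ne_zero 1))]
      refine lintegral_mono fun x => ?_
      rw [← lintegral_const_mul' _ _ (ENNReal.inv_ne_top.2 (gauss_ne_zero 1)),
        ← setLIntegral_one]
      refine (setLIntegral_mono (by fun_prop) fun y hy => ?_).trans (setLIntegral_le_lintegral _ _)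
      rw [← ENNReal.inv_mul_cancel (gauss_ne_zero 1) (gauss_ne_top 1)]
      gcongr
      refine gauss_anti ?_
      rw [div_le_one (by positivity)]
      rw [mem_ball, dist_comm, dist_eq_norm] at hy
      nlinarith [norm_nonneg (x - y)]
    refine h2.trans (mul_le_mul' le_rfl ?_)
    calc ∫⁻ x, ∫⁻ y, gauss (‖x - y‖ ^ 2 / (4 * δ ^ 2)) ∂m ∂m
        = 1 * ∫⁻ x, ∫⁻ y, gauss (‖x - y‖ ^ 2 / (4 * δ ^ 2)) ∂m ∂m := (one_mul _).symm
      _ ≤ ENNReal.ofReal (δ * (√Real.pi / δ)) *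
            ∫⁻ x, ∫⁻ y, gauss (‖x - y‖ ^ 2 / (4 * δ ^ 2)) ∂m ∂m := by
          gcongr
          rw [ENNReal.one_le_ofReal, mul_div_cancel₀ _ hδ.ne']
          exact Real.one_le_sqrt.2 (by linarith [Real.pi_gt_three])
      _ = ENNReal.ofReal δ * (ENNReal.ofReal (√Real.pi / δ) *
            ∫⁻ x, ∫⁻ y, gauss (‖x - y‖ ^ 2 / (4 * δ ^ 2)) ∂m ∂m) := by
          rw [ENNReal.ofReal_mul hδ.le, mul_assoc]
      _ ≤ ENNReal.ofReal δ * H := by gcongr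
  have h3 : ∀ δ : ℝ, 0 < δ → (m N) ^ 2 ≤ volume (cthickening δ N) * ((gauss 1)⁻¹ * H) := by
    intro δ hδ
    have hd0 : ENNReal.ofReal δ ≠ 0 := by simpa using hδ
    have hball : ∀ x, volume (ball x δ) = 2 * ENNReal.ofReal δ := fun x => by
      rw [Real.volume_ball, ENNReal.ofReal_mul (by norm_num)]
      simp
    have h4 : 2 * ENNReal.ofReal δ * m N ≤ ∫⁻ u in cthickening δ N, m (ball u δ) := by
      have := lintegral_setLIntegral_ball m (cthickening δ N) δ (measurable_const (a := 1))
      simp only [setLIntegral_one, one_mul] at this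
      rw [this, ← setLIntegral_const]
      refine (setLIntegral_mono' hN.measurableSet fun x hx => ?_).trans
        (setLIntegral_le_lintegral _ _)
      rw [← hball x, Measure.restrict_apply measurableSet_ball, inter_eq_left.2]
      intro y hy
      exact mem_cthickening_of_dist_le y x δ N hx (le_of_lt hy)
    have h5 : ∫⁻ u, m (ball u δ) ^ 2 ≤
        2 * ENNReal.ofReal δ * ((gauss 1)⁻¹ * (ENNReal.ofReal δ * H)) := by
      calc ∫⁻ u, m (ball u δ) ^ 2
          ≤ ∫⁻ u, ∫⁻ x in ball u δ, m (ball x (2 * δ)) ∂m := by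
            refine lintegral_mono fun u => ?_
            rw [pow_two, ← setLIntegral_const]
            refine setLIntegral_mono' measurableSet_ball fun x hx => measure_mono ?_
            intro y hy
            rw [mem_ball] at *
            linarith [dist_triangle_right y x u]
        _ = ∫⁻ x, m (ball x (2 * δ)) * (2 * ENNReal.ofReal δ) ∂m := by
            have := lintegral_setLIntegral_ball m univ δ (measurable_measure_ball m (2 * δ))
            simpa only [Measure.restrict_univ, hball] using this
        _ = 2 * ENNReal.ofReal δ * ∫⁻ x, m (ball x (2 * δ)) ∂m := by
            rw [lintegral_mul_const _ (measurable_measure_ball m (2 * δ)), mul_comm]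
        _ ≤ _ := mul_le_mul' le_rfl (h1 δ hδ)
    have h6 := sq_lintegral_mul_le (volume.restrict (cthickening δ N))
      (measurable_measure_ball m δ).aemeasurable (measurable_const (a := 1)).aemeasurable
    simp only [mul_one, one_pow, setLIntegral_one] at h6
    have h7 : (2 * ENNReal.ofReal δ * m N) ^ 2 ≤
        2 * ENNReal.ofReal δ * ((gauss 1)⁻¹ * (ENNReal.ofReal δ * H)) *
          volume (cthickening δ N) :=
      (pow_le_pow_left' h4 2).trans (h6.trans (mul_le_mul' ((setLIntegral_le_lintegral _ _).trans
        h5) le_rfl))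
    have h8 : (ENNReal.ofReal δ) ^ 2 * (2 * (2 * (m N) ^ 2)) ≤
        (ENNReal.ofReal δ) ^ 2 * (2 * (volume (cthickening δ N) * ((gauss 1)⁻¹ * H))) := by
      convert h7 using 1 <;> ring
    rw [ENNReal.mul_le_mul_iff_right (by simpa using hδ) (by finiteness),
      ENNReal.mul_le_mul_iff_right (by simp) (by simp)] at h8
    exact le_trans (le_mul_of_one_le_left' one_le_two) h8
  have h9 : Tendsto (fun δ => volume (cthickening δ N) * ((gauss 1)⁻¹ * H)) (𝓝[>] 0) (𝓝 0) := by
    have := (tendsto_measure_cthickening_of_isCompact (μ := volume) hN).mono_left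
      (nhdsWithin_le_nhds (s := Ioi 0))
    rw [hN0] at this
    simpa using ENNReal.Tendsto.mul_const this (Or.inr (ENNReal.mul_ne_top
      (ENNReal.inv_ne_top.2 (gauss_ne_zero 1)) hm))
  have h10 : (m N) ^ 2 ≤ 0 :=
    ge_of_tendsto h9 (eventually_mem_nhdsWithin.mono fun δ hδ => h3 δ hδ)
  simpa using h10

end Gaussian

end Falconer

/-! ### The averaged energy estimate -/

namespace Falconer

open Set Filter Topology

section Gap

variable {V : Type*} [NormedAddCommGroup V] [InnerProductSpace ℝ V]

/-- Integrating a Gaussian centred at `η` along the line spanned by `e` leaves a Gaussian in the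
distance from `η` to this line. -/
lemma lintegral_gauss_line {e : V} (he : ‖e‖ = 1) (η : V) :
    ∫⁻ r : ℝ, gauss (‖η - r • e‖ ^ 2) =
      (∫⁻ r : ℝ, gauss (‖r‖ ^ 2)) * gauss (‖η‖ ^ 2 - ⟪η, e⟫ ^ 2) := by
  rw [← lintegral_mul_const _ (by fun_prop),
    ← lintegral_sub_right_eq_self
      (fun r : ℝ => gauss (‖r‖ ^ 2) * gauss (‖η‖ ^ 2 - ⟪η, e⟫ ^ 2)) ⟪η, e⟫]
  refine lintegral_congr fun r => ?_
  rw [← gauss_add, @norm_sub_sq_real, norm_smul, he, inner_smul_right, Real.norm_eq_abs, mul_one,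
    Real.norm_eq_abs, sq_abs, sq_abs]
  congr 1
  ring

/-- The gap in the Cauchy-Schwarz inequality is bounded below by the squared distance of the
normalisation of `η` to one of `±e`, up to the factor `‖η‖ ^ 2 / 2`. -/
lemma gauss_gap_le {e η : V} (he : ‖e‖ = 1) (hη : η ≠ 0) :
    gauss (‖η‖ ^ 2 - ⟪η, e⟫ ^ 2) ≤
      gauss ((dist (‖η‖⁻¹ • η) e / (√2 / ‖η‖)) ^ 2) +
        gauss ((dist (-(‖η‖⁻¹ • η)) e / (√2 / ‖η‖)) ^ 2) := by
  have hρ : 0 < ‖η‖ := norm_pos_iff.2 hη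
  set ω := ‖η‖⁻¹ • η with hω
  have hω1 : ‖ω‖ = 1 := norm_smul_inv_norm hη
  have hin : ⟪η, e⟫ = ‖η‖ * ⟪ω, e⟫ := by
    rw [hω, real_inner_smul_left, mul_inv_cancel_left₀ hρ.ne']
  have hp : |⟪ω, e⟫| ≤ 1 := by simpa [hω1, he] using abs_real_inner_le_norm ω e
  rw [abs_le] at hp
  have hd : ∀ v : V, (dist v e / (√2 / ‖η‖)) ^ 2 = ‖η‖ ^ 2 * (‖v - e‖ ^ 2 / 2) := fun v => by
    rw [dist_eq_norm, div_pow, div_pow, Real.sq_sqrt zero_le_two]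
    field_simp
  rw [hd, hd, hin]
  rcases le_total 0 ⟪ω, e⟫ with h | h
  · refine le_add_right (gauss_anti ?_)
    rw [@norm_sub_sq_real, hω1, he]
    nlinarith [mul_nonneg (sq_nonneg ‖η‖) (mul_nonneg h (sub_nonneg.2 hp.2))]
  · refine le_add_left (gauss_anti ?_)
    rw [@norm_sub_sq_real, inner_neg_left, norm_neg, hω1, he]
    nlinarith [mul_nonneg (sq_nonneg ‖η‖) (mul_nonneg (neg_nonneg.2 h)
      (by linarith : (0 : ℝ) ≤ 1 + ⟪ω, e⟫))]

end Gap

section Energy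

variable {V : Type*} [NormedAddCommGroup V] [InnerProductSpace ℝ V] [FiniteDimensional ℝ V]
  [MeasurableSpace V] [BorelSpace V]

lemma lintegral_gauss_sq_ne_top : ∫⁻ η : V, gauss (‖η‖ ^ 2) ≠ ∞ := by
  have := (integrable_exp_neg_mul_sq (V := V) one_pos).lintegral_lt_top
  simpa [gauss] using this.ne

/-- The measure `μ` with Gaussian density. Its characteristic function is the convolution of that
of `μ` with a Gaussian, which allows for pointwise bounds. -/
noncomputable def damp (μ : Measure V) : Measure V :=
  μ.withDensity fun x => gauss (‖x‖ ^ 2 / 4)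

instance (μ : Measure V) [IsFiniteMeasure μ] : IsFiniteMeasure (damp μ) := by
  refine isFiniteMeasure_withDensity (ne_top_of_le_ne_top (measure_ne_top μ univ) ?_)
  rw [← lintegral_one]
  exact lintegral_mono fun x => gauss_le_one (by positivity)

/-- A form of the uncertainty principle: `|μ̂|²`, after damping, is bounded at each point by a local
average of `|μ̂|²`. -/
lemma exists_charFun_damp_le (μ : Measure V) [IsFiniteMeasure μ] :
    ∃ c : ℝ≥0∞, c ≠ ∞ ∧ ∀ ξ, ‖charFun (damp μ) ξ‖ₑ ^ 2 ≤
      c * ∫⁻ η, ‖charFun μ η‖ₑ ^ 2 * gauss (‖η - ξ‖ ^ 2) := by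
  refine ⟨∫⁻ η : V, gauss (‖η‖ ^ 2), lintegral_gauss_sq_ne_top, fun ξ => ?_⟩
  have key := integral_charFun_mul_gaussian μ one_pos ξ
  have h1 : charFun (damp μ) ξ =
      ∫ x, Complex.exp (⟪x, ξ⟫ * Complex.I) * (Real.exp (-(‖x‖ ^ 2 / (4 * 1))) : ℝ) ∂μ := by
    rw [charFun_apply, damp, integral_withDensity_eq_integral_toReal_smul (by fun_prop)
      (Eventually.of_forall fun x => (gauss_ne_top _).lt_top)]
    refine integral_congr_ae (Eventually.of_forall fun x => ?_)
    simp only [gauss, ENNReal.toReal_ofReal (Real.exp_pos _).le, Complex.real_smul, mul_one]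
    ring
  rw [← h1] at key
  have h2 : ‖charFun (damp μ) ξ‖ₑ ≤ ∫⁻ η, ‖charFun μ (η + ξ)‖ₑ * gauss (‖η‖ ^ 2) := by
    calc ‖charFun (damp μ) ξ‖ₑ ≤
        ‖(((Real.pi / 1) ^ (Module.finrank ℝ V / 2 : ℝ) : ℝ) : ℂ) * charFun (damp μ) ξ‖ₑ := by
          rw [enorm_mul]
          refine le_mul_of_one_le_left' ?_
          have h0 : (1 : ℝ) ≤ (Real.pi / 1) ^ (Module.finrank ℝ V / 2 : ℝ) :=
            Real.one_le_rpow (by linarith [Real.pi_gt_three]) (by positivity)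
          rw [← ofReal_norm, Complex.norm_real, Real.norm_of_nonneg (by positivity)]
          simpa using h0
      _ ≤ ∫⁻ η, ‖charFun μ (η + ξ) * (Real.exp (-1 * ‖η‖ ^ 2) : ℝ)‖ₑ := by
          rw [← key]
          exact enorm_integral_le_lintegral_enorm _
      _ = _ := by
          refine lintegral_congr fun η => ?_
          rw [enorm_mul, ← ofReal_norm (((Real.exp (-1 * ‖η‖ ^ 2) : ℝ) : ℂ)), Complex.norm_real,
            Real.norm_of_nonneg (Real.exp_pos _).le, gauss, neg_one_mul]
  have hsq : ∀ η : V, gauss (‖η‖ ^ 2) = gauss (‖η‖ ^ 2 / 2) ^ 2 := fun η => by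
    rw [pow_two (gauss _), ← gauss_add, add_halves]
  have hmeas : Measurable fun η => ‖charFun μ (η + ξ)‖ₑ :=
    (measurable_charFun.comp (measurable_add_const ξ)).enorm
  have h3 := sq_lintegral_mul_le (volume : Measure V)
    (f := fun η => ‖charFun μ (η + ξ)‖ₑ * gauss (‖η‖ ^ 2 / 2)) (g := fun η => gauss (‖η‖ ^ 2 / 2))
    (by fun_prop) (by fun_prop)
  simp only [mul_assoc, ← pow_two, mul_pow, ← hsq] at h3
  refine (pow_le_pow_left' h2 2).trans (h3.trans_eq ?_)
  rw [mul_comm]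
  congr 1
  rw [← lintegral_add_right_eq_self (fun η => ‖charFun μ η‖ₑ ^ 2 * gauss (‖η - ξ‖ ^ 2)) ξ]
  simp

/-- Only directions `e` at distance `O(‖η‖⁻¹)` from `±η/‖η‖` contribute to the average, so it is of
order `‖η‖⁻ˢ` for large `η`. The bound is a sum of Gaussians in `η` over dyadic scales. -/
lemma exists_average_gap_le {ν : Measure V} [IsFiniteMeasure ν] (hS : ∀ᵐ e ∂ν, ‖e‖ = 1) {s : ℝ}
    (hs : 0 < s) {C : ℝ≥0∞} (hC : C ≠ ∞)
    (hν : ∀ x r, 0 < r → ν (closedBall x r) ≤ C * ENNReal.ofReal r ^ s) :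
    ∃ c : ℝ≥0∞, c ≠ ∞ ∧ ∀ η, ∫⁻ e, gauss (‖η‖ ^ 2 - ⟪η, e⟫ ^ 2) ∂ν ≤
      c * ∑' j : ℕ, weight s j * gauss ((‖η‖ / 2 ^ j) ^ 2) := by
  obtain ⟨C', hC', hb⟩ := exists_lintegral_gauss_le hs hC hν
  set D := 2 * C' * ENNReal.ofReal (√2 * 2) ^ s with hD
  have hDtop : D ≠ ∞ := ENNReal.mul_ne_top (by finiteness)
    (ENNReal.rpow_ne_top_of_nonneg hs.le ENNReal.ofReal_ne_top)
  have hg1 : (gauss 1)⁻¹ ≠ ∞ := ENNReal.inv_ne_top.2 (gauss_ne_zero 1)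
  refine ⟨(gauss 1)⁻¹ * (ν univ + D), by finiteness, fun η => ?_⟩
  rcases le_or_gt 1 ‖η‖ with h1 | h1
  · obtain ⟨k, hk1, hk2⟩ := exists_nat_pow_near h1 one_lt_two
    have hη : η ≠ 0 := norm_pos_iff.1 (one_pos.trans_le h1)
    have hρ : 0 < ‖η‖ := norm_pos_iff.2 hη
    have hW : ∫⁻ e, gauss (‖η‖ ^ 2 - ⟪η, e⟫ ^ 2) ∂ν ≤ D * weight s (k + 1) := by
      calc ∫⁻ e, gauss (‖η‖ ^ 2 - ⟪η, e⟫ ^ 2) ∂ν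
          ≤ ∫⁻ e, (gauss ((dist (‖η‖⁻¹ • η) e / (√2 / ‖η‖)) ^ 2) +
              gauss ((dist (-(‖η‖⁻¹ • η)) e / (√2 / ‖η‖)) ^ 2)) ∂ν :=
            lintegral_mono_ae (hS.mono fun e he => gauss_gap_le he hη)
        _ ≤ C' * ENNReal.ofReal (√2 / ‖η‖) ^ s + C' * ENNReal.ofReal (√2 / ‖η‖) ^ s := by
            rw [lintegral_add_left (by fun_prop)]
            exact add_le_add (hb _ _ (by positivity)) (hb _ _ (by positivity))
        _ = 2 * C' * ENNReal.ofReal (√2 / ‖η‖) ^ s := by ring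
        _ ≤ 2 * C' * (ENNReal.ofReal (√2 * 2) * 2⁻¹ ^ (k + 1)) ^ s := by
            gcongr
            have h2 : √2 / ‖η‖ ≤ √2 * 2 * (2⁻¹ ^ (k + 1)) := by
              rw [pow_succ, div_le_iff₀ hρ]
              have : (2 : ℝ)⁻¹ ^ k * 2 ^ k = 1 := by rw [← mul_pow]; norm_num
              calc √2 = √2 * 2 * (2⁻¹ ^ k * 2⁻¹) * 2 ^ k := by linear_combination (-√2) * this
                _ ≤ _ := by gcongr
            refine (ENNReal.ofReal_le_ofReal h2).trans_eq ?_
            rw [ENNReal.ofReal_mul (by positivity), ENNReal.ofReal_pow (by positivity),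
              ENNReal.ofReal_inv_of_pos (by norm_num)]
            simp
        _ = D * weight s (k + 1) := by
            rw [ENNReal.mul_rpow_of_nonneg _ _ hs.le, weight, hD]
            ring
    have hterm : gauss 1 * weight s (k + 1) ≤
        ∑' j : ℕ, weight s j * gauss ((‖η‖ / 2 ^ j) ^ 2) := by
      refine le_trans ?_ (ENNReal.le_tsum (k + 1))
      rw [mul_comm]
      gcongr
      refine gauss_anti (pow_le_one₀ (by positivity) ?_)
      rw [div_le_one (by positivity)]
      exact hk2.le
    calc _ ≤ D * weight s (k + 1) := hW
      _ = (gauss 1)⁻¹ * D * (gauss 1 * weight s (k + 1)) := by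
          rw [mul_mul_mul_comm, ENNReal.inv_mul_cancel (gauss_ne_zero 1) (gauss_ne_top 1), one_mul]
      _ ≤ _ := by
          gcongr
          exact le_add_self
  · have hW : ∫⁻ e, gauss (‖η‖ ^ 2 - ⟪η, e⟫ ^ 2) ∂ν ≤ ν univ := by
      rw [← lintegral_one]
      refine lintegral_mono_ae (hS.mono fun e he => gauss_le_one ?_)
      have := abs_real_inner_le_norm η e
      rw [he, mul_one] at this
      rw [sub_nonneg]
      exact sq_le_sq.2 (this.trans (le_abs_self _))
    have hterm : gauss 1 ≤ ∑' j : ℕ, weight s j * gauss ((‖η‖ / 2 ^ j) ^ 2) := by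
      refine le_trans ?_ (ENNReal.le_tsum 0)
      simp only [weight, pow_zero, ENNReal.one_rpow, one_mul, div_one]
      exact gauss_anti (pow_le_one₀ (by positivity) h1.le)
    calc _ ≤ ν univ := hW
      _ = (gauss 1)⁻¹ * ν univ * gauss 1 := by
          rw [mul_right_comm, ENNReal.inv_mul_cancel (gauss_ne_zero 1) (gauss_ne_top 1), one_mul]
      _ ≤ _ := by
          gcongr
          exact le_self_add

/-- The part of `|μ̂|²` in the ball of radius `2ʲ` has integral at most of order `2^(j (d - t))`. -/
lemma exists_dyadic_energy_le {μ : Measure V} [IsFiniteMeasure μ] {t : ℝ} (ht : 0 < t) {C : ℝ≥0∞}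
    (hC : C ≠ ∞) (hμ : ∀ x r, 0 < r → μ (closedBall x r) ≤ C * ENNReal.ofReal r ^ t) :
    ∃ c : ℝ≥0∞, c ≠ ∞ ∧ ∀ j : ℕ, ∫⁻ η, ‖charFun μ η‖ₑ ^ 2 * gauss ((‖η‖ / 2 ^ j) ^ 2) ≤
      c * ((2 ^ Module.finrank ℝ V) ^ j * weight t j) := by
  obtain ⟨C', hC', hb⟩ := exists_lintegral_gauss_le ht hC hμ
  set d := Module.finrank ℝ V with hd
  have h2t : (2 : ℝ≥0∞) ^ t ≠ ∞ := ENNReal.rpow_ne_top_of_nonneg ht.le (by simp)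
  refine ⟨ENNReal.ofReal (√Real.pi ^ d) * (C' * 2 ^ t * μ univ), by finiteness, fun j => ?_⟩
  have hF := lintegral_charFun_sq_mul_gauss μ (b := ((2 : ℝ) ^ j)⁻¹ ^ 2) (by positivity)
  have h1 : ∀ η : V, ((2 : ℝ) ^ j)⁻¹ ^ 2 * ‖η‖ ^ 2 = (‖η‖ / 2 ^ j) ^ 2 := fun η => by
    rw [← mul_pow, mul_comm, div_eq_mul_inv]
  simp only [h1] at hF
  rw [hF]
  have h2 : (Real.pi / ((2 : ℝ) ^ j)⁻¹ ^ 2) ^ (d / 2 : ℝ) = √Real.pi ^ d * (2 ^ d) ^ j := by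
    have : Real.pi / ((2 : ℝ) ^ j)⁻¹ ^ 2 = (√Real.pi * 2 ^ j) ^ 2 := by
      rw [mul_pow, Real.sq_sqrt Real.pi_pos.le]
      field_simp
    rw [this, ← Real.rpow_natCast _ 2, ← Real.rpow_mul (by positivity)]
    rw [show ((2 : ℕ) : ℝ) * (d / 2) = (d : ℕ) by push_cast; ring, Real.rpow_natCast, mul_pow,
      pow_right_comm]
  rw [h2]
  have h3 : ∫⁻ x, ∫⁻ y, gauss (‖x - y‖ ^ 2 / (4 * ((2 : ℝ) ^ j)⁻¹ ^ 2)) ∂μ ∂μ ≤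
      C' * 2 ^ t * weight t j * μ univ := by
    rw [← lintegral_const]
    refine lintegral_mono fun x => ?_
    have := hb x (2 * 2⁻¹ ^ j) (by positivity)
    rw [ENNReal.ofReal_mul (by norm_num), ENNReal.ofReal_pow (by positivity),
      ENNReal.ofReal_inv_of_pos (by norm_num), ENNReal.mul_rpow_of_nonneg _ _ ht.le] at this
    rw [weight, mul_assoc]
    refine le_trans (le_of_eq (lintegral_congr fun y => ?_)) (this.trans_eq (by simp))
    rw [dist_eq_norm, div_pow, mul_pow]
    simp only [inv_pow]
    congr 3
    norm_num
  rw [ENNReal.ofReal_mul (by positivity), ENNReal.ofReal_pow (by positivity) (n := j),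
    ENNReal.ofReal_pow (by positivity) (n := d) (p := 2)]
  refine (mul_le_mul' le_rfl h3).trans_eq ?_
  simp only [ENNReal.ofReal_ofNat]
  ring

/-- The averaged energy estimate: if `μ` and `ν` satisfy ball conditions with exponents `t` and `s`
with `t + s > dim V`, and `ν` lives on the unit sphere, then for `ν`-almost every direction `e` the
projection of `damp μ` to the line spanned by `e` has a square integrable characteristic function. -/
theorem ae_lintegral_charFun_ne_top {μ ν : Measure V} [IsFiniteMeasure μ] [IsFiniteMeasure ν]
    (hS : ∀ᵐ e ∂ν, ‖e‖ = 1) {s t : ℝ} (hs : 0 < s) (ht : 0 < t)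
    (hst : (Module.finrank ℝ V : ℝ) < t + s) {C C' : ℝ≥0∞} (hC : C ≠ ∞) (hC' : C' ≠ ∞)
    (hμ : ∀ x r, 0 < r → μ (closedBall x r) ≤ C * ENNReal.ofReal r ^ t)
    (hν : ∀ x r, 0 < r → ν (closedBall x r) ≤ C' * ENNReal.ofReal r ^ s) :
    ∀ᵐ e ∂ν, ∫⁻ r : ℝ, ‖charFun (damp μ) (r • e)‖ₑ ^ 2 ≠ ∞ := by
  obtain ⟨c₁, hc₁, h₁⟩ := exists_charFun_damp_le μ
  obtain ⟨c₂, hc₂, h₂⟩ := exists_average_gap_le hS hs hC' hν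
  obtain ⟨c₃, hc₃, h₃⟩ := exists_dyadic_energy_le ht hC hμ
  set d := Module.finrank ℝ V with hd
  set c₀ := ∫⁻ r : ℝ, gauss (‖r‖ ^ 2) with hc₀
  have hc₀' : c₀ ≠ ∞ := lintegral_gauss_sq_ne_top
  have hφ : Measurable fun η => ‖charFun μ η‖ₑ ^ 2 := measurable_charFun.enorm.pow_const 2
  have hH : ∀ᵐ e ∂ν, ∫⁻ r : ℝ, ‖charFun (damp μ) (r • e)‖ₑ ^ 2 ≤
      c₁ * c₀ * ∫⁻ η, ‖charFun μ η‖ₑ ^ 2 * gauss (‖η‖ ^ 2 - ⟪η, e⟫ ^ 2) := by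
    filter_upwards [hS] with e he
    calc ∫⁻ r : ℝ, ‖charFun (damp μ) (r • e)‖ₑ ^ 2
        ≤ ∫⁻ r : ℝ, c₁ * ∫⁻ η, ‖charFun μ η‖ₑ ^ 2 * gauss (‖η - r • e‖ ^ 2) :=
          lintegral_mono fun r => h₁ _
      _ = c₁ * ∫⁻ r : ℝ, ∫⁻ η, ‖charFun μ η‖ₑ ^ 2 * gauss (‖η - r • e‖ ^ 2) :=
          lintegral_const_mul' _ _ hc₁
      _ = c₁ * ∫⁻ η, ∫⁻ r : ℝ, ‖charFun μ η‖ₑ ^ 2 * gauss (‖η - r • e‖ ^ 2) := by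
          rw [lintegral_lintegral_swap]
          refine Measurable.aemeasurable ?_
          exact (hφ.comp measurable_snd).mul (by fun_prop)
      _ = c₁ * ∫⁻ η, c₀ * (‖charFun μ η‖ₑ ^ 2 * gauss (‖η‖ ^ 2 - ⟪η, e⟫ ^ 2)) := by
          congr 1
          refine lintegral_congr fun η => ?_
          rw [lintegral_const_mul _ (by fun_prop), lintegral_gauss_line he]
          ring
      _ = _ := by rw [lintegral_const_mul' _ _ hc₀', mul_assoc]
  have hF_int : ∫⁻ e, (∫⁻ η, ‖charFun μ η‖ₑ ^ 2 * gauss (‖η‖ ^ 2 - ⟪η, e⟫ ^ 2)) ∂ν ≠ ∞ := by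
    have hle : ∫⁻ e, (∫⁻ η, ‖charFun μ η‖ₑ ^ 2 * gauss (‖η‖ ^ 2 - ⟪η, e⟫ ^ 2)) ∂ν ≤
        c₂ * (c₃ * ∑' j : ℕ, (2 ^ d * (2⁻¹ : ℝ≥0∞) ^ t * (2⁻¹ : ℝ≥0∞) ^ s) ^ j) := by
      calc ∫⁻ e, (∫⁻ η, ‖charFun μ η‖ₑ ^ 2 * gauss (‖η‖ ^ 2 - ⟪η, e⟫ ^ 2)) ∂ν
          = ∫⁻ η, ∫⁻ e, ‖charFun μ η‖ₑ ^ 2 * gauss (‖η‖ ^ 2 - ⟪η, e⟫ ^ 2) ∂ν := by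
            rw [lintegral_lintegral_swap]
            refine Measurable.aemeasurable ?_
            exact (hφ.comp measurable_snd).mul (by fun_prop)
        _ ≤ ∫⁻ η, c₂ * ∑' j : ℕ,
              weight s j * (‖charFun μ η‖ₑ ^ 2 * gauss ((‖η‖ / 2 ^ j) ^ 2)) := by
            refine lintegral_mono fun η => ?_
            rw [lintegral_const_mul _ (by fun_prop)]
            refine (mul_le_mul' le_rfl (h₂ η)).trans_eq ?_
            simp_rw [mul_left_comm (weight s _), ENNReal.tsum_mul_left]
            rw [mul_left_comm]
        _ = c₂ * ∑' j : ℕ, weight s j *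
              ∫⁻ η, ‖charFun μ η‖ₑ ^ 2 * gauss ((‖η‖ / 2 ^ j) ^ 2) := by
            rw [lintegral_const_mul' _ _ hc₂, lintegral_tsum]
            · simp_rw [lintegral_const_mul' _ _ (weight_ne_top hs _)]
            · exact fun j => ((hφ.mul (by fun_prop)).const_mul _).aemeasurable
        _ ≤ c₂ * ∑' j : ℕ, weight s j * (c₃ * ((2 ^ d) ^ j * weight t j)) := by
            gcongr with j
            exact h₃ j
        _ = _ := by
            rw [← ENNReal.tsum_mul_left (a := c₃)]
            congr 2
            ext j
            have hw : ∀ u : ℝ, weight u j = ((2⁻¹ : ℝ≥0∞) ^ u) ^ j := fun u => by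
              rw [weight, ← ENNReal.rpow_natCast, ← ENNReal.rpow_natCast, ← ENNReal.rpow_mul,
                ← ENNReal.rpow_mul, mul_comm]
            rw [hw, hw, mul_pow, mul_pow]
            ring
    refine ne_top_of_le_ne_top (ENNReal.mul_ne_top hc₂ (ENNReal.mul_ne_top hc₃ ?_)) hle
    rw [ENNReal.tsum_geometric, ENNReal.inv_ne_top]
    refine (tsub_pos_of_lt ?_).ne'
    have h2 : (2 : ℝ≥0∞) ^ d * 2⁻¹ ^ t * 2⁻¹ ^ s = 2 ^ ((d : ℝ) - (t + s)) := by
      rw [← ENNReal.rpow_natCast, ENNReal.inv_rpow, ENNReal.inv_rpow, ← ENNReal.rpow_neg,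
        ← ENNReal.rpow_neg, ← ENNReal.rpow_add _ _ (by simp) (by simp),
        ← ENNReal.rpow_add _ _ (by simp) (by simp)]
      ring_nf
    rw [h2]
    exact ENNReal.rpow_lt_one_of_one_lt_of_neg (by norm_num) (by linarith)
  have hmeas : Measurable fun e : V =>
      ∫⁻ η, ‖charFun μ η‖ₑ ^ 2 * gauss (‖η‖ ^ 2 - ⟪η, e⟫ ^ 2) := by
    refine Measurable.lintegral_prod_right ?_
    exact (hφ.comp measurable_snd).mul (by fun_prop)
  filter_upwards [hH, ae_lt_top hmeas hF_int] with e h4 h5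
  exact ne_top_of_le_ne_top (by finiteness) h4

end Energy

end Falconer

/-! ### Projections of compact sets -/

namespace Falconer

open Set Filter Topology

section Projections

variable {V : Type*} [NormedAddCommGroup V] [InnerProductSpace ℝ V]

/-- For compact `K` the length of the projection of `K` is upper semicontinuous in the direction. -/
lemma upperSemicontinuous_volume_image {K : Set V} (hK : IsCompact K) :
    UpperSemicontinuous fun e : V => volume ((fun x => ⟪e, x⟫) '' K) := by
  intro e₀ y hy
  obtain ⟨U, hKU, hU, hUy⟩ := ((fun x => ⟪e₀, x⟫) '' K).exists_isOpen_lt_of_lt y hy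
  have h := hK.eventually_forall_of_forall_eventually (x₀ := e₀) (P := fun e x => ⟪e, x⟫ ∈ U)
    fun x hx => by
      have hc : Continuous fun p : V × V => ⟪p.1, p.2⟫ := by fun_prop
      exact hc.continuousAt.eventually (hU.mem_nhds (hKU ⟨x, hx, rfl⟩))
  filter_upwards [h] with e he
  refine (measure_mono ?_).trans_lt hUy
  rintro _ ⟨x, hx, rfl⟩
  exact he x hx

variable [MeasurableSpace V] [BorelSpace V]

lemma charFun_map_inner (μ : Measure V) (e : V) (r : ℝ) :
    charFun (μ.map fun x => ⟪e, x⟫) r = charFun μ (r • e) := by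
  have hc : Continuous fun x : V => ⟪e, x⟫ := by fun_prop
  rw [charFun_apply, charFun_apply, integral_map hc.measurable.aemeasurable (by fun_prop)]
  refine integral_congr_ae (Eventually.of_forall fun x => ?_)
  simp only [inner_smul_right, real_inner_comm x e, RCLike.inner_apply, conj_trivial]

/-- If the projection of `damp μ` in direction `e` has square integrable characteristic function,
then `μ` does not charge a compact set whose projection in direction `e` is null. -/
lemma measure_eq_zero_of_projection [FiniteDimensional ℝ V] {μ : Measure V} [IsFiniteMeasure μ]
    {K : Set V} (hK : IsCompact K) {e : V}
    (h0 : volume ((fun x => ⟪e, x⟫) '' K) = 0)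
    (he : ∫⁻ r : ℝ, ‖charFun (damp μ) (r • e)‖ₑ ^ 2 ≠ ∞) : μ K = 0 := by
  have hc : Continuous fun x : V => ⟪e, x⟫ := by fun_prop
  have hN := hK.image hc
  have h1 : (damp μ).map (fun x => ⟪e, x⟫) ((fun x => ⟪e, x⟫) '' K) = 0 := by
    refine measure_eq_zero_of_lintegral_charFun ?_ hN h0
    simpa only [charFun_map_inner] using he
  rw [Measure.map_apply hc.measurable hN.measurableSet] at h1
  have h2 : μ ≪ damp μ := withDensity_absolutelyContinuous' (by fun_prop)
    (Eventually.of_forall fun x => gauss_ne_zero _)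
  exact h2 (measure_mono_null (subset_preimage_image _ K) h1)

end Projections

end Falconer

/-! ### The exceptional set -/

/-- Falconer's exceptional set estimate: if `A ⊆ ℝⁿ` is a Borel set with
`dim A > 1`, then the set of unit vectors `e ∈ S^{n-1}` for which the projection
`P_e(A)` has zero Lebesgue measure has Hausdorff dimension at most `n - dim A`. -/
theorem falconer_exceptional_projections (n : ℕ) (hn : 2 ≤ n)
    (A : Set (EuclideanSpace ℝ (Fin n))) (hA : MeasurableSet A)
    (hdim : 1 < dimH A) :
    dimH {e : EuclideanSpace ℝ (Fin n) | e ∈ sphere 0 1 ∧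
        volume ((fun x => ⟪e, x⟫) '' A) = 0}
      ≤ (n : ℝ≥0∞) - dimH A := by
  by_contra! hlt
  have hle : ∀ S : Set (EuclideanSpace ℝ (Fin n)), dimH S ≤ n := fun S => by
    have := dimH_mono (Set.subset_univ S)
    rwa [Real.dimH_univ_eq_finrank, finrank_euclideanSpace_fin] at this
  -- exponents `t < dim A` and `s < dim E` with `n < t + s`, where `E` is the exceptional set
  obtain ⟨t, htA, s, hsE, hts⟩ := ENNReal.exists_lt_add_of_lt_add
    (ENNReal.lt_add_of_sub_lt_left (Or.inl (ENNReal.natCast_ne_top n)) hlt)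
    (one_pos.trans hdim).ne' (zero_le.trans_lt hlt).ne'
  lift t to NNReal using htA.ne_top
  lift s to NNReal using hsE.ne_top
  have ht : 0 < t := by
    rw [pos_iff_ne_zero]
    rintro rfl
    rw [ENNReal.coe_zero, zero_add] at hts
    exact (hts.trans hsE).not_ge (hle _)
  have hs : 0 < s := by
    rw [pos_iff_ne_zero]
    rintro rfl
    rw [ENNReal.coe_zero, add_zero] at hts
    exact (hts.trans htA).not_ge (hle _)
  obtain ⟨K, hKA, hK, μ, hμ, hμK, C, hC, hμC⟩ := Falconer.frostman hA ht htA
  -- the exceptional set of the compact set `K` contains that of `A`, and it is Borel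
  have hmeas : MeasurableSet {e : EuclideanSpace ℝ (Fin n) | e ∈ sphere 0 1 ∧
      volume ((fun x => ⟪e, x⟫) '' K) = 0} :=
    isClosed_sphere.measurableSet.inter
      ((Falconer.upperSemicontinuous_volume_image hK).measurable (measurableSet_singleton 0))
  have hsK := hsE.trans_le (dimH_mono
    (show _ ⊆ {e : EuclideanSpace ℝ (Fin n) | e ∈ sphere 0 1 ∧
      volume ((fun x => ⟪e, x⟫) '' K) = 0} from
      fun e he => ⟨he.1, measure_mono_null (Set.image_mono hKA) he.2⟩))
  obtain ⟨L, hL, -, ν, hν, hνL, C', hC', hνC⟩ := Falconer.frostman hmeas hs hsK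
  have hae : ∀ᵐ e ∂ν, e ∈ L := mem_ae_iff.2 hνL
  have hst : (Module.finrank ℝ (EuclideanSpace ℝ (Fin n)) : ℝ) < t + s := by
    rw [finrank_euclideanSpace_fin]
    exact_mod_cast hts
  obtain ⟨e, heL, he⟩ := (hae.and (Falconer.ae_lintegral_charFun_ne_top
    (hae.mono fun e he => by simpa using (hL he).1) (NNReal.coe_pos.2 hs) (NNReal.coe_pos.2 ht)
    hst hC hC' hμC hνC)).exists
  have hK0 := Falconer.measure_eq_zero_of_projection hK (hL heL).2 he
  have h1 : μ Set.univ ≤ μ K + μ Kᶜ := by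
    rw [← Set.union_compl_self K]
    exact measure_union_le _ _
  rw [hK0, hμK, measure_univ] at h1
  simp at h1
end

section
/- Let n ≥ 2 and let A ⊂ ℝⁿ be a Borel set with dim A > 2. Then dim {e ∈ S^{n-1} : the interior of P_e(A) is empty} ≤ n + 1 - dim A. -/
/-!
Suppose that the exceptional set of directions has dimension larger than `n + 1 - dim A`. Then there
are exponents `s < dim A` and `t` with `s + t > n + 1` such that the following objects exist, by
Frostman's lemma (`frostman`): a nonzero measure `μ` on a compact set `K ⊆ A` with
`μ (B(x, r)) ≲ r ^ s`, and a nonzero measure `ν` on a set `F` of exceptional directions for `K` with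
`ν (B(e, r)) ≲ r ^ t`. Replacing `A` by `K` only enlarges the exceptional set, and makes it Borel
(`measurableSet_interior_image_eq_empty`).

The contradiction comes from `exists_direction`. The energy estimate (`lintegral_normSq_charFun_le`)
reads `∫ |μ̂(y)|² exp(-|y|²/R²) dy ≲ R ^ (n - s)`. Multiplying `μ` by a Gaussian makes `μ̂` essentially
constant at scale `1`, and the part of `ν` seen from a unit ball at distance `R` from the origin has
mass `≲ R ^ (-t)`. Therefore (`lintegral_annulus_le`)
`∫ ∫_R^{2R} |μ̂(r e)|² dr dν(e) ≲ R ^ (n - s - t)`, and Cauchy–Schwarz bounds the corresponding `L¹`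
integral by the square root of `R ^ (n + 1 - s - t)`, which is summable over dyadic `R`. Hence for
`ν`-almost every `e` the function `r ↦ μ̂(r e)` is integrable. It is the Fourier transform of the
projection of the damped `μ` in the direction `e`, a measure carried by the compact set `P_e(K)`. A nonzero measure
with integrable Fourier transform has a continuous density, so `P_e(K)` has interior
(`interior_nonempty_of_integrable_charFun`), although `e` is exceptional.

Frostman's lemma is proved on the binary tree. The content of a set of infinite binary sequences is
strongly subadditive up to the choice of covers (`join_add_meet_le`), hence continuous along increasing
unions (`content_iUnion_le`), so that analytic sets contain compact subsets of positive content
(`exists_compact_content`). Distributing mass down the tree in proportion to the content of the part of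
the compact set below each node gives the measure (`frostman_cantor`), which is transported to `ℝⁿ` by
interleaving binary digits.
-/

open MeasureTheory Metric
open scoped ENNReal RealInnerProductSpace

namespace PeresSchlag

open Set Filter Topology
open scoped FourierTransform

/-! ### Content on the binary tree -/

/-- A finite binary word. As in `PiNat.res`, the most recent letter comes first, so that the
ancestors of a word in the binary tree are its suffixes. -/
abbrev Word := List (Fin 2)
/-- Infinite binary sequences, the boundary of the binary tree. -/
abbrev Cantor := ℕ → Fin 2

instance wordMeasurableSpace : MeasurableSpace Word := ⊤

instance : DiscreteMeasurableSpace Word := ⟨fun _ => trivial⟩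

/-- The measure on words giving mass `θ ^ |w|` to the word `w`. The cost of a cover is its
`wordMeasure`, so that the measure library applies to it. -/
noncomputable def wordMeasure (θ : ℝ≥0∞) : Measure Word :=
  Measure.sum fun w => θ ^ w.length • Measure.dirac w

/-- The cylinders of the words in `W` cover `B`. -/
def Covers (W : Set Word) (B : Set Cantor) : Prop := ∀ x ∈ B, ∃ k, PiNat.res x k ∈ W

/-- The analogue on the tree of Hausdorff content: the least total weight of a family of
cylinders covering `B`, a cylinder at depth `k` having weight `θ ^ k`. -/
noncomputable def content (θ : ℝ≥0∞) (B : Set Cantor) : ℝ≥0∞ :=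
  ⨅ (W : Set Word) (_ : Covers W B), wordMeasure θ W

/-- The cylinder of all sequences which start with the word `w`. -/
def cyl (w : Word) : Set Cantor := {x | PiNat.res x w.length = w}

lemma wordMeasure_apply (θ : ℝ≥0∞) (W : Set Word) :
    wordMeasure θ W = ∑' w : W, θ ^ (w : Word).length := by
  rw [wordMeasure, Measure.sum_apply _ (MeasurableSet.of_discrete),
    tsum_subtype W (fun w : Word => θ ^ w.length)]
  refine tsum_congr fun w => ?_
  rw [Measure.smul_apply, Measure.dirac_apply' _ (MeasurableSet.of_discrete), smul_eq_mul]
  by_cases h : w ∈ W <;> simp [h]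

lemma wordMeasure_singleton (θ : ℝ≥0∞) (w : Word) : wordMeasure θ {w} = θ ^ w.length := by
  rw [wordMeasure_apply, tsum_singleton w (fun w : Word => θ ^ w.length)]

lemma mem_cyl_res (x : Cantor) (k : ℕ) : x ∈ cyl (PiNat.res x k) := by
  simp [cyl, PiNat.res_length]

lemma mem_cyl_iff {x : Cantor} {w : Word} : x ∈ cyl w ↔ PiNat.res x w.length = w := Iff.rfl

lemma cyl_res (x : Cantor) (k : ℕ) : cyl (PiNat.res x k) = PiNat.cylinder x k := by
  rw [PiNat.cylinder_eq_res]; ext y; simp [cyl, PiNat.res_length]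

lemma isOpen_cyl (w : Word) : IsOpen (cyl w) := by
  rcases (cyl w).eq_empty_or_nonempty with h | ⟨x, hx⟩
  · rw [h]; exact isOpen_empty
  · rw [mem_cyl_iff] at hx
    rw [← hx, cyl_res]
    exact PiNat.isOpen_cylinder _ _ _

lemma cyl_cons_union (w : Word) : cyl w = cyl (0 :: w) ∪ cyl (1 :: w) := by
  ext x
  simp only [cyl, mem_ofPred_eq, List.length_cons, PiNat.res_succ, mem_union, List.cons.injEq]
  have : x w.length = 0 ∨ x w.length = 1 := by
    generalize x w.length = d; revert d; decide
  tauto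

lemma content_mono {θ : ℝ≥0∞} {A B : Set Cantor} (h : A ⊆ B) : content θ A ≤ content θ B :=
  le_iInf₂ fun W hW => iInf₂_le W fun x hx => hW x (h hx)

lemma content_le {θ : ℝ≥0∞} {B : Set Cantor} {W : Set Word} (h : Covers W B) :
    content θ B ≤ wordMeasure θ W := iInf₂_le W h

lemma content_le_pow {θ : ℝ≥0∞} {B : Set Cantor} {w : Word} (h : B ⊆ cyl w) :
    content θ B ≤ θ ^ w.length := by
  rw [← wordMeasure_singleton]
  exact content_le fun x hx => ⟨w.length, h hx⟩

lemma content_le_one {θ : ℝ≥0∞} {B : Set Cantor} : content θ B ≤ 1 := by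
  simpa using content_le_pow (θ := θ) (B := B) (w := []) (fun x _ => by simp [cyl])

lemma exists_covers {θ : ℝ≥0∞} {B : Set Cantor} {t : ℝ≥0∞} (h : content θ B < t) :
    ∃ W, Covers W B ∧ wordMeasure θ W < t := by
  simpa [content, iInf_lt_iff] using h

lemma content_union_le {θ : ℝ≥0∞} (A B : Set Cantor) :
    content θ (A ∪ B) ≤ content θ A + content θ B := by
  refine ENNReal.le_of_forall_pos_le_add fun ε hε _ => ?_
  have hε' : (ε / 2 : ℝ≥0∞) ≠ 0 := by simp [hε.ne']
  obtain ⟨W, hW, h1⟩ := exists_covers (θ := θ) (B := A)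
    (ENNReal.lt_add_right (content_le_one.trans_lt ENNReal.one_lt_top).ne hε')
  obtain ⟨V, hV, h2⟩ := exists_covers (θ := θ) (B := B)
    (ENNReal.lt_add_right (content_le_one.trans_lt ENNReal.one_lt_top).ne hε')
  calc content θ (A ∪ B) ≤ wordMeasure θ (W ∪ V) := content_le (by
        rintro x (hx | hx)
        · obtain ⟨k, hk⟩ := hW x hx; exact ⟨k, Or.inl hk⟩
        · obtain ⟨k, hk⟩ := hV x hx; exact ⟨k, Or.inr hk⟩)
    _ ≤ wordMeasure θ W + wordMeasure θ V := measure_union_le _ _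
    _ ≤ (content θ A + ε / 2) + (content θ B + ε / 2) := add_le_add h1.le h2.le
    _ = content θ A + content θ B + ε := by
        rw [add_add_add_comm, ENNReal.add_halves]

lemma content_empty {θ : ℝ≥0∞} : content θ ∅ = 0 := by
  have := content_le (θ := θ) (B := ∅) (W := ∅) (fun x hx => hx.elim)
  simpa using this

lemma res_suffix (x : Cantor) {a b : ℕ} (h : a ≤ b) : PiNat.res x a <:+ PiNat.res x b := by
  induction b, h using Nat.le_induction with
  | base => exact List.suffix_refl _
  | succ b _ ih => exact ih.trans (by rw [PiNat.res_succ]; exact List.suffix_cons _ _)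

lemma eq_res_of_suffix {x : Cantor} {v : Word} {b : ℕ} (h : v <:+ PiNat.res x b) :
    v = PiNat.res x v.length ∧ v.length ≤ b := by
  have hl : v.length ≤ b := by simpa [PiNat.res_length] using h.length_le
  refine ⟨?_, hl⟩
  have h2 := res_suffix x hl
  have h3 : v <:+ PiNat.res x v.length :=
    List.suffix_of_suffix_length_le h h2 (by simp [PiNat.res_length])
  exact h3.eq_of_length (by simp [PiNat.res_length])

/-- Words of `W ∪ V` kept when redundant ones are discarded: a word of `W` is dropped when it has
an ancestor (or itself) in `V`, a word of `V` when it has a proper ancestor in `W`. It still covers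
everything which `W` or `V` covers. -/
def join (W V : Set Word) : Set Word :=
  {w ∈ W | ¬ ∃ v ∈ V, v <:+ w} ∪ {v ∈ V | ¬ ∃ w ∈ W, w <:+ v ∧ w ≠ v}

/-- The words discarded in `join W V`. They cover the points covered by both `W` and `V`. -/
def meet (W V : Set Word) : Set Word :=
  {w ∈ W | ∃ v ∈ V, v <:+ w} ∪ {v ∈ V | ∃ w ∈ W, w <:+ v ∧ w ≠ v}

lemma wordMeasure_sep_add (θ : ℝ≥0∞) (W : Set Word) (p : Word → Prop) :
    wordMeasure θ {w ∈ W | ¬ p w} + wordMeasure θ {w ∈ W | p w} = wordMeasure θ W := by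
  rw [add_comm]
  exact measure_inter_add_sdiff (t := {w | p w}) W (MeasurableSet.of_discrete)

/-- With `Covers.meet`, this yields the strong subadditivity of `content`. -/
lemma join_add_meet_le (θ : ℝ≥0∞) (W V : Set Word) :
    wordMeasure θ (join W V) + wordMeasure θ (meet W V) ≤ wordMeasure θ W + wordMeasure θ V := by
  rw [← wordMeasure_sep_add θ W (fun w => ∃ v ∈ V, v <:+ w),
    ← wordMeasure_sep_add θ V (fun v => ∃ w ∈ W, w <:+ v ∧ w ≠ v), add_add_add_comm]
  exact add_le_add (measure_union_le _ _) (measure_union_le _ _)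

/-- Along a branch, the shortest word of `join W V` is at least as short as any word of
`W ∪ V`. -/
lemma exists_le_mem_join {W V : Set Word} {x : Cantor} {k : ℕ}
    (h : PiNat.res x k ∈ W ∪ V) : ∃ j ≤ k, PiNat.res x j ∈ join W V := by
  classical
  have hex : ∃ j, PiNat.res x j ∈ W ∪ V := ⟨k, h⟩
  refine ⟨Nat.find hex, Nat.find_min' hex h, ?_⟩
  have hj := Nat.find_spec hex
  have hmin : ∀ v ∈ W ∪ V, v <:+ PiNat.res x (Nat.find hex) → v = PiNat.res x (Nat.find hex) := by
    intro v hv hs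
    obtain ⟨h1, h2⟩ := eq_res_of_suffix hs
    have h3 : Nat.find hex ≤ v.length := Nat.find_min' hex (by rwa [← h1])
    rw [le_antisymm h3 h2]
    exact h1
  by_cases hV : PiNat.res x (Nat.find hex) ∈ V
  · right
    refine ⟨hV, ?_⟩
    rintro ⟨w, hw, hs, hne⟩
    exact hne (hmin w (Or.inl hw) hs)
  · left
    refine ⟨hj.resolve_right hV, ?_⟩
    rintro ⟨v, hv, hs⟩
    exact hV (hmin v (Or.inr hv) hs ▸ hv)

lemma Covers.meet {W V : Set Word} {A : Set Cantor} (hW : Covers W A) (hV : Covers V A) :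
    Covers (meet W V) A := by
  intro x hx
  obtain ⟨a, ha⟩ := hW x hx
  obtain ⟨b, hb⟩ := hV x hx
  rcases le_or_gt b a with h | h
  · exact ⟨a, Or.inl ⟨ha, _, hb, res_suffix x h⟩⟩
  · refine ⟨b, Or.inr ⟨hb, _, ha, res_suffix x h.le, fun he => ?_⟩⟩
    have := congrArg List.length he
    simp only [PiNat.res_length] at this
    omega

/-- `content` is continuous along increasing unions. Almost optimal covers of the `A i` are joined
successively; strong subadditivity keeps the accumulated excess below `∑ δ i`. Along a branch the
shortest covering word can only get shorter, hence is eventually constant, so the words that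
eventually always belong to the joins cover the union. -/
lemma content_iUnion_le {θ : ℝ≥0∞} {A : ℕ → Set Cantor} (hA : Monotone A) :
    content θ (⋃ i, A i) ≤ ⨆ i, content θ (A i) := by
  refine ENNReal.le_of_forall_pos_le_add fun ε hε _ => ?_
  obtain ⟨δ, hδ0, hδ⟩ := ENNReal.exists_pos_sum_of_countable' (ι := ℕ)
    (ENNReal.coe_ne_zero.2 hε.ne')
  have hfin : ∀ B, content θ B ≠ ∞ := fun B => (content_le_one.trans_lt ENNReal.one_lt_top).ne
  choose C hC hCτ using fun i => exists_covers (ENNReal.lt_add_right (hfin (A i)) (hδ0 i).ne')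
  let D : ℕ → Set Word := fun k => Nat.rec (C 0) (fun k Dk => join Dk (C (k + 1))) k
  have hDs : ∀ k, D (k + 1) = join (D k) (C (k + 1)) := fun k => rfl
  -- the shortest element of `D k` along `x` can only get shorter
  have hDle : ∀ x k a, PiNat.res x a ∈ D k → ∃ j ≤ a, PiNat.res x j ∈ D (k + 1) :=
    fun x k a h => exists_le_mem_join (Or.inl h)
  have hDcov : ∀ k, Covers (D k) (A k) := by
    intro k
    cases k with
    | zero => exact hC 0
    | succ k =>
      intro x hx
      obtain ⟨a, ha⟩ := hC (k + 1) x hx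
      obtain ⟨j, _, hj⟩ := exists_le_mem_join (W := D k) (Or.inr ha)
      exact ⟨j, hj⟩
  have hDτ : ∀ k, wordMeasure θ (D k) ≤ content θ (A k) + ∑ i ∈ Finset.range (k + 1), δ i := by
    intro k
    induction k with
    | zero => simpa using! (hCτ 0).le
    | succ k ih =>
      have hCk : Covers (C (k + 1)) (A k) := fun x hx => hC (k + 1) x (hA (Nat.le_succ k) hx)
      have h1 := content_le (θ := θ) ((hDcov k).meet hCk)
      refine (ENNReal.add_le_add_iff_right (hfin (A k))).1 ?_
      calc wordMeasure θ (D (k + 1)) + content θ (A k)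
          ≤ wordMeasure θ (D (k + 1)) + wordMeasure θ (meet (D k) (C (k + 1))) := by gcongr
        _ ≤ wordMeasure θ (D k) + wordMeasure θ (C (k + 1)) := join_add_meet_le _ _ _
        _ ≤ (content θ (A k) + ∑ i ∈ Finset.range (k + 1), δ i)
            + (content θ (A (k + 1)) + δ (k + 1)) := add_le_add ih (hCτ (k + 1)).le
        _ = _ := by rw [Finset.sum_range_succ _ (k + 1)]; ring
  let E : ℕ → Set Word := fun k => ⋂ j ≥ k, D j
  have hEmono : Monotone E := fun a b hab => biInter_mono (fun j (hj : b ≤ j) => hab.trans hj)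
    fun _ _ => le_rfl
  have hcov : Covers (⋃ k, E k) (⋃ i, A i) := by
    classical
    intro x hx
    obtain ⟨i, hi⟩ := mem_iUnion.1 hx
    have hex : ∀ k, ∃ a, PiNat.res x a ∈ D (i + k) ∧ ∀ b, PiNat.res x b ∈ D (i + k) → a ≤ b :=
      fun k => by
        have h := hDcov (i + k) x (hA (Nat.le_add_right i k) hi)
        exact ⟨Nat.find h, Nat.find_spec h, fun b hb => Nat.find_min' h hb⟩
    choose ℓ hℓ hmin using hex
    have hanti : Antitone ℓ := antitone_nat_of_succ_le fun k => by
      obtain ⟨j, hj, hj'⟩ := hDle x (i + k) _ (hℓ k)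
      exact (hmin (k + 1) j hj').trans hj
    -- the lengths decrease, so from the index `N` of their minimum on they are constant
    let N := Function.argmin ℓ
    refine ⟨ℓ N, mem_iUnion.2 ⟨i + N, mem_iInter₂.2 fun j hj => ?_⟩⟩
    obtain ⟨m, rfl⟩ := Nat.exists_eq_add_of_le hj
    have h2 : ℓ N = ℓ (N + m) :=
      le_antisymm (not_lt.1 (Function.not_lt_argmin ℓ _)) (hanti (Nat.le_add_right N m))
    rw [h2, add_assoc]
    exact hℓ (N + m)
  calc content θ (⋃ i, A i) ≤ wordMeasure θ (⋃ k, E k) := content_le hcov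
    _ = ⨆ k, wordMeasure θ (E k) := hEmono.measure_iUnion
    _ ≤ (⨆ i, content θ (A i)) + ε := iSup_le fun k => by
        calc wordMeasure θ (E k) ≤ wordMeasure θ (D k) := measure_mono (iInter₂_subset k le_rfl)
          _ ≤ content θ (A k) + ∑ i ∈ Finset.range (k + 1), δ i := hDτ k
          _ ≤ _ := add_le_add (le_iSup (fun i => content θ (A i)) k)
              ((ENNReal.sum_le_tsum _).trans hδ.le)

/-! ### Capacitability and mass distribution -/

/-- Choquet's capacitability argument for `content`: an analytic set, image of `ℕ → ℕ` under a
continuous map, is approximated from inside by the image of a compact box. -/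
lemma exists_compact_content {θ : ℝ≥0∞} {B : Set Cantor} (hB : AnalyticSet B) {t : ℝ≥0∞}
    (ht : t < content θ B) : ∃ K ⊆ B, IsCompact K ∧ t ≤ content θ K := by
  rw [AnalyticSet] at hB
  rcases hB with rfl | ⟨f, hf, rfl⟩
  · simp [content_empty] at ht
  have step : ∀ (k : ℕ) (S : Set (ℕ → ℕ)), t < content θ (f '' S) →
      ∃ j, t < content θ (f '' (S ∩ {α | α k ≤ j})) := by
    intro k S hS
    have hmono : Monotone fun j => f '' (S ∩ {α | α k ≤ j}) := fun a b hab =>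
      image_mono (inter_subset_inter_right _ fun α (hα : α k ≤ a) => hα.trans hab)
    have hU : f '' S = ⋃ j, f '' (S ∩ {α | α k ≤ j}) := by
      rw [← image_iUnion, ← inter_iUnion]
      congr 1
      refine (inter_eq_left.2 fun α _ => mem_iUnion.2 ⟨α k, le_refl (α k)⟩).symm
    rw [hU] at hS
    exact lt_iSup_iff.1 (hS.trans_le (content_iUnion_le hmono))
  choose! j hj using step
  let T : ℕ → Set (ℕ → ℕ) := fun k =>
    Nat.rec univ (fun k S => S ∩ {α | α k ≤ j k S}) k
  have hTs : ∀ k, T (k + 1) = T k ∩ {α | α k ≤ j k (T k)} := fun k => rfl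
  have hT : ∀ k, t < content θ (f '' T k) := by
    intro k
    induction k with
    | zero => simpa [T] using ht
    | succ k ih => rw [hTs]; exact hj k _ ih
  let N : ℕ → ℕ := fun k => j k (T k)
  have hTN : ∀ k, T k = {α | ∀ i < k, α i ≤ N i} := by
    intro k
    induction k with
    | zero => simp [T]
    | succ k ih =>
      rw [hTs]
      ext α
      have : α ∈ T k ↔ ∀ i < k, α i ≤ N i := by rw [ih]; rfl
      rw [mem_inter_iff, this]
      constructor
      · rintro ⟨h1, h2⟩ i hi
        rcases Nat.lt_succ_iff_lt_or_eq.1 hi with h | rfl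
        exacts [h1 i h, h2]
      · intro h
        exact ⟨fun i hi => h i (hi.trans (Nat.lt_succ_self k)), h k (Nat.lt_succ_self k)⟩
  let L : Set (ℕ → ℕ) := {α | ∀ i, α i ≤ N i}
  have hL : IsCompact L := by
    have : L = pi univ fun i => Set.Iic (N i) := by ext; simp [L, Pi.le_def]
    rw [this]
    exact isCompact_univ_pi fun i => (finite_Iic (N i)).isCompact
  refine ⟨f '' L, image_subset_range _ _, hL.image hf, le_iInf₂ fun W hW => ?_⟩
  -- the open set covered by `W` contains the image of some `T k`
  have hopen : IsOpen (⋃ w ∈ W, cyl w) := isOpen_biUnion fun w _ => isOpen_cyl w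
  have hcov : ∀ x ∈ ⋃ w ∈ W, cyl w, ∃ k, PiNat.res x k ∈ W := by
    intro x hx
    obtain ⟨w, hw, hx⟩ := mem_iUnion₂.1 hx
    exact ⟨w.length, by rwa [mem_cyl_iff.1 hx]⟩
  by_contra! hlt
  have hne : ∀ k, ∃ α ∈ T k, f α ∉ ⋃ w ∈ W, cyl w := by
    intro k
    by_contra h
    push Not at h
    have := content_le (θ := θ) (W := W) (B := f '' T k) (by
      rintro _ ⟨α, hα, rfl⟩
      exact hcov _ (h α hα))
    exact absurd (hT k) (not_lt.2 (this.trans hlt.le))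
  choose α hα hαf using hne
  -- truncation puts the `α k` into the compact box without changing their first coordinates
  let β : ℕ → ℕ → ℕ := fun k i => min (α k i) (N i)
  have hβ : ∀ k, β k ∈ L := fun k i => min_le_right _ _
  obtain ⟨b, hb, φ, hφ, hlim⟩ := hL.tendsto_subseq hβ
  have hlim2 : Tendsto (fun k => α (φ k)) atTop (𝓝 b) := by
    rw [tendsto_pi_nhds] at hlim ⊢
    intro i
    refine (hlim i).congr' ?_
    filter_upwards [eventually_gt_atTop i] with k hk
    have h1 := hα (φ k)
    rw [hTN] at h1
    exact min_eq_left (h1 i (hk.trans_le hφ.le_apply))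
  have hclosed : IsClosed (f ⁻¹' (⋃ w ∈ W, cyl w)ᶜ) := (hopen.isClosed_compl).preimage hf
  have hmem := hclosed.mem_of_tendsto hlim2 (Eventually.of_forall fun k => hαf (φ k))
  obtain ⟨k, hk⟩ := hW _ (mem_image_of_mem f hb)
  exact hmem (mem_iUnion₂.2 ⟨_, hk, mem_cyl_res _ _⟩)

open scoped NNReal in
/-- A function on the tree which is subadditive under branching dominates an additive one with the
same total mass: at each node, split the mass proportionally to the values of `g`. -/
lemma exists_mass (g : Word → ℝ≥0) (hg : ∀ w, g w ≤ g (0 :: w) + g (1 :: w)) :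
    ∃ m : Word → ℝ≥0, m [] = g [] ∧ (∀ w, m w = m (0 :: w) + m (1 :: w)) ∧ ∀ w, m w ≤ g w := by
  let m : Word → ℝ≥0 := fun w =>
    List.rec (g []) (fun b w mw => mw * (g (b :: w) / (g (0 :: w) + g (1 :: w)))) w
  have hm : ∀ b w, m (b :: w) = m w * (g (b :: w) / (g (0 :: w) + g (1 :: w))) := fun b w => rfl
  have hle : ∀ w, m w ≤ g w := by
    intro w
    induction w with
    | nil => exact le_rfl
    | cons b w ih =>
      rw [hm, mul_div_assoc']
      refine div_le_of_le_mul₀ zero_le zero_le ?_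
      rw [mul_comm]
      gcongr
      exact ih.trans (hg w)
  refine ⟨m, rfl, fun w => ?_, hle⟩
  rw [hm, hm, ← mul_add, ← add_div]
  rcases eq_or_ne (g (0 :: w) + g (1 :: w)) 0 with h | h
  · have : m w = 0 := le_antisymm ((hle w).trans ((hg w).trans h.le)) zero_le
    simp [this]
  · rw [div_self h, mul_one]

open scoped NNReal in
/-- An additive mass on the tree comes from a measure on the Cantor space. It is the image of
Lebesgue measure on `[0, m [])`, the words being coded by nested half-open intervals of length
`m w`. -/
lemma exists_measure_of_mass (m : Word → ℝ≥0) (hm : ∀ w, m w = m (0 :: w) + m (1 :: w)) :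
    ∃ μ : Measure Cantor, ∀ w, μ (cyl w) = m w := by
  classical
  -- `a w` is the left endpoint of the interval coding the word `w`
  let a : Word → ℝ := fun w =>
    List.rec 0 (fun b w aw => if b = 0 then aw else aw + m (0 :: w)) w
  have ha0 : ∀ w, a (0 :: w) = a w := fun w => if_pos rfl
  have ha1 : ∀ w, a (1 :: w) = a w + m (0 :: w) := fun w => if_neg (by decide)
  let R : ℝ → ℕ → Word := fun u k =>
    Nat.rec [] (fun _ w => (if u < a w + m (0 :: w) then 0 else 1) :: w) k
  let Φ : ℝ → Cantor := fun u k => if u < a (R u k) + m (0 :: R u k) then 0 else 1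
  have hR : ∀ u k, PiNat.res (Φ u) k = R u k := by
    intro u k
    induction k with
    | zero => rfl
    | succ k ih =>
      rw [PiNat.res_succ, ih]
  have key : ∀ w : Word, {u ∈ Ico (0 : ℝ) (m []) | R u w.length = w} = Ico (a w) (a w + m w) := by
    intro w
    induction w with
    | nil =>
      ext u
      simp [R, a]
    | cons b w ih =>
      have hstep : ∀ u, R u (b :: w).length = b :: w ↔
          R u w.length = w ∧ (if u < a w + m (0 :: w) then (0 : Fin 2) else 1) = b := by
        intro u
        change (if u < a (R u w.length) + m (0 :: R u w.length) then (0 : Fin 2) else 1)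
          :: R u w.length = b :: w ↔ _
        rw [List.cons.injEq, and_comm]
        refine and_congr_right fun h => ?_
        rw [h]
      have h2 : {u ∈ Ico (0 : ℝ) (m []) | R u (b :: w).length = b :: w} =
          Ico (a w) (a w + m w) ∩
            {u | (if u < a w + m (0 :: w) then (0 : Fin 2) else 1) = b} := by
        rw [← ih]
        ext u
        simp only [mem_ofPred_eq, mem_inter_iff, hstep]
        tauto
      rw [h2]
      have hmw : (m w : ℝ) = m (0 :: w) + m (1 :: w) := by rw [hm w]; push_cast; rfl
      have n0 : (0 : ℝ) ≤ m (0 :: w) := (m (0 :: w)).2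
      have n1 : (0 : ℝ) ≤ m (1 :: w) := (m (1 :: w)).2
      have hb : b = 0 ∨ b = 1 := by clear hstep h2; revert b; decide
      rcases hb with rfl | rfl
      · ext u
        have hite : (if u < a w + m (0 :: w) then (0 : Fin 2) else 1) = 0 ↔ u < a w + m (0 :: w) := by
          split_ifs with h <;> simp [h]
        rw [ha0, mem_inter_iff, mem_ofPred_eq, hite, mem_Ico, mem_Ico]
        constructor
        · rintro ⟨⟨h1, h2⟩, h3⟩; exact ⟨h1, h3⟩
        · rintro ⟨h1, h2⟩; exact ⟨⟨h1, by linarith⟩, h2⟩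
      · ext u
        have hite : (if u < a w + m (0 :: w) then (0 : Fin 2) else 1) = 1 ↔ a w + m (0 :: w) ≤ u := by
          split_ifs with h
          · simpa using h
          · simpa using h
        rw [ha1, mem_inter_iff, mem_ofPred_eq, hite, mem_Ico, mem_Ico]
        constructor
        · rintro ⟨⟨h1, h2⟩, h3⟩; exact ⟨h3, by linarith⟩
        · rintro ⟨h1, h2⟩; exact ⟨⟨by linarith, by linarith⟩, h1⟩
  have hΦ : Measurable Φ := by
    have hRm : ∀ k, Measurable fun u => R u k := by
      intro k
      induction k with
      | zero => exact measurable_const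
      | succ k ih =>
        have hF : Measurable fun p : Word × ℝ =>
            ((if p.2 < a p.1 + m (0 :: p.1) then (0 : Fin 2) else 1) :: p.1 : Word) := by
          refine measurable_from_prod_countable_right fun w => ?_
          have : Measurable fun u : ℝ => (if u < a w + m (0 :: w) then (0 : Fin 2) else 1) :=
            Measurable.ite measurableSet_Iio measurable_const measurable_const
          exact (Measurable.of_discrete (f := fun b : Fin 2 => (b :: w : Word))).comp this
        exact hF.comp (ih.prodMk measurable_id)
    refine measurable_pi_iff.2 fun k => ?_
    have hF : Measurable fun p : Word × ℝ =>
        (if p.2 < a p.1 + m (0 :: p.1) then (0 : Fin 2) else 1) :=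
      measurable_from_prod_countable_right fun w =>
        Measurable.ite (measurableSet_Iio (a := a w + m (0 :: w))) measurable_const
          measurable_const
    exact hF.comp ((hRm k).prodMk measurable_id)
  refine ⟨(volume.restrict (Ico 0 (m [] : ℝ))).map Φ, fun w => ?_⟩
  rw [Measure.map_apply hΦ (isOpen_cyl w).measurableSet,
    Measure.restrict_apply (hΦ (isOpen_cyl w).measurableSet)]
  have : Φ ⁻¹' cyl w ∩ Ico (0 : ℝ) (m []) = {u ∈ Ico (0 : ℝ) (m []) | R u w.length = w} := by
    ext u
    simp only [mem_inter_iff, mem_preimage, mem_cyl_iff, hR, mem_ofPred_eq]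
    tauto
  rw [this, key, Real.volume_Ico]
  simp

/-- Frostman's lemma on the Cantor space, for analytic sets. -/
theorem frostman_cantor {θ : ℝ≥0∞} {B : Set Cantor} (hB : AnalyticSet B)
    (hpos : 0 < content θ B) :
    ∃ K ⊆ B, IsCompact K ∧ ∃ μ : Measure Cantor, μ univ ≠ 0 ∧ μ Kᶜ = 0 ∧
      ∀ w, μ (cyl w) ≤ θ ^ w.length := by
  obtain ⟨t, ht0, ht⟩ := exists_between hpos
  obtain ⟨K, hKB, hK, htK⟩ := exists_compact_content hB ht
  have hfin : ∀ B, content θ B ≠ ∞ := fun B => (content_le_one.trans_lt ENNReal.one_lt_top).ne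
  obtain ⟨m, hm0, hm, hmg⟩ := exists_mass (fun w => (content θ (K ∩ cyl w)).toNNReal) (fun w => by
    rw [← ENNReal.toNNReal_add (hfin _) (hfin _)]
    refine ENNReal.toNNReal_mono (ENNReal.add_ne_top.2 ⟨hfin _, hfin _⟩) ?_
    rw [cyl_cons_union, inter_union_distrib_left]
    exact content_union_le _ _)
  obtain ⟨μ, hμ⟩ := exists_measure_of_mass m hm
  have hle : ∀ w, μ (cyl w) ≤ content θ (K ∩ cyl w) := fun w => by
    rw [hμ, ← ENNReal.coe_toNNReal (hfin (K ∩ cyl w))]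
    exact ENNReal.coe_le_coe.2 (hmg w)
  have hnil : cyl [] = univ := by ext; simp [cyl]
  refine ⟨K, hKB, hK, μ, ?_, ?_, fun w => (hle w).trans (content_le_pow inter_subset_right)⟩
  · rw [← hnil, hμ, hm0, ENNReal.coe_toNNReal (hfin _), hnil, inter_univ]
    exact (ht0.trans_le htK).ne'
  · have hsub : Kᶜ ⊆ ⋃ w ∈ {w : Word | Disjoint K (cyl w)}, cyl w := by
      intro x hx
      obtain ⟨k, hk⟩ := PiNat.exists_disjoint_cylinder hK.isClosed hx
      rw [← cyl_res] at hk
      exact mem_iUnion₂.2 ⟨PiNat.res x k, hk, mem_cyl_res _ _⟩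
    refine measure_mono_null hsub ((measure_biUnion_null_iff (to_countable _)).2 fun w hw => ?_)
    have := hle w
    rw [(show Disjoint K (cyl w) from hw).inter_eq, content_empty] at this
    exact le_antisymm this zero_le

/-! ### Frostman's lemma in Euclidean space -/

/-- The `i`-th coordinate in `[0, 1]` coded by `x`: its binary digits are the letters of `x` at the
positions congruent to `i` modulo `n`. -/
noncomputable def coord (n : ℕ) (x : Cantor) (i : Fin n) : ℝ :=
  Real.ofDigits fun k => x (n * k + i)

/-- The point of the unit cube with corner `z` whose coordinates are interleaved in `x`. -/
noncomputable def point {n : ℕ} (z : Fin n → ℤ) (x : Cantor) : EuclideanSpace ℝ (Fin n) :=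
  WithLp.toLp 2 fun i => z i + coord n x i

lemma continuous_coord (n : ℕ) (i : Fin n) : Continuous fun x => coord n x i :=
  Real.continuous_ofDigits.comp (by fun_prop)

lemma continuous_point {n : ℕ} (z : Fin n → ℤ) : Continuous (point z) := by
  refine (PiLp.continuous_toLp 2 _).comp (continuous_pi fun i => ?_)
  exact continuous_const.add (continuous_coord n i)

lemma exists_point {n : ℕ} (p : EuclideanSpace ℝ (Fin n)) : ∃ x, point (fun i => ⌊p i⌋) x = p := by
  refine ⟨fun m => if h : n = 0 then 0 else
    Real.digits (Int.fract (p ⟨m % n, Nat.mod_lt _ (Nat.pos_of_ne_zero h)⟩)) 2 (m / n), ?_⟩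
  ext i
  have hn : n ≠ 0 := (i.pos).ne'
  have h2 : ∀ k, (⟨(n * k + i) % n, Nat.mod_lt _ i.pos⟩ : Fin n) = i := fun k => by
    ext; simp [Nat.mod_eq_of_lt i.2]
  have h3 : ∀ k, (n * k + i) / n = k := fun k => by
    rw [Nat.mul_add_div i.pos, Nat.div_eq_of_lt i.2, add_zero]
  change (⌊p i⌋ : ℝ) + coord n _ i = p i
  simp only [coord, hn, dite_false, h2, h3]
  rw [show (fun k => Real.digits (Int.fract (p i)) 2 k) = Real.digits (Int.fract (p i)) 2 from rfl,
    Real.ofDigits_digits (by norm_num) ⟨Int.fract_nonneg _, Int.fract_lt_one _⟩]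
  exact Int.floor_add_fract _

/-- Sequences agreeing on `n * k` letters code points agreeing on `k` binary digits of each
coordinate. -/
lemma dist_point_le {n : ℕ} (z : Fin n → ℤ) {x y : Cantor} {k : ℕ}
    (h : ∀ m < n * k, x m = y m) : dist (point z x) (point z y) ≤ √n * (2 ^ k)⁻¹ := by
  have hi : ∀ i, dist (point z x i) (point z y i) ≤ ((2 : ℝ) ^ k)⁻¹ := by
    intro i
    change dist ((z i : ℝ) + coord n x i) (z i + coord n y i) ≤ _
    rw [dist_add_left, Real.dist_eq]
    refine (Real.abs_ofDigits_sub_ofDigits_le (n := k) fun l hl => h _ ?_).trans (by simp)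
    calc n * l + i < n * l + n := by have := i.2; omega
      _ = n * (l + 1) := by ring
      _ ≤ n * k := Nat.mul_le_mul_left _ hl
  rw [EuclideanSpace.dist_eq]
  calc √(∑ i, dist (point z x i) (point z y i) ^ 2) ≤ √(∑ _i : Fin n, (((2 : ℝ) ^ k)⁻¹) ^ 2) := by
        gcongr with i; exact hi i
    _ = √n * (2 ^ k)⁻¹ := by
        rw [Finset.sum_const, Finset.card_univ, Fintype.card_fin, nsmul_eq_mul,
          Real.sqrt_mul (by positivity), Real.sqrt_sq (by positivity)]

/-- The factor `2 ^ (-1/n)` by which the diameter of `point z (cyl w)` shrinks, up to constants,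
with each letter of `w`. -/
noncomputable def ratio (n : ℕ) : ℝ := (1 / 2 : ℝ) ^ (1 / (n : ℝ))

lemma ratio_pos (n : ℕ) : 0 < ratio n := by unfold ratio; positivity

lemma ratio_le_one (n : ℕ) : ratio n ≤ 1 :=
  Real.rpow_le_one (by norm_num) (by norm_num) (by positivity)

lemma ratio_pow {n : ℕ} (hn : 0 < n) : ratio n ^ n = 1 / 2 := by
  rw [ratio, ← Real.rpow_natCast, ← Real.rpow_mul (by norm_num), one_div_mul_cancel (by positivity),
    Real.rpow_one]

lemma ratio_pow_mul {n : ℕ} (hn : 0 < n) (k : ℕ) : ratio n ^ (n * k) = (2 ^ k)⁻¹ := by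
  rw [pow_mul, ratio_pow hn, one_div, inv_pow]

/-- The weight per letter for which `content` is comparable to the `s`-dimensional Hausdorff
content of the image under `point z`. -/
noncomputable def theta (n : ℕ) (s : ℝ) : ℝ≥0∞ := ENNReal.ofReal (ratio n ^ s)

lemma theta_pow (n : ℕ) (s : ℝ) (m : ℕ) : theta n s ^ m = ENNReal.ofReal ((ratio n ^ m) ^ s) := by
  have := (ratio_pos n).le
  rw [theta, ← ENNReal.ofReal_pow (by positivity), ← Real.rpow_natCast, ← Real.rpow_natCast,
    ← Real.rpow_mul this, ← Real.rpow_mul this, mul_comm]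

/-- The factor `2` absorbs the incomplete block of `n` letters at the end of `w`. -/
lemma ediam_point_cyl {n : ℕ} (hn : 0 < n) (z : Fin n → ℤ) {s : ℝ} (hs : 0 < s) (w : Word) :
    ediam (point z '' cyl w) ^ s ≤ ENNReal.ofReal ((2 * √n) ^ s) * theta n s ^ w.length := by
  have hr := ratio_pos n
  have h1 : ediam (point z '' cyl w) ≤ ENNReal.ofReal (2 * √n * ratio n ^ w.length) := by
    refine ediam_le ?_
    rintro _ ⟨x, hx, rfl⟩ _ ⟨y, hy, rfl⟩
    rw [edist_dist]
    refine ENNReal.ofReal_le_ofReal ?_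
    have hxy : ∀ m < w.length, x m = y m := by
      rw [mem_cyl_iff] at hx hy
      exact fun m hm => PiNat.res_eq_res.1 (hx.trans hy.symm) hm
    refine (dist_point_le z (k := w.length / n) fun m hm =>
      hxy m (hm.trans_le (Nat.mul_div_le _ _))).trans ?_
    rw [← ratio_pow_mul hn]
    have h3 : ratio n ^ (n * (w.length / n) + n) ≤ ratio n ^ w.length := by
      refine pow_le_pow_of_le_one hr.le (ratio_le_one n) ?_
      have := Nat.lt_mul_div_succ w.length hn
      rw [mul_add, mul_one] at this
      exact this.le
    rw [pow_add, ratio_pow hn] at h3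
    have := Real.sqrt_nonneg n
    nlinarith
  calc ediam (point z '' cyl w) ^ s ≤ ENNReal.ofReal (2 * √n * ratio n ^ w.length) ^ s := by
        gcongr
    _ = _ := by
        rw [theta_pow, ENNReal.ofReal_rpow_of_nonneg (by positivity) hs.le,
          Real.mul_rpow (by positivity) (by positivity), ENNReal.ofReal_mul (by positivity)]

/-- If the content is zero, covers of arbitrarily small weight exist. Their members are then
individually small in diameter, so the Hausdorff measure, and not only the Hausdorff content,
vanishes. -/
lemma hausdorffMeasure_image_eq_zero {n : ℕ} (hn : 0 < n) (z : Fin n → ℤ) {s : ℝ} (hs : 0 < s)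
    {B : Set Cantor} (hB : content (theta n s) B = 0) : μH[s] (point z '' B) = 0 := by
  let ε : ℕ → ℝ≥0∞ := fun j => (j : ℝ≥0∞)⁻¹
  have hε : ∀ j, content (theta n s) B < ε j := fun j => by
    rw [hB]; exact ENNReal.inv_pos.2 (ENNReal.natCast_ne_top j)
  choose W hW hWε using fun j => exists_covers (hε j)
  set C := ENNReal.ofReal ((2 * √n) ^ s)
  have hC : C ≠ ∞ := ENNReal.ofReal_ne_top
  have hlim : Tendsto (fun j => C * ε j) atTop (𝓝 0) := by
    simpa using ENNReal.Tendsto.const_mul ENNReal.tendsto_inv_nat_nhds_zero (Or.inr hC)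
  have hlim2 : Tendsto (fun j => (C * ε j) ^ s⁻¹) atTop (𝓝 0) := by
    have := (ENNReal.continuous_rpow_const (y := s⁻¹)).tendsto 0
    rw [ENNReal.zero_rpow_of_pos (by positivity)] at this
    exact this.comp hlim
  have key := Measure.hausdorffMeasure_le_liminf_tsum (ι := fun j => W j) s (point z '' B)
    (l := atTop) (fun j => (C * ε j) ^ s⁻¹) hlim2 (fun j w => point z '' cyl w)
    (Eventually.of_forall fun j w => by
      rw [ENNReal.le_rpow_inv_iff hs]
      refine (ediam_point_cyl hn z hs w).trans ?_
      gcongr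
      refine le_trans ?_ (hWε j).le
      rw [← wordMeasure_singleton]
      exact measure_mono (singleton_subset_iff.2 w.2))
    (Eventually.of_forall fun j => by
      rintro _ ⟨x, hx, rfl⟩
      obtain ⟨k, hk⟩ := hW j x hx
      exact mem_iUnion.2 ⟨⟨_, hk⟩, mem_image_of_mem _ (mem_cyl_res x k)⟩)
  refine le_antisymm (key.trans ?_) zero_le
  have h2 : ∀ j, ∑' w : W j, ediam (point z '' cyl w) ^ s ≤ C * ε j := fun j => by
    calc ∑' w : W j, ediam (point z '' cyl w) ^ s
        ≤ ∑' w : W j, C * theta n s ^ (w : Word).length :=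
          ENNReal.tsum_le_tsum fun w => ediam_point_cyl hn z hs w
      _ = C * wordMeasure (theta n s) (W j) := by rw [ENNReal.tsum_mul_left, wordMeasure_apply]
      _ ≤ C * ε j := by gcongr; exact (hWε j).le
  calc liminf (fun j => ∑' w : W j, ediam (point z '' cyl w) ^ s) atTop
      ≤ liminf (fun j => C * ε j) atTop := liminf_le_liminf (Eventually.of_forall h2)
    _ = 0 := hlim.liminf_eq

/-- The integer whose binary expansion consists of the first `k` digits of `d`, i.e. the index of
the dyadic interval of length `2 ^ (-k)` designated by them. -/
def dyadicIndex (d : ℕ → Fin 2) : ℕ → ℤ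
  | 0 => 0
  | k + 1 => 2 * dyadicIndex d k + (d k : ℕ)

lemma dyadicIndex_inj {d e : ℕ → Fin 2} {k : ℕ} (h : dyadicIndex d k = dyadicIndex e k) :
    ∀ l < k, d l = e l := by
  induction k with
  | zero => intro l hl; omega
  | succ k ih =>
    simp only [dyadicIndex] at h
    have h1 := (d k).2
    have h2 := (e k).2
    intro l hl
    rcases Nat.lt_succ_iff_lt_or_eq.1 hl with hl | rfl
    · exact ih (by omega) l hl
    · ext; omega

lemma dyadicIndex_spec (d : ℕ → Fin 2) (k : ℕ) :
    (dyadicIndex d k : ℝ) ≤ 2 ^ k * Real.ofDigits d ∧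
      2 ^ k * Real.ofDigits d ≤ dyadicIndex d k + 1 := by
  have h : (2 : ℝ) ^ k * ∑ i ∈ Finset.range k, Real.ofDigitsTerm d i = dyadicIndex d k := by
    induction k with
    | zero => simp [dyadicIndex]
    | succ k ih =>
      rw [Finset.sum_range_succ, mul_add, pow_succ', mul_assoc, ih, Real.ofDigitsTerm, dyadicIndex]
      push_cast
      field_simp
      ring
  rw [Real.ofDigits_eq_sum_add_ofDigits d k, mul_add, h]
  push_cast
  rw [mul_inv_cancel_left₀ (by positivity)]
  have h1 := Real.ofDigits_nonneg fun i => d (i + k)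
  have h2 := Real.ofDigits_le_one fun i => d (i + k)
  constructor <;> linarith

/-- A ball of radius at most `2 ^ (-k)` meets at most `5 ^ n` dyadic cubes of side `2 ^ (-k)` as
coded by cylinders at depth `n * k`. -/
lemma measure_preimage_closedBall {n : ℕ} (hn : 0 < n) (z : Fin n → ℤ) {θ : ℝ≥0∞}
    {μ : Measure Cantor} (hμ : ∀ w, μ (cyl w) ≤ θ ^ w.length) (p : EuclideanSpace ℝ (Fin n))
    {k : ℕ} {r : ℝ} (hr : r ≤ (2 ^ k)⁻¹) :
    μ (point z ⁻¹' closedBall p r) ≤ 5 ^ n * θ ^ (n * k) := by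
  let J : Cantor → Fin n → ℤ := fun x i => dyadicIndex (fun l => x (n * l + i)) k
  let q : Fin n → ℝ := fun i => 2 ^ k * (p i - z i)
  let I : Finset (Fin n → ℤ) := Fintype.piFinset fun i => Finset.Icc ⌈q i - 2⌉ (⌈q i - 2⌉ + 4)
  have hsub : point z ⁻¹' closedBall p r ⊆ ⋃ a ∈ I, {x | J x = a} := by
    intro x hx
    refine mem_iUnion₂.2 ⟨J x, ?_, rfl⟩
    rw [Fintype.mem_piFinset]
    intro i
    have h1 : |(z i + coord n x i) - p i| ≤ (2 ^ k)⁻¹ := by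
      have h2 := PiLp.dist_apply_le (point z x) p i
      rw [Real.dist_eq] at h2
      exact h2.trans ((mem_closedBall.1 hx).trans hr)
    have h2 : |2 ^ k * coord n x i - q i| ≤ 1 := by
      have : 2 ^ k * coord n x i - q i = 2 ^ k * ((z i + coord n x i) - p i) := by
        simp only [q]; ring
      rw [this, abs_mul, abs_of_pos (by positivity)]
      calc (2 : ℝ) ^ k * _ ≤ 2 ^ k * (2 ^ k)⁻¹ := by gcongr
        _ = 1 := mul_inv_cancel₀ (by positivity)
    obtain ⟨h3, h4⟩ := dyadicIndex_spec (fun l => x (n * l + i)) k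
    rw [abs_le] at h2
    change (J x i : ℝ) ≤ 2 ^ k * coord n x i at h3
    change 2 ^ k * coord n x i ≤ (J x i : ℝ) + 1 at h4
    rw [Finset.mem_Icc]
    constructor
    · rw [Int.ceil_le]; linarith
    · have h5 : (J x i : ℝ) < ((⌈q i - 2⌉ + 4 + 1 : ℤ) : ℝ) := by
        push_cast
        have := Int.le_ceil (q i - 2)
        have : (J x i : ℝ) ≤ q i + 1 := by linarith
        linarith
      have := Int.cast_lt.1 h5
      omega
  have hcard : I.card = 5 ^ n := by
    rw [Fintype.card_piFinset]
    simp [Int.card_Icc, add_assoc]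
  calc μ (point z ⁻¹' closedBall p r) ≤ μ (⋃ a ∈ I, {x | J x = a}) := measure_mono hsub
    _ ≤ ∑ a ∈ I, μ {x | J x = a} := measure_biUnion_finset_le _ _
    _ ≤ ∑ a ∈ I, θ ^ (n * k) := by
        refine Finset.sum_le_sum fun a _ => ?_
        rcases {x | J x = a}.eq_empty_or_nonempty with h | ⟨y, hy⟩
        · simp [h]
        · refine (measure_mono ?_).trans ((hμ (PiNat.res y (n * k))).trans
            (by rw [PiNat.res_length]))
          intro x hx
          rw [mem_cyl_iff, PiNat.res_length, PiNat.res_eq_res]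
          intro m hm
          have hxy : J x = J y := Eq.trans hx hy.symm
          have h1 := dyadicIndex_inj (congrFun hxy ⟨m % n, Nat.mod_lt _ hn⟩) (m / n)
            (Nat.div_lt_of_lt_mul hm)
          simpa [Nat.div_add_mod] using h1
    _ = 5 ^ n * θ ^ (n * k) := by simp [hcard]

/-- Frostman's lemma: a Borel set of positive `s`-dimensional Hausdorff measure supports, on a
compact subset, a nonzero measure with `μ (B(p, r)) ≤ C r ^ s`. -/
theorem frostman {n : ℕ} (hn : 0 < n) {s : ℝ} (hs : 0 < s) {A : Set (EuclideanSpace ℝ (Fin n))}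
    (hA : MeasurableSet A) (hpos : μH[s] A ≠ 0) :
    ∃ K ⊆ A, IsCompact K ∧ ∃ μ : Measure (EuclideanSpace ℝ (Fin n)), IsFiniteMeasure μ ∧
      μ univ ≠ 0 ∧ μ Kᶜ = 0 ∧
      ∃ C : ℝ, 0 < C ∧ ∀ p r, 0 < r → μ (closedBall p r) ≤ ENNReal.ofReal (C * r ^ s) := by
  -- one of the countably many unit cubes meets `A` in a set of positive content
  have hcov : A ⊆ ⋃ z : Fin n → ℤ, point z '' (point z ⁻¹' A) := by
    intro p hp
    obtain ⟨x, hx⟩ := exists_point p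
    exact mem_iUnion.2 ⟨_, x, by simpa [mem_preimage, hx] using hp, hx⟩
  obtain ⟨z, hz⟩ : ∃ z : Fin n → ℤ, content (theta n s) (point z ⁻¹' A) ≠ 0 := by
    by_contra! h
    refine hpos (measure_mono_null hcov (measure_iUnion_null fun z => ?_))
    exact hausdorffMeasure_image_eq_zero hn z hs (h z)
  have : PolishSpace (Fin 2) := inferInstance
  have : PolishSpace Cantor := inferInstanceAs (PolishSpace (ℕ → Fin 2))
  have hB : AnalyticSet (point z ⁻¹' A) := ((continuous_point z).measurable hA).analyticSet
  obtain ⟨K, hKB, hK, μ, hμ0, hμK, hμ⟩ := frostman_cantor hB (pos_iff_ne_zero.2 hz)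
  have hmeas := (continuous_point z).measurable
  have hμ1 : μ univ ≤ 1 := by
    have := hμ []
    rwa [show cyl [] = univ by ext; simp [cyl], List.length_nil, pow_zero] at this
  refine ⟨point z '' K, image_subset_iff.2 hKB, hK.image (continuous_point z), μ.map (point z),
    ⟨?_⟩, ?_, ?_, 5 ^ n * 2 ^ s, by positivity, fun p r hr => ?_⟩
  · rw [Measure.map_apply hmeas MeasurableSet.univ, preimage_univ]
    exact hμ1.trans_lt ENNReal.one_lt_top
  · rwa [Measure.map_apply hmeas MeasurableSet.univ, preimage_univ]
  · rw [Measure.map_apply hmeas (hK.image (continuous_point z)).isClosed.measurableSet.compl]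
    exact measure_mono_null (fun x hx hxK => hx (mem_image_of_mem _ hxK)) hμK
  · rw [Measure.map_apply hmeas isClosed_closedBall.measurableSet]
    have h5 : (1 : ℝ) ≤ 5 ^ n := one_le_pow₀ (by norm_num)
    rcases le_or_gt r 1 with h | h
    · obtain ⟨k, hk1, hk2⟩ := exists_nat_pow_near_of_lt_one hr h (y := (1 / 2 : ℝ)) (by norm_num)
        (by norm_num)
      have := measure_preimage_closedBall hn z hμ p (k := k) (r := r) (by simpa using hk2)
      refine this.trans ?_
      rw [theta_pow, ratio_pow_mul hn, show (5 : ℝ≥0∞) ^ n = ENNReal.ofReal (5 ^ n) by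
        rw [ENNReal.ofReal_pow (by norm_num)]; simp, ← ENNReal.ofReal_mul (by positivity)]
      refine ENNReal.ofReal_le_ofReal ?_
      rw [mul_assoc, ← Real.mul_rpow (by norm_num) hr.le]
      gcongr
      rw [pow_succ] at hk1
      rw [← inv_pow, ← one_div]
      linarith
    · refine (measure_mono (subset_univ _)).trans (hμ1.trans ?_)
      rw [ENNReal.one_le_ofReal]
      have h2 : (1 : ℝ) ≤ 2 ^ s := Real.one_le_rpow (by norm_num) hs.le
      have h3 : (1 : ℝ) ≤ r ^ s := Real.one_le_rpow h.le hs.le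
      nlinarith [one_le_mul_of_one_le_of_one_le h5 h2]

/-! ### Measures on the line with integrable Fourier transform -/

/-- Gaussian regularization of Fourier inversion for a measure on the line: the regularized
inversion integral at `x` is the convolution of the measure with a concentrated Gaussian. -/
lemma integral_charFun_mul_gaussian (m : Measure ℝ) [IsFiniteMeasure m] (x : ℝ) {ε : ℝ}
    (hε : 0 < ε) :
    ∫ t : ℝ, charFun m t * Complex.exp (-(t * x) * Complex.I) * Complex.exp (-ε * t ^ 2) =
      ∫ y, ((Real.pi / ε : ℂ)) ^ (1 / 2 : ℂ) * Complex.exp (-((y - x : ℝ) : ℂ) ^ 2 / (4 * ε)) ∂m := by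
  have h1 : ∀ t : ℝ, charFun m t * Complex.exp (-(t * x) * Complex.I) * Complex.exp (-ε * t ^ 2) =
      ∫ y, Complex.exp (Complex.I * ((y - x : ℝ) : ℂ) * t) * Complex.exp (-ε * t ^ 2) ∂m := by
    intro t
    rw [charFun_apply_real, ← integral_mul_const, ← integral_mul_const]
    congr 1 with y
    rw [← Complex.exp_add]
    congr 2
    push_cast
    ring
  simp_rw [h1]
  rw [integral_integral_swap]
  · congr 1 with y
    exact fourierIntegral_gaussian (by simpa using hε) _
  · have h2 : Integrable (fun t : ℝ => Real.exp (-ε * t ^ 2)) := integrable_exp_neg_mul_sq hε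
    have h3 := h2.mul_prod (integrable_const (1 : ℝ) (μ := m))
    refine h3.mono' (by fun_prop) (Eventually.of_forall fun p => ?_)
    simp [Function.uncurry, Complex.norm_exp, ← Complex.ofReal_pow]

/-- If a nonzero measure on the line has an integrable Fourier transform, then a closed set
carrying it has nonempty interior. Otherwise the complement is dense; the inversion integral vanishes
there by `integral_charFun_mul_gaussian`, hence everywhere by continuity. So the Fourier transform of
`charFun m` is zero, and inversion gives `charFun m = 0`. -/
theorem interior_nonempty_of_integrable_charFun (m : Measure ℝ) [IsFiniteMeasure m] (hm : m ≠ 0)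
    {P : Set ℝ} (hP : IsClosed P) (hmP : m Pᶜ = 0) (hcf_int : Integrable (charFun m)) :
    (interior P).Nonempty := by
  by_contra hne
  rw [not_nonempty_iff_eq_empty, interior_eq_empty_iff_dense_compl] at hne
  set h : ℝ → ℂ := fun x => ∫ t : ℝ, charFun m t * Complex.exp (-(t * x) * Complex.I) with hh
  have hnorm : ∀ t x : ℝ, ‖Complex.exp (-(t * x) * Complex.I)‖ = 1 := fun t x => by
    simp [Complex.norm_exp]
  have hcont : Continuous h := by
    refine continuous_of_dominated (bound := fun t => ‖charFun m t‖) ?_ ?_ hcf_int.norm ?_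
    · exact fun x => hcf_int.aestronglyMeasurable.mul (by fun_prop)
    · exact fun x => Eventually.of_forall fun t => by rw [norm_mul, hnorm, mul_one]
    · exact Eventually.of_forall fun t => by fun_prop
  have hoff : ∀ x ∈ Pᶜ, h x = 0 := by
    intro x hx
    obtain ⟨δ, hδ, hball⟩ := Metric.isOpen_iff.1 hP.isOpen_compl x hx
    let ε : ℕ → ℝ := fun k => ((k : ℝ) + 1)⁻¹
    have hε : ∀ k, 0 < ε k := fun k => by positivity
    have hεlim : Tendsto ε atTop (𝓝 0) := by
      simpa [ε, one_div] using tendsto_one_div_add_atTop_nhds_zero_nat (𝕜 := ℝ)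
    have l1 : Tendsto (fun k => ∫ t : ℝ, charFun m t * Complex.exp (-(t * x) * Complex.I) *
        Complex.exp (-(ε k : ℂ) * t ^ 2)) atTop (𝓝 (h x)) := by
      refine tendsto_integral_of_dominated_convergence (fun t => ‖charFun m t‖) ?_ hcf_int.norm ?_ ?_
      · exact fun k => (hcf_int.aestronglyMeasurable.mul (by fun_prop)).mul (by fun_prop)
      · intro k
        refine Eventually.of_forall fun t => ?_
        rw [norm_mul, norm_mul, hnorm, mul_one]
        refine mul_le_of_le_one_right (norm_nonneg _) ?_
        rw [Complex.norm_exp, Real.exp_le_one_iff]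
        have : (-(ε k : ℂ) * t ^ 2).re = - (ε k * t ^ 2) := by
          simp [← Complex.ofReal_pow]
        rw [this]
        have := hε k
        have : 0 ≤ ε k * t ^ 2 := by positivity
        linarith
      · refine Eventually.of_forall fun t => ?_
        have : Tendsto (fun k => charFun m t * Complex.exp (-(t * x) * Complex.I) *
          Complex.exp (-(ε k : ℂ) * t ^ 2)) atTop (𝓝 (charFun m t * Complex.exp (-(t * x) * Complex.I) *
          Complex.exp (-((0 : ℝ) : ℂ) * t ^ 2))) := by
          have hc : Continuous fun e : ℝ => Complex.exp (-(e : ℂ) * (t : ℂ) ^ 2) := by fun_prop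
          exact ((hc.tendsto 0).comp hεlim).const_mul _
        simpa using this
    have l2 : Tendsto (fun k => ∫ t : ℝ, charFun m t * Complex.exp (-(t * x) * Complex.I) *
        Complex.exp (-(ε k : ℂ) * t ^ 2)) atTop (𝓝 0) := by
      simp_rw [fun k => integral_charFun_mul_gaussian m x (hε k)]
      rw [tendsto_zero_iff_norm_tendsto_zero]
      refine squeeze_zero (g := fun k : ℕ => √Real.pi * m.real univ *
        (((k : ℝ) + 1) * Real.exp (-(δ ^ 2 / 4) * ((k : ℝ) + 1)))) (fun _ => norm_nonneg _) ?_ ?_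
      · intro k
        have hae : ∀ᵐ y ∂m, ‖((Real.pi / ε k : ℂ)) ^ (1 / 2 : ℂ) *
            Complex.exp (-((y - x : ℝ) : ℂ) ^ 2 / (4 * ε k))‖ ≤
            √Real.pi * (((k : ℝ) + 1) * Real.exp (-(δ ^ 2 / 4) * ((k : ℝ) + 1))) := by
          filter_upwards [measure_eq_zero_iff_ae_notMem.1 hmP] with y hy
          have hy' : δ ≤ |y - x| := by
            by_contra hlt
            exact hy (hball (by rwa [mem_ball, Real.dist_eq, ← not_le]))
          rw [norm_mul, ← mul_assoc]
          refine mul_le_mul ?_ ?_ (norm_nonneg _) (by positivity)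
          · rw [← Complex.ofReal_div, Complex.norm_cpow_eq_rpow_re_of_pos (by have := hε k; positivity)]
            simp only [Complex.div_re, Complex.one_re]
            norm_num
            rw [← Real.sqrt_eq_rpow]
            simp only [ε, div_inv_eq_mul]
            rw [Real.sqrt_mul Real.pi_pos.le]
            gcongr
            rw [Real.sqrt_le_left (by positivity)]
            nlinarith [(Nat.cast_nonneg k : (0:ℝ) ≤ k)]
          · rw [Complex.norm_exp]
            gcongr
            have : (-((y - x : ℝ) : ℂ) ^ 2 / (4 * ε k)) = ((-(y - x) ^ 2 / (4 * ε k) : ℝ) : ℂ) := by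
              push_cast; ring
            rw [this, Complex.ofReal_re]
            have h4 : δ ^ 2 ≤ (y - x) ^ 2 := by
              rw [← sq_abs (y - x)]; gcongr
            have : -(y - x) ^ 2 / (4 * ε k) = -((y - x) ^ 2 / 4) * ((k : ℝ) + 1) := by
              simp only [ε]; field_simp
            rw [this]
            gcongr
        refine (norm_integral_le_of_norm_le_const hae).trans (le_of_eq (by ring))
      · have := tendsto_rpow_mul_exp_neg_mul_atTop_nhds_zero 1 (δ ^ 2 / 4) (by positivity)
        have h5 := (this.comp (tendsto_atTop_add_const_right atTop (1 : ℝ)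
          (tendsto_natCast_atTop_atTop (R := ℝ)))).const_mul (√Real.pi * m.real univ)
        simpa [Function.comp_def] using h5
    exact tendsto_nhds_unique l1 l2
  have hzero : h = 0 := hcont.ext_on hne continuous_zero hoff
  have hcf : Continuous (charFun m) := continuous_charFun
  -- `h` is the Fourier transform of `charFun m`, up to normalization of the variable
  have hF : 𝓕 (charFun m) = 0 := by
    ext w
    rw [Real.fourier_eq']
    have := congrFun hzero (2 * Real.pi * w)
    simp only [hh] at this
    rw [Pi.zero_apply] at this ⊢
    rw [← this]
    congr 1 with t
    simp only [smul_eq_mul]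
    rw [mul_comm]
    congr 2
    simp
    ring
  have := hcf.fourierInv_fourier_eq hcf_int (by rw [hF]; exact integrable_zero _ _ _)
  have h0 := congrFun this 0
  rw [hF, charFun_zero] at h0
  have h1 : m.real univ = 0 := by
    rw [Real.fourierInv_eq'] at h0
    exact_mod_cast (by simpa using h0.symm : m.real univ = 0 )
  rw [measureReal_eq_zero_iff, Measure.measure_univ_eq_zero] at h1
  exact hm h1

/-! ### Gaussian averages and energy -/

/-- Cauchy–Schwarz against the constant function `1`. -/
lemma sq_lintegral_le {α : Type*} [MeasurableSpace α] (m : Measure α) {f : α → ℝ≥0∞}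
    (hf : AEMeasurable f m) : (∫⁻ a, f a ∂m) ^ 2 ≤ m univ * ∫⁻ a, f a ^ 2 ∂m := by
  have h := ENNReal.lintegral_mul_le_Lp_mul_Lq m Real.HolderConjugate.two_two hf
    (aemeasurable_const (b := (1 : ℝ≥0∞)))
  simp only [Pi.mul_apply, mul_one, ENNReal.rpow_two, one_pow, lintegral_one] at h
  calc (∫⁻ a, f a ∂m) ^ 2
      ≤ ((∫⁻ a, f a ^ 2 ∂m) ^ (1 / 2 : ℝ) * m univ ^ (1 / 2 : ℝ)) ^ 2 := by gcongr
    _ = m univ * ∫⁻ a, f a ^ 2 ∂m := by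
      rw [mul_pow, ← ENNReal.rpow_two, ← ENNReal.rpow_two, ← ENNReal.rpow_mul, ← ENNReal.rpow_mul]
      norm_num
      rw [mul_comm]

lemma summable_rpow_mul_exp (s : ℝ) :
    Summable fun k : ℕ => ((k : ℝ) + 1) ^ s * Real.exp (-k) := by
  have h := (summable_nat_add_iff 1).2
    (Real.summable_pow_mul_exp_neg_nat_mul ⌈s⌉₊ (r := 1) one_pos)
  refine (h.mul_left (Real.exp 1)).of_nonneg_of_le (fun k => by positivity) fun k => ?_
  have h1 : ((k : ℝ) + 1) ^ s ≤ ((k : ℝ) + 1) ^ ⌈s⌉₊ := by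
    rw [← Real.rpow_natCast]
    exact Real.rpow_le_rpow_of_exponent_le (by simp) (Nat.le_ceil s)
  have h2 : Real.exp (-k) = Real.exp 1 * Real.exp (-1 * ((k + 1 : ℕ) : ℝ)) := by
    rw [← Real.exp_add]; push_cast; ring_nf
  rw [h2]
  push_cast
  calc _ ≤ ((k : ℝ) + 1) ^ ⌈s⌉₊ * (Real.exp 1 * Real.exp (-1 * ((k : ℝ) + 1))) := by gcongr
    _ = _ := by ring

/-- The Frostman condition for balls implies the one for Gaussian bumps at scale `ρ`, by summing
over the balls of radius `(k + 1) ρ`. -/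
lemma lintegral_gaussian_le {V : Type*} [NormedAddCommGroup V] [MeasurableSpace V] [BorelSpace V]
    {m : Measure V} {C s : ℝ} (hC : 0 < C)
    (h : ∀ p r, 0 < r → m (closedBall p r) ≤ ENNReal.ofReal (C * r ^ s)) :
    ∃ C' : ℝ, 0 < C' ∧ ∀ x ρ, 0 < ρ →
      ∫⁻ z, ENNReal.ofReal (Real.exp (-(‖z - x‖ / ρ) ^ 2)) ∂m ≤ ENNReal.ofReal (C' * ρ ^ s) := by
  have hsum := summable_rpow_mul_exp s
  refine ⟨C * ∑' k : ℕ, ((k : ℝ) + 1) ^ s * Real.exp (-k), mul_pos hC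
    (hsum.tsum_pos (fun k => by positivity) 0 (by positivity)), fun x ρ hρ => ?_⟩
  calc ∫⁻ z, ENNReal.ofReal (Real.exp (-(‖z - x‖ / ρ) ^ 2)) ∂m
      ≤ ∫⁻ z, ∑' k : ℕ, (closedBall x ((k + 1) * ρ)).indicator
          (fun _ => ENNReal.ofReal (Real.exp (-k))) z ∂m := by
        refine lintegral_mono fun z => ?_
        set u := ‖z - x‖ / ρ with hu
        have hu0 : 0 ≤ u := by positivity
        refine le_trans ?_ (ENNReal.le_tsum ⌊u⌋₊)
        rw [indicator_of_mem]
        · refine ENNReal.ofReal_le_ofReal (Real.exp_le_exp.2 (neg_le_neg ?_))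
          have h1 := Nat.floor_le hu0
          have h2 : (⌊u⌋₊ : ℝ) ≤ (⌊u⌋₊ : ℝ) ^ 2 := by
            exact_mod_cast Nat.le_self_pow two_ne_zero _
          calc (⌊u⌋₊ : ℝ) ≤ (⌊u⌋₊ : ℝ) ^ 2 := h2
            _ ≤ u ^ 2 := by gcongr
        · rw [mem_closedBall, dist_eq_norm, ← div_le_iff₀ hρ]
          exact (Nat.lt_floor_add_one u).le
    _ = ∑' k : ℕ, ENNReal.ofReal (Real.exp (-k)) * m (closedBall x ((k + 1) * ρ)) := by
        rw [lintegral_tsum fun k =>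
          (measurable_const.indicator isClosed_closedBall.measurableSet).aemeasurable]
        congr 1 with k
        rw [lintegral_indicator_const isClosed_closedBall.measurableSet]
    _ ≤ ∑' k : ℕ, ENNReal.ofReal (C * ρ ^ s * (((k : ℝ) + 1) ^ s * Real.exp (-k))) := by
        refine ENNReal.tsum_le_tsum fun k => ?_
        calc _ ≤ ENNReal.ofReal (Real.exp (-k)) * ENNReal.ofReal (C * (((k : ℝ) + 1) * ρ) ^ s) := by
              gcongr
              exact h x _ (by positivity)
          _ = _ := by
              rw [← ENNReal.ofReal_mul (by positivity), Real.mul_rpow (by positivity) hρ.le]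
              ring_nf
    _ = ENNReal.ofReal (C * ρ ^ s * ∑' k : ℕ, ((k : ℝ) + 1) ^ s * Real.exp (-k)) := by
        rw [← tsum_mul_left, ENNReal.ofReal_tsum_of_nonneg (fun k => by positivity)
          (hsum.mul_left _)]
    _ = _ := by ring_nf

lemma gaussian_fourier {n : ℕ} {b : ℝ} (hb : 0 < b) (w : EuclideanSpace ℝ (Fin n)) :
    ∫ v : EuclideanSpace ℝ (Fin n), Complex.exp (-b * ‖v‖ ^ 2 + Complex.I * ⟪w, v⟫) =
      (((Real.pi / b) ^ (n / 2 : ℝ) * Real.exp (-‖w‖ ^ 2 / (4 * b)) : ℝ) : ℂ) := by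
  rw [GaussianFourier.integral_cexp_neg_mul_sq_norm_add (by simpa using hb)]
  rw [finrank_euclideanSpace_fin, Complex.I_sq, Complex.ofReal_mul, Complex.ofReal_exp,
    Complex.ofReal_cpow (by positivity)]
  push_cast
  ring_nf

/-- Plancherel in the form needed for energies: the Gaussian average of `|μ̂|²` is a double integral
of a Gaussian kernel against `μ × μ`. -/
lemma integral_normSq_charFun_mul_gaussian {n : ℕ} (m : Measure (EuclideanSpace ℝ (Fin n)))
    [IsFiniteMeasure m] {b : ℝ} (hb : 0 < b) :
    ∫ y, ‖charFun m y‖ ^ 2 * Real.exp (-b * ‖y‖ ^ 2) =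
      ∫ p, (Real.pi / b) ^ (n / 2 : ℝ) * Real.exp (-‖p.1 - p.2‖ ^ 2 / (4 * b)) ∂(m.prod m) := by
  have h1 : ∀ y, ((‖charFun m y‖ ^ 2 * Real.exp (-b * ‖y‖ ^ 2) : ℝ) : ℂ) =
      ∫ p, Complex.exp (-b * ‖y‖ ^ 2 + Complex.I * ⟪p.1 - p.2, y⟫) ∂(m.prod m) := by
    intro y
    push_cast
    rw [← Complex.mul_conj', ← charFun_neg, charFun_apply, charFun_apply, ← integral_prod_mul,
      ← integral_mul_const]
    congr 1 with p
    rw [← Complex.exp_add, ← Complex.exp_add, inner_sub_left, inner_neg_right]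
    push_cast
    ring_nf
  apply Complex.ofReal_injective
  rw [← integral_complex_ofReal, ← integral_complex_ofReal]
  simp_rw [h1]
  rw [integral_integral_swap]
  · congr 1 with p
    exact gaussian_fourier hb _
  · have h2 := GaussianFourier.integrable_cexp_neg_mul_sq_norm_add (b := b) (by simpa using hb) 0
      (0 : EuclideanSpace ℝ (Fin n))
    have h3 := h2.norm.mul_prod (integrable_const (1 : ℝ) (μ := m.prod m))
    refine h3.mono' (by fun_prop) (Eventually.of_forall fun p => ?_)
    simp [Function.uncurry, Complex.norm_exp, ← Complex.ofReal_pow]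

/-- The energy estimate `∫ |μ̂(y)|² exp(-|y|²/R²) dy ≲ R ^ (n - s)` for a measure satisfying the
`s`-dimensional Frostman condition. -/
lemma lintegral_normSq_charFun_le {n : ℕ} (m : Measure (EuclideanSpace ℝ (Fin n)))
    [IsFiniteMeasure m] {C s : ℝ} (hC : 0 < C)
    (h : ∀ p r, 0 < r → m (closedBall p r) ≤ ENNReal.ofReal (C * r ^ s)) :
    ∃ C' : ℝ, 0 < C' ∧ ∀ R : ℝ, 0 < R →
      ∫⁻ y, ‖charFun m y‖ₑ ^ 2 * ENNReal.ofReal (Real.exp (-(‖y‖ / R) ^ 2)) ≤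
        ENNReal.ofReal (C' * R ^ (n - s)) := by
  obtain ⟨C₁, hC₁, hbd⟩ := lintegral_gaussian_le hC h
  refine ⟨Real.pi ^ (n / 2 : ℝ) * C₁ * 2 ^ s * (m.real univ + 1), by positivity, fun R hR => ?_⟩
  have hb : 0 < (R ^ 2)⁻¹ := by positivity
  have e1 : ∀ y, ‖charFun m y‖ₑ ^ 2 * ENNReal.ofReal (Real.exp (-(‖y‖ / R) ^ 2)) =
      ENNReal.ofReal (‖charFun m y‖ ^ 2 * Real.exp (-(R ^ 2)⁻¹ * ‖y‖ ^ 2)) := by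
    intro y
    rw [ENNReal.ofReal_mul (by positivity), ENNReal.ofReal_pow (by positivity), ofReal_norm]
    congr 4
    field_simp
  simp_rw [e1]
  rw [← ofReal_integral_eq_lintegral_ofReal, integral_normSq_charFun_mul_gaussian m hb,
    ofReal_integral_eq_lintegral_ofReal]
  · calc _ = ∫⁻ p, ENNReal.ofReal ((Real.pi / (R ^ 2)⁻¹) ^ (n / 2 : ℝ)) *
          ENNReal.ofReal (Real.exp (-(‖p.1 - p.2‖ / (2 / R)) ^ 2)) ∂(m.prod m) := by
          congr 1 with p
          rw [ENNReal.ofReal_mul (by positivity)]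
          congr 3
          field_simp
          ring
      _ = ENNReal.ofReal ((Real.pi / (R ^ 2)⁻¹) ^ (n / 2 : ℝ)) * ∫⁻ x, ∫⁻ z,
          ENNReal.ofReal (Real.exp (-(‖z - x‖ / (2 / R)) ^ 2)) ∂m ∂m := by
          rw [lintegral_const_mul _ (by fun_prop), lintegral_prod_symm _ (by fun_prop)]
      _ ≤ ENNReal.ofReal ((Real.pi / (R ^ 2)⁻¹) ^ (n / 2 : ℝ)) * ∫⁻ x,
          ENNReal.ofReal (C₁ * (2 / R) ^ s) ∂m := by
          gcongr with x
          exact hbd x _ (by positivity)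
      _ = ENNReal.ofReal ((Real.pi / (R ^ 2)⁻¹) ^ (n / 2 : ℝ) * (C₁ * (2 / R) ^ s) * m.real univ) := by
          rw [lintegral_const, ENNReal.ofReal_mul (q := m.real univ) (by positivity),
            ENNReal.ofReal_mul (p := (Real.pi / (R ^ 2)⁻¹) ^ (n / 2 : ℝ)) (by positivity),
            ofReal_measureReal, mul_assoc]
      _ ≤ _ := by
          refine ENNReal.ofReal_le_ofReal ?_
          have e2 : (Real.pi / (R ^ 2)⁻¹) ^ (n / 2 : ℝ) = Real.pi ^ (n / 2 : ℝ) * R ^ (n : ℝ) := by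
            rw [div_inv_eq_mul, Real.mul_rpow Real.pi_pos.le (by positivity), ← Real.rpow_natCast R 2,
              ← Real.rpow_mul hR.le]
            congr 2
            push_cast
            ring
          rw [e2, Real.div_rpow zero_le_two hR.le, Real.rpow_sub hR]
          have : 0 ≤ Real.pi ^ (n / 2 : ℝ) * C₁ * 2 ^ s * (R ^ (n : ℝ) / R ^ s) := by positivity
          calc _ = Real.pi ^ (n / 2 : ℝ) * C₁ * 2 ^ s * (R ^ (n : ℝ) / R ^ s) * m.real univ := by ring
            _ ≤ Real.pi ^ (n / 2 : ℝ) * C₁ * 2 ^ s * (R ^ (n : ℝ) / R ^ s) * (m.real univ + 1) := by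
              gcongr; linarith
            _ = _ := by ring
  · refine (integrable_const (μ := m.prod m) ((Real.pi / (R ^ 2)⁻¹) ^ (n / 2 : ℝ))).mono'
      (by fun_prop) (Eventually.of_forall fun p => ?_)
    rw [Real.norm_of_nonneg (by positivity)]
    refine mul_le_of_le_one_right (by positivity) (Real.exp_le_one_iff.2 ?_)
    have : 0 ≤ ‖p.1 - p.2‖ ^ 2 / (4 * (R ^ 2)⁻¹) := by positivity
    rw [neg_div]; linarith
  · exact Eventually.of_forall fun p => by positivity
  · have h2 := GaussianFourier.integrable_cexp_neg_mul_sq_norm_add (b := ((R ^ 2)⁻¹ : ℝ))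
      (by rwa [Complex.ofReal_re]) 0 (0 : EuclideanSpace ℝ (Fin n))
    refine (h2.norm.const_mul (m.real univ ^ 2)).mono' ?_ (Eventually.of_forall fun p => ?_)
    · exact ((measurable_charFun.norm.pow_const 2).mul (by fun_prop)).aestronglyMeasurable
    · rw [Real.norm_of_nonneg (by positivity)]
      gcongr
      · exact norm_charFun_le _
      · simp [Complex.norm_exp, ← Complex.ofReal_pow]
  · exact Eventually.of_forall fun p => by positivity

/-! ### Local averaging of the Fourier transform -/

/-- The measure `m` with density `(π/4)^(n/2) exp(-‖x‖²/16)`, the Fourier transform of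
`exp(-4‖y‖²)`. Thus its Fourier transform is `m̂` convolved with `exp(-4‖y‖²)`, and it has the same
null sets as `m`. -/
noncomputable def damp {n : ℕ} (m : Measure (EuclideanSpace ℝ (Fin n))) :
    Measure (EuclideanSpace ℝ (Fin n)) :=
  m.withDensity fun x =>
    ENNReal.ofReal ((Real.pi / 4) ^ (n / 2 : ℝ) * Real.exp (-‖x‖ ^ 2 / 16))

instance {n : ℕ} (m : Measure (EuclideanSpace ℝ (Fin n))) [IsFiniteMeasure m] :
    IsFiniteMeasure (damp m) := by
  refine isFiniteMeasure_withDensity_ofReal (Integrable.hasFiniteIntegral ?_)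
  refine (integrable_const (μ := m) ((Real.pi / 4) ^ (n / 2 : ℝ))).mono'
      (by fun_prop) (Eventually.of_forall fun p => ?_)
  rw [Real.norm_of_nonneg (by positivity)]
  refine mul_le_of_le_one_right (by positivity) (Real.exp_le_one_iff.2 ?_)
  have : 0 ≤ ‖p‖ ^ 2 / 16 := by positivity
  rw [neg_div]; linarith

lemma damp_eq_zero_iff {n : ℕ} (m : Measure (EuclideanSpace ℝ (Fin n)))
    (T : Set (EuclideanSpace ℝ (Fin n))) : damp m T = 0 ↔ m T = 0 := by
  rw [damp, withDensity_apply_eq_zero' (by fun_prop)]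
  congr! 2
  convert univ_inter T
  ext x
  simp only [mem_ofPred_eq, mem_univ, iff_true]
  rw [← pos_iff_ne_zero, ENNReal.ofReal_pos]
  positivity

lemma charFun_damp {n : ℕ} (m : Measure (EuclideanSpace ℝ (Fin n))) [IsFiniteMeasure m]
    (ξ : EuclideanSpace ℝ (Fin n)) :
    charFun (damp m) ξ = ∫ y, charFun m (y + ξ) * Complex.exp (-4 * ‖y‖ ^ 2) := by
  have h1 : ∀ y, charFun m (y + ξ) * Complex.exp (-4 * ‖y‖ ^ 2) =
      ∫ x, Complex.exp (-(4 : ℝ) * ‖y‖ ^ 2 + Complex.I * ⟪x, y⟫) *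
        Complex.exp (⟪x, ξ⟫ * Complex.I) ∂m := by
    intro y
    rw [charFun_apply, ← integral_mul_const]
    congr 1 with x
    rw [← Complex.exp_add, ← Complex.exp_add, inner_add_right]
    push_cast
    ring_nf
  simp_rw [h1]
  rw [integral_integral_swap]
  · simp_rw [integral_mul_const, gaussian_fourier (show (0 : ℝ) < 4 by norm_num)]
    rw [charFun_apply, damp, integral_withDensity_eq_integral_toReal_smul (by fun_prop) (by simp)]
    congr 1 with x
    rw [ENNReal.toReal_ofReal (by positivity), Complex.real_smul]
    norm_num
  · have h2 := GaussianFourier.integrable_cexp_neg_mul_sq_norm_add (b := 4) (by norm_num) 0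
      (0 : EuclideanSpace ℝ (Fin n))
    have h3 := h2.norm.mul_prod (integrable_const (1 : ℝ) (μ := m))
    refine h3.mono' (by fun_prop) (Eventually.of_forall fun p => ?_)
    simp [Function.uncurry, Complex.norm_exp, ← Complex.ofReal_pow]

lemma lintegral_gaussian_volume (n : ℕ) :
    ∫⁻ y : EuclideanSpace ℝ (Fin n), ENNReal.ofReal (Real.exp (-4 * ‖y‖ ^ 2)) ≠ ∞ := by
  have h2 := GaussianFourier.integrable_cexp_neg_mul_sq_norm_add (b := 4) (by norm_num) 0
      (0 : EuclideanSpace ℝ (Fin n))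
  have h3 : Integrable fun y : EuclideanSpace ℝ (Fin n) => Real.exp (-4 * ‖y‖ ^ 2) := by
    refine h2.norm.congr (Eventually.of_forall fun y => ?_)
    simp [Complex.norm_exp, ← Complex.ofReal_pow]
  exact h3.lintegral_lt_top.ne

/-- After damping, the Fourier transform at a point is controlled by the mean square of the original
one near that point. This makes its restriction to lines meaningful in terms of `L²` norms on the
whole space. -/
lemma enorm_charFun_damp_sq_le {n : ℕ} (m : Measure (EuclideanSpace ℝ (Fin n)))
    [IsFiniteMeasure m] (ξ : EuclideanSpace ℝ (Fin n)) :
    ‖charFun (damp m) ξ‖ₑ ^ 2 ≤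
      (∫⁻ y : EuclideanSpace ℝ (Fin n), ENNReal.ofReal (Real.exp (-4 * ‖y‖ ^ 2))) *
        ∫⁻ y, ‖charFun m y‖ₑ ^ 2 * ENNReal.ofReal (Real.exp (-4 * ‖y - ξ‖ ^ 2)) := by
  set g : EuclideanSpace ℝ (Fin n) → ℝ≥0∞ := fun y => ENNReal.ofReal (Real.exp (-4 * ‖y‖ ^ 2))
    with hg
  have hgm : Measurable g := by fun_prop
  have hφ : Measurable fun y => ‖charFun m y‖ₑ := measurable_charFun.enorm
  have hφ' : Measurable fun y => ‖charFun m (y + ξ)‖ₑ := hφ.comp (measurable_add_const ξ)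
  calc ‖charFun (damp m) ξ‖ₑ ^ 2
      ≤ (∫⁻ y, ‖charFun m (y + ξ) * Complex.exp (-4 * ‖y‖ ^ 2)‖ₑ) ^ 2 := by
        rw [charFun_damp]
        gcongr
        exact enorm_integral_le_lintegral_enorm _
    _ = (∫⁻ y, ‖charFun m (y + ξ)‖ₑ ∂(volume.withDensity g)) ^ 2 := by
        rw [lintegral_withDensity_eq_lintegral_mul _ hgm hφ']
        congr 2 with y
        rw [enorm_mul, Pi.mul_apply, mul_comm]
        congr 1
        rw [← ofReal_norm, hg]
        simp [Complex.norm_exp, ← Complex.ofReal_pow]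
    _ ≤ (volume.withDensity g) univ * ∫⁻ y, ‖charFun m (y + ξ)‖ₑ ^ 2 ∂(volume.withDensity g) :=
        sq_lintegral_le _ hφ'.aemeasurable
    _ = (∫⁻ y, g y) * ∫⁻ y, ‖charFun m (y + ξ)‖ₑ ^ 2 * g y := by
        rw [withDensity_apply _ MeasurableSet.univ, Measure.restrict_univ,
          lintegral_withDensity_eq_lintegral_mul _ hgm (hφ'.pow_const 2)]
        congr 2 with y
        rw [Pi.mul_apply, mul_comm]
    _ = _ := by
        congr 1
        rw [← lintegral_add_right_eq_self (fun y => ‖charFun m y‖ₑ ^ 2 *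
          ENNReal.ofReal (Real.exp (-4 * ‖y - ξ‖ ^ 2))) ξ]
        simp [hg]

lemma lintegral_gaussian_real (a : ℝ) :
    ∫⁻ r : ℝ, ENNReal.ofReal (Real.exp (-(r - a) ^ 2)) = ENNReal.ofReal (√Real.pi) := by
  rw [lintegral_sub_right_eq_self (fun r : ℝ => ENNReal.ofReal (Real.exp (-r ^ 2))) a,
    ← ofReal_integral_eq_lintegral_ofReal]
  · have := integral_gaussian 1
    simp only [neg_mul, one_mul, div_one] at this
    rw [this]
  · simpa using integrable_exp_neg_mul_sq one_pos
  · exact Eventually.of_forall fun p => by positivity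

/-- For `r ∈ [R, 2R]`, closeness of `y` to `r e` forces `|y| ≲ R`, `|y|` close to `r`, and `e`
within `≈ 1/r` of `y/r`. The factor `4` in the exponent pays for these three constraints, with total
cost `2 + 1 + 1`. -/
lemma gaussian_split {n : ℕ} {R r : ℝ} (hR : 1 ≤ R) (hr : r ∈ Icc R (2 * R))
    {e : EuclideanSpace ℝ (Fin n)} (he : ‖e‖ = 1) (y : EuclideanSpace ℝ (Fin n)) :
    Real.exp (-4 * ‖y - r • e‖ ^ 2) ≤ Real.exp 8 * Real.exp (-(‖y‖ / R) ^ 2) *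
      Real.exp (-(r - ‖y‖) ^ 2) * Real.exp (-(‖e - r⁻¹ • y‖ / r⁻¹) ^ 2) := by
  have hr0 : 0 < r := by linarith [hr.1]
  set d := ‖y - r • e‖ with hd
  have hre : ‖r • e‖ = r := by rw [norm_smul, he, mul_one, Real.norm_of_nonneg hr0.le]
  have h1 : ‖e - r⁻¹ • y‖ / r⁻¹ = d := by
    have : r • (e - r⁻¹ • y) = r • e - y := by rw [smul_sub, smul_inv_smul₀ hr0.ne']
    rw [div_inv_eq_mul, mul_comm, hd, norm_sub_rev y, ← this, norm_smul,
      Real.norm_of_nonneg hr0.le]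
  have h2 : |r - ‖y‖| ≤ d := by
    have := abs_norm_sub_norm_le (r • e) y
    rwa [hre, norm_sub_rev] at this
  have h3 : (r - ‖y‖) ^ 2 ≤ d ^ 2 := by rw [← sq_abs]; gcongr
  have h4 : (‖y‖ / R) ^ 2 ≤ 8 + 2 * d ^ 2 := by
    have h5 : ‖y‖ ≤ 2 * R + d := by
      have := (abs_le.1 h2).1
      linarith [hr.2]
    have h6 : ‖y‖ / R ≤ 2 + d := by
      rw [div_le_iff₀ (by linarith)]
      nlinarith [norm_nonneg (y - r • e)]
    have h7 : 0 ≤ ‖y‖ / R := by positivity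
    nlinarith [sq_nonneg (2 - d)]
  rw [h1, ← Real.exp_add, ← Real.exp_add, ← Real.exp_add]
  apply Real.exp_le_exp.2
  linarith

/-! ### Decay along lines, averaged over directions -/

/-- Averaging over `r ∈ [R, 2R]` and over `e` with respect to `ν`. For a given `y` only the `e` in a
ball of radius `≈ 1/R`, of `ν`-measure `≲ R ^ (-t)`, and the `r` in an interval of length `≈ 1`
contribute. -/
lemma lintegral_annulus_le {n : ℕ} (ν : Measure (EuclideanSpace ℝ (Fin n))) [IsFiniteMeasure ν]
    {C t : ℝ} (hC : 0 < C)
    (h : ∀ p r, 0 < r → ν (closedBall p r) ≤ ENNReal.ofReal (C * r ^ t)) (ht : 0 < t)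
    (hν : ∀ᵐ e ∂ν, ‖e‖ = 1) :
    ∃ C' : ℝ, 0 < C' ∧ ∀ R : ℝ, 1 ≤ R → ∀ f : EuclideanSpace ℝ (Fin n) → ℝ≥0∞, Measurable f →
      ∫⁻ r in Icc R (2 * R), ∫⁻ e, (∫⁻ y,
          f y * ENNReal.ofReal (Real.exp (-4 * ‖y - r • e‖ ^ 2))) ∂ν ≤
        ENNReal.ofReal (C' * R ^ (-t)) * ∫⁻ y, f y * ENNReal.ofReal (Real.exp (-(‖y‖ / R) ^ 2)) := by
  obtain ⟨C₁, hC₁, hbd⟩ := lintegral_gaussian_le hC h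
  refine ⟨Real.exp 8 * C₁ * √Real.pi, by positivity, fun R hR f hf => ?_⟩
  have hR0 : 0 < R := by linarith
  set A : EuclideanSpace ℝ (Fin n) → ℝ≥0∞ := fun y =>
    f y * ENNReal.ofReal (Real.exp 8 * Real.exp (-(‖y‖ / R) ^ 2)) with hA
  have hAm : Measurable A := hf.mul (by fun_prop)
  let B : ℝ → EuclideanSpace ℝ (Fin n) → ℝ≥0∞ := fun r y =>
    ENNReal.ofReal (Real.exp (-(r - ‖y‖) ^ 2))
  calc ∫⁻ r in Icc R (2 * R), ∫⁻ e, (∫⁻ y,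
          f y * ENNReal.ofReal (Real.exp (-4 * ‖y - r • e‖ ^ 2))) ∂ν
      ≤ ∫⁻ r in Icc R (2 * R), ∫⁻ e, (∫⁻ y,
          A y * B r y * ENNReal.ofReal (Real.exp (-(‖e - r⁻¹ • y‖ / r⁻¹) ^ 2))) ∂ν := by
        refine setLIntegral_mono' measurableSet_Icc fun r hr => lintegral_mono_ae ?_
        filter_upwards [hν] with e he
        refine lintegral_mono fun y => ?_
        simp only [hA, B]
        rw [mul_assoc, mul_assoc, ← ENNReal.ofReal_mul (by positivity),
          ← ENNReal.ofReal_mul (by positivity), ← mul_assoc]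
        gcongr
        exact gaussian_split hR hr he y
    _ = ∫⁻ r in Icc R (2 * R), ∫⁻ y, ∫⁻ e,
          A y * B r y * ENNReal.ofReal (Real.exp (-(‖e - r⁻¹ • y‖ / r⁻¹) ^ 2)) ∂ν := by
        congr 1 with r
        rw [lintegral_lintegral_swap]
        refine Measurable.aemeasurable (((hAm.comp measurable_snd).mul ?_).mul ?_) <;> fun_prop
    _ ≤ ∫⁻ r in Icc R (2 * R), ∫⁻ y, A y * B r y * ENNReal.ofReal (C₁ * R ^ (-t)) := by
        refine setLIntegral_mono' measurableSet_Icc fun r hr => lintegral_mono fun y => ?_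
        have hr0 : 0 < r := hR0.trans_le hr.1
        rw [lintegral_const_mul _ (by fun_prop)]
        gcongr
        refine (hbd _ _ (by positivity)).trans (ENNReal.ofReal_le_ofReal ?_)
        rw [Real.inv_rpow hr0.le, ← Real.rpow_neg hr0.le]
        gcongr ?_ * ?_
        exact Real.rpow_le_rpow_of_nonpos hR0 hr.1 (by linarith)
    _ ≤ ∫⁻ r, ∫⁻ y, A y * B r y * ENNReal.ofReal (C₁ * R ^ (-t)) := setLIntegral_le_lintegral _ _
    _ = ∫⁻ y, ∫⁻ r, A y * ENNReal.ofReal (C₁ * R ^ (-t)) * B r y := by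
        rw [lintegral_lintegral_swap]
        · simp only [mul_right_comm]
        · refine Measurable.aemeasurable (((hAm.comp measurable_snd).mul ?_).mul
            measurable_const)
          simp only [B]
          fun_prop
    _ = ∫⁻ y, A y * (ENNReal.ofReal (C₁ * R ^ (-t)) * ENNReal.ofReal (√Real.pi)) := by
        congr 1 with y
        rw [lintegral_const_mul _ (by simp only [B]; fun_prop), lintegral_gaussian_real, mul_assoc]
    _ = _ := by
        rw [← lintegral_const_mul' _ _ ENNReal.ofReal_ne_top]
        congr 1 with y
        simp only [hA]
        rw [← ENNReal.ofReal_mul (by positivity), mul_assoc, ← ENNReal.ofReal_mul (by positivity),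
          mul_left_comm _ (f y), ← ENNReal.ofReal_mul (by positivity)]
        ring_nf

/-- The `L¹` bound on a dyadic range of `r`. Cauchy–Schwarz over `[R, 2R] × ν` costs a factor `R`, and
the `L²` norm is controlled by `lintegral_annulus_le` and the energy estimate. -/
lemma lintegral_enorm_charFun_dyadic_le {n : ℕ} {μ ν : Measure (EuclideanSpace ℝ (Fin n))}
    [IsFiniteMeasure μ] [IsFiniteMeasure ν] {C D s t : ℝ} (hC : 0 < C) (hD : 0 < D) (ht : 0 < t)
    (hμ : ∀ p r, 0 < r → μ (closedBall p r) ≤ ENNReal.ofReal (C * r ^ s))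
    (hνt : ∀ p r, 0 < r → ν (closedBall p r) ≤ ENNReal.ofReal (D * r ^ t))
    (hν : ∀ᵐ e ∂ν, ‖e‖ = 1) :
    ∃ M : ℝ, 0 < M ∧ ∀ R : ℝ, 1 ≤ R →
      (∫⁻ r in Icc R (2 * R), ∫⁻ e, ‖charFun (damp μ) (r • e)‖ₑ ∂ν) ^ 2 ≤
        ENNReal.ofReal (M * R ^ (n + 1 - s - t)) := by
  obtain ⟨C₁, hC₁, h1⟩ := lintegral_normSq_charFun_le μ hC hμ
  obtain ⟨C₂, hC₂, h2⟩ := lintegral_annulus_le ν hD hνt ht hν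
  set G := ∫⁻ y : EuclideanSpace ℝ (Fin n), ENNReal.ofReal (Real.exp (-4 * ‖y‖ ^ 2)) with hG
  have hGtop : G ≠ ∞ := lintegral_gaussian_volume n
  refine ⟨(ν.real univ + 1) * (G.toReal + 1) * C₂ * C₁, by positivity, fun R hR => ?_⟩
  have hR0 : 0 < R := by linarith
  have hφ : Measurable fun p : ℝ × EuclideanSpace ℝ (Fin n) =>
      ‖charFun (damp μ) (p.1 • p.2)‖ₑ :=
    (measurable_charFun.comp (by fun_prop : Measurable fun p : ℝ × EuclideanSpace ℝ (Fin n) =>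
      p.1 • p.2)).enorm
  let f : EuclideanSpace ℝ (Fin n) → ℝ≥0∞ := fun y => ‖charFun μ y‖ₑ ^ 2
  have hf : Measurable f := measurable_charFun.enorm.pow_const 2
  set m := (volume.restrict (Icc R (2 * R))).prod ν with hm
  have hmu : m univ = ENNReal.ofReal R * ν univ := by
    rw [hm, ← univ_prod_univ, Measure.prod_prod, Measure.restrict_apply MeasurableSet.univ,
      univ_inter, Real.volume_Icc]
    ring_nf
  calc (∫⁻ r in Icc R (2 * R), ∫⁻ e, ‖charFun (damp μ) (r • e)‖ₑ ∂ν) ^ 2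
      = (∫⁻ p, ‖charFun (damp μ) (p.1 • p.2)‖ₑ ∂m) ^ 2 := by
        rw [lintegral_prod _ hφ.aemeasurable]
    _ ≤ m univ * ∫⁻ p, ‖charFun (damp μ) (p.1 • p.2)‖ₑ ^ 2 ∂m := sq_lintegral_le _ hφ.aemeasurable
    _ = m univ * ∫⁻ r in Icc R (2 * R), ∫⁻ e, ‖charFun (damp μ) (r • e)‖ₑ ^ 2 ∂ν := by
        rw [lintegral_prod _ (hφ.pow_const 2).aemeasurable]
    _ ≤ m univ * ∫⁻ r in Icc R (2 * R), ∫⁻ e, (G * ∫⁻ y,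
          f y * ENNReal.ofReal (Real.exp (-4 * ‖y - r • e‖ ^ 2))) ∂ν := by
        gcongr with r e
        exact enorm_charFun_damp_sq_le μ _
    _ = m univ * (G * ∫⁻ r in Icc R (2 * R), ∫⁻ e, (∫⁻ y,
          f y * ENNReal.ofReal (Real.exp (-4 * ‖y - r • e‖ ^ 2))) ∂ν) := by
        simp_rw [lintegral_const_mul' _ _ hGtop]
    _ ≤ m univ * (G * (ENNReal.ofReal (C₂ * R ^ (-t)) * ENNReal.ofReal (C₁ * R ^ (n - s)))) := by
        gcongr
        exact (h2 R hR f hf).trans (by gcongr; exact h1 R hR0)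
    _ = ENNReal.ofReal (ν.real univ * G.toReal * C₂ * C₁ * (R * R ^ (-t) * R ^ (n - s))) := by
        rw [hmu, ← ofReal_measureReal (μ := ν), ← ENNReal.ofReal_mul (by positivity),
          ← ENNReal.ofReal_toReal hGtop, ← ENNReal.ofReal_mul (by positivity),
          ← ENNReal.ofReal_mul (by positivity), ← ENNReal.ofReal_mul (by positivity),
          ENNReal.toReal_ofReal (by positivity)]
        ring_nf
    _ ≤ _ := by
        refine ENNReal.ofReal_le_ofReal ?_
        have : R * R ^ (-t) * R ^ (n - s) = R ^ (n + 1 - s - t) := by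
          conv_lhs => rw [← Real.rpow_one R, ← Real.rpow_mul hR0.le, one_mul]
          rw [← Real.rpow_mul hR0.le, one_mul, ← Real.rpow_add hR0, ← Real.rpow_add hR0]
          ring_nf
        rw [this]
        gcongr <;> linarith

/-- When `s + t > n + 1` the dyadic bounds form a convergent geometric series. -/
lemma lintegral_enorm_charFun_ne_top {n : ℕ} {μ ν : Measure (EuclideanSpace ℝ (Fin n))}
    [IsFiniteMeasure μ] [IsFiniteMeasure ν] {C D s t : ℝ} (hC : 0 < C) (hD : 0 < D) (ht : 0 < t)
    (hμ : ∀ p r, 0 < r → μ (closedBall p r) ≤ ENNReal.ofReal (C * r ^ s))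
    (hνt : ∀ p r, 0 < r → ν (closedBall p r) ≤ ENNReal.ofReal (D * r ^ t))
    (hν : ∀ᵐ e ∂ν, ‖e‖ = 1) (hst : n + 1 < s + t) :
    ∫⁻ r in Ici (1 : ℝ), ∫⁻ e, ‖charFun (damp μ) (r • e)‖ₑ ∂ν ≠ ∞ := by
  obtain ⟨M, hM, hbd⟩ := lintegral_enorm_charFun_dyadic_le hC hD ht hμ hνt hν
  set δ : ℝ := (s + t - n - 1) / 2 with hδ
  have hδ0 : 0 < δ := by simp only [hδ]; linarith
  set q : ℝ := 2 ^ (-δ) with hq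
  have hq0 : 0 < q := by positivity
  have hq1 : q < 1 := Real.rpow_lt_one_of_one_lt_of_neg one_lt_two (by linarith)
  have hcov : Ici (1 : ℝ) ⊆ ⋃ j : ℕ, Icc (2 ^ j) (2 * 2 ^ j) := by
    intro r hr
    obtain ⟨j, hj1, hj2⟩ := exists_nat_pow_near (mem_Ici.1 hr) one_lt_two
    exact mem_iUnion.2 ⟨j, hj1, by rw [pow_succ'] at hj2; exact hj2.le⟩
  have hterm : ∀ j : ℕ, ∫⁻ r in Icc ((2 : ℝ) ^ j) (2 * 2 ^ j),
      ∫⁻ e, ‖charFun (damp μ) (r • e)‖ₑ ∂ν ≤ ENNReal.ofReal (√M * q ^ j) := by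
    intro j
    have h1 := hbd (2 ^ j) (one_le_pow₀ one_le_two)
    have h2 : M * ((2 : ℝ) ^ j) ^ (n + 1 - s - t : ℝ) = (√M * q ^ j) ^ 2 := by
      rw [mul_pow, Real.sq_sqrt hM.le, hq, ← pow_mul, ← Real.rpow_natCast 2 j, ← Real.rpow_mul zero_le_two,
        ← Real.rpow_natCast, ← Real.rpow_mul zero_le_two]
      congr 2
      simp only [hδ]
      push_cast
      ring
    rw [h2, ENNReal.ofReal_pow (by positivity)] at h1
    exact (ENNReal.pow_le_pow_left_iff two_ne_zero).1 h1
  refine ne_top_of_le_ne_top ?_ (calc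
    ∫⁻ r in Ici (1 : ℝ), ∫⁻ e, ‖charFun (damp μ) (r • e)‖ₑ ∂ν
      ≤ ∫⁻ r in ⋃ j : ℕ, Icc ((2 : ℝ) ^ j) (2 * 2 ^ j), ∫⁻ e, ‖charFun (damp μ) (r • e)‖ₑ ∂ν :=
        lintegral_mono_set hcov
    _ ≤ ∑' j : ℕ, ∫⁻ r in Icc ((2 : ℝ) ^ j) (2 * 2 ^ j),
          ∫⁻ e, ‖charFun (damp μ) (r • e)‖ₑ ∂ν := lintegral_iUnion_le _ _
    _ ≤ ∑' j : ℕ, ENNReal.ofReal (√M * q ^ j) := ENNReal.tsum_le_tsum hterm)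
  exact ((summable_geometric_of_lt_one hq0.le hq1).mul_left _).tsum_ofReal_ne_top

lemma integrable_of_hermitian {φ : ℝ → ℂ} (hc : Continuous φ)
    (hneg : ∀ r, ‖φ (-r)‖ = ‖φ r‖) (h : IntegrableOn φ (Ici 1)) : Integrable φ := by
  have h1 : IntegrableOn φ (Iic (-1)) := by
    have h3 : IntegrableOn (fun r => φ (-r)) (Iic (-1)) := IntegrableOn.comp_neg_Iic (by simpa using h)
    exact Integrable.mono h3 hc.aestronglyMeasurable (Eventually.of_forall fun r => (hneg r).ge)
  have h2 : IntegrableOn φ (Icc (-1) 1) := hc.integrableOn_Icc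
  have := (h1.union h2).union h
  rwa [Iic_union_Icc_eq_Iic (by norm_num), Iic_union_Ici, integrableOn_univ] at this

/-- If `μ` is carried by the compact set `K`, `ν` by a set `F` of directions, and their Frostman
exponents satisfy `s + t > n + 1`, then some direction in `F` has a projection of `K` with nonempty
interior. For `ν`-almost every `e` the projection of `damp μ`, whose Fourier transform at `r` is
`charFun (damp μ) (r • e)`, has integrable Fourier transform. -/
theorem exists_direction {n : ℕ} {μ ν : Measure (EuclideanSpace ℝ (Fin n))}
    [IsFiniteMeasure μ] [IsFiniteMeasure ν] {C D s t : ℝ} (hC : 0 < C) (hD : 0 < D) (ht : 0 < t)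
    (hμ : ∀ p r, 0 < r → μ (closedBall p r) ≤ ENNReal.ofReal (C * r ^ s))
    (hνt : ∀ p r, 0 < r → ν (closedBall p r) ≤ ENNReal.ofReal (D * r ^ t))
    (hst : n + 1 < s + t) (hμ0 : μ univ ≠ 0) (hν0 : ν univ ≠ 0)
    {K F : Set (EuclideanSpace ℝ (Fin n))} (hK : IsCompact K) (hμK : μ Kᶜ = 0)
    (hF : F ⊆ sphere 0 1) (hνF : ν Fᶜ = 0) :
    ∃ e ∈ F, (interior ((fun x => ⟪e, x⟫) '' K)).Nonempty := by
  have hFae : ∀ᵐ e ∂ν, e ∈ F := by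
    filter_upwards [measure_eq_zero_iff_ae_notMem.1 hνF] with e he using not_not.1 he
  have hν : ∀ᵐ e ∂ν, ‖e‖ = 1 := by
    filter_upwards [hFae] with e he using by simpa using hF he
  have hφ : Measurable fun p : EuclideanSpace ℝ (Fin n) × ℝ =>
      ‖charFun (damp μ) (p.2 • p.1)‖ₑ :=
    (measurable_charFun.comp (by fun_prop : Measurable fun p : EuclideanSpace ℝ (Fin n) × ℝ =>
      p.2 • p.1)).enorm
  have htop := lintegral_enorm_charFun_ne_top hC hD ht hμ hνt hν hst
  rw [lintegral_lintegral_swap (f := fun (r : ℝ) e => ‖charFun (damp μ) (r • e)‖ₑ)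
    (hφ.comp measurable_swap).aemeasurable] at htop
  have hae := ae_lt_top' (hφ.lintegral_prod_right' (ν := volume.restrict (Ici 1))).aemeasurable htop
  have : (ae ν).NeBot := ae_neBot.2 fun h => hν0 (by simp [h])
  obtain ⟨e, he, heF⟩ := (hae.and hFae).exists
  refine ⟨e, heF, ?_⟩
  have hem : Measurable fun x : EuclideanSpace ℝ (Fin n) => ⟪e, x⟫ := by fun_prop
  set m := (damp μ).map (fun x => ⟪e, x⟫) with hm
  have hchar : ∀ r, charFun m r = charFun (damp μ) (r • e) := by
    intro r
    rw [charFun_apply_real, charFun_apply, hm, integral_map hem.aemeasurable (by fun_prop)]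
    congr 1 with x
    rw [inner_smul_right, real_inner_comm]
    push_cast
    rfl
  have hcomp : IsCompact ((fun x => ⟪e, x⟫) '' K) := hK.image (by fun_prop)
  refine interior_nonempty_of_integrable_charFun m ?_ hcomp.isClosed ?_ ?_
  · intro h0
    have h1 : m univ = 0 := by rw [h0]; simp
    rw [hm, Measure.map_apply hem MeasurableSet.univ, preimage_univ, damp_eq_zero_iff] at h1
    exact hμ0 h1
  · rw [hm, Measure.map_apply hem hcomp.isClosed.measurableSet.compl, damp_eq_zero_iff]
    exact measure_mono_null (fun x hx hxK => hx (mem_image_of_mem _ hxK)) hμK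
  · refine integrable_of_hermitian continuous_charFun (fun r => ?_) ⟨?_, ?_⟩
    · rw [charFun_neg, RCLike.norm_conj]
    · exact continuous_charFun.aestronglyMeasurable
    · rw [hasFiniteIntegral_iff_enorm]
      simpa only [hchar] using he

/-! ### The exceptional set -/

lemma isClosed_setOf_subset_image {n : ℕ} {K : Set (EuclideanSpace ℝ (Fin n))} (hK : IsCompact K)
    (T : Set ℝ) : IsClosed {e | T ⊆ (fun x => ⟪e, x⟫) '' K} := by
  have : {e | T ⊆ (fun x => ⟪e, x⟫) '' K} = ⋂ c ∈ T, {e | c ∈ (fun x => ⟪e, x⟫) '' K} := by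
    ext e
    simp [subset_def]
  rw [this]
  refine isClosed_biInter fun c _ => ?_
  have : CompactSpace K := isCompact_iff_compactSpace.1 hK
  convert isClosedMap_snd_of_compactSpace (X := K) {p : K × EuclideanSpace ℝ (Fin n) |
    ⟪p.2, (p.1 : EuclideanSpace ℝ (Fin n))⟫ = c} (isClosed_eq (by fun_prop) continuous_const)
  ext e
  simp

/-- For compact `K` the set of exceptional directions is Borel, so that Frostman's lemma applies to
it: its complement is the union, over rational intervals, of the closed sets of directions whose
projection contains the interval. -/
lemma measurableSet_interior_image_eq_empty {n : ℕ} {K : Set (EuclideanSpace ℝ (Fin n))}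
    (hK : IsCompact K) :
    MeasurableSet {e | interior ((fun x => ⟪e, x⟫) '' K) = ∅} := by
  have : {e | interior ((fun x => ⟪e, x⟫) '' K) = ∅}ᶜ =
      ⋃ p ∈ {p : ℚ × ℚ | p.1 < p.2}, {e | Icc (p.1 : ℝ) p.2 ⊆ (fun x => ⟪e, x⟫) '' K} := by
    ext e
    rw [mem_compl_iff, mem_ofPred_eq, ← ne_eq, ← nonempty_iff_ne_empty, mem_iUnion₂]
    constructor
    · rintro ⟨c, hc⟩
      obtain ⟨ε, hε, hball⟩ := Metric.isOpen_iff.1 isOpen_interior c hc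
      obtain ⟨a, ha1, ha2⟩ := exists_rat_btwn (show c - ε < c by linarith)
      obtain ⟨b, hb1, hb2⟩ := exists_rat_btwn (show c < c + ε by linarith)
      refine ⟨(a, b), by exact_mod_cast ha2.trans hb1, fun y hy => interior_subset (hball ?_)⟩
      rw [Real.ball_eq_Ioo]
      exact ⟨ha1.trans_le hy.1, hy.2.trans_lt hb2⟩
    · rintro ⟨⟨a, b⟩, hab, hsub⟩
      have hab' : (a : ℝ) < b := by exact_mod_cast hab
      exact (nonempty_Ioo.2 hab').mono
        (interior_maximal (Ioo_subset_Icc_self.trans hsub) isOpen_Ioo)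
  rw [← MeasurableSet.compl_iff, this]
  exact MeasurableSet.biUnion (to_countable _) fun p _ =>
    (isClosed_setOf_subset_image hK _).measurableSet

end PeresSchlag

/-- Peres–Schlag exceptional set estimate: if `A ⊆ ℝⁿ` is a Borel set with
`dim A > 2`, then the set of unit vectors `e ∈ S^{n-1}` for which the projection
`P_e(A)` has empty interior has Hausdorff dimension at most `n + 1 - dim A`. -/
theorem peres_schlag_exceptional_projections (n : ℕ) (hn : 2 ≤ n)
    (A : Set (EuclideanSpace ℝ (Fin n))) (hA : MeasurableSet A)
    (hdim : 2 < dimH A) :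
    dimH {e : EuclideanSpace ℝ (Fin n) | e ∈ sphere 0 1 ∧
        interior ((fun x => ⟪e, x⟫) '' A) = ∅}
      ≤ (n : ℝ≥0∞) + 1 - dimH A := by
  by_contra hlt
  rw [not_le] at hlt
  have hn0 : 0 < n := by omega
  have hAtop : dimH A ≠ ∞ := Real.dimH_ne_top A
  -- if the exceptional set were too large there would be exponents `s < dim A`, `t < dim E`
  -- with `s + t > n + 1`
  obtain ⟨t, ht1, ht2⟩ := ENNReal.lt_iff_exists_nnreal_btwn.1 hlt
  have hnt : (n : ℝ≥0∞) + 1 < dimH A + t := by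
    rw [add_comm (dimH A)]
    exact lt_of_le_of_lt le_tsub_add (ENNReal.add_lt_add_right hAtop ht1)
  have hsub : max ((n : ℝ≥0∞) + 1 - t) 2 < dimH A := by
    refine max_lt ?_ hdim
    rcases le_total (t : ℝ≥0∞) (n + 1) with h | h
    · exact (ENNReal.sub_lt_iff_lt_right ENNReal.coe_ne_top h).2 hnt
    · rw [tsub_eq_zero_of_le h]
      exact zero_lt_two.trans hdim
  obtain ⟨s, hs1, hs2⟩ := ENNReal.lt_iff_exists_nnreal_btwn.1 hsub
  have hs0 : 0 < (s : ℝ) := by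
    have h2 : (2 : ℝ≥0∞) < s := (le_max_right _ _).trans_lt hs1
    have : (2 : NNReal) < s := by exact_mod_cast h2
    exact_mod_cast zero_lt_two.trans this
  have ht0 : 0 < (t : ℝ) := by
    exact_mod_cast (zero_le.trans_lt ht1 : (0 : ℝ≥0∞) < t)
  have hst : (n : ℝ) + 1 < s + t := by
    have h1 : (n : ℝ≥0∞) + 1 < s + t := lt_of_le_of_lt le_tsub_add
      (ENNReal.add_lt_add_right ENNReal.coe_ne_top ((le_max_left _ _).trans_lt hs1))
    exact_mod_cast h1
  obtain ⟨K, hKA, hK, μ, _, hμ0, hμK, C, hC, hμ⟩ := PeresSchlag.frostman hn0 hs0 hA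
    (by rw [hausdorffMeasure_of_lt_dimH hs2]; exact ENNReal.top_ne_zero)
  -- the exceptional set of `A` is contained in that of `K`, which is Borel
  have hE : MeasurableSet (sphere (0 : EuclideanSpace ℝ (Fin n)) 1 ∩
      {e | interior ((fun x => ⟪e, x⟫) '' K) = ∅}) :=
    isClosed_sphere.measurableSet.inter (PeresSchlag.measurableSet_interior_image_eq_empty hK)
  have ht3 : (t : ℝ≥0∞) < dimH (sphere (0 : EuclideanSpace ℝ (Fin n)) 1 ∩
      {e | interior ((fun x => ⟪e, x⟫) '' K) = ∅}) := by
    refine ht2.trans_le (dimH_mono fun e he => ⟨he.1, ?_⟩)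
    exact Set.subset_eq_empty (interior_mono (Set.image_mono hKA)) he.2
  obtain ⟨F, hFE, -, ν, _, hν0, hνF, D, hD, hν⟩ := PeresSchlag.frostman hn0 ht0 hE
    (by rw [hausdorffMeasure_of_lt_dimH ht3]; exact ENNReal.top_ne_zero)
  obtain ⟨e, heF, hne⟩ := PeresSchlag.exists_direction hC hD ht0 hμ hν hst hμ0 hν0 hK hμK
    (fun e he => (hFE he).1) hνF
  exact hne.ne_empty (hFE heF).2
end
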